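/- There exist absolute constants c₀, c > 0 with the following property. Let a ≥ b ≥ 0, A ≥ B ≥ 1, 0 < p < ∞ be real numbers with 2b ≥ pB + p/2 and 2a+2 < pA + p/2, and let n be an integer with n ≥ c₀ · A · ((2a+2)/(p(A+1/2)−2a−2))^{1/p}. Then ∫_{−1}^1 |p_n^{(A,B)}(x)/p_n^{(A,B)}(1)|^p (1−x)^a (1+x)^b dx ≤ c · (2^{a+b}/(2a+2)) · { A^{1/6} / (2^{(A+B−1)/2} p_n^{(A,B)}(1)) }^{(2a+2)/(A+1/2)} · { (2a+2)/(p(A+1/2)−2a−2) }^{(2a+2)/(p(A+1/2))}. -/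

import Mathlib

noncomputable section

open MeasureTheory Real Set
open scoped RealInnerProductSpace

/-- Value at `x` of the orthonormalized Jacobi polynomial `p_n^{(α,β)}`. -/
def jacobiP (α β : ℝ) (n : ℕ) (x : ℝ) : ℝ :=
  Real.sqrt ((2 * (n : ℝ) + α + β + 1) / 2 ^ (α + β + 1) *
      (Real.Gamma ((n : ℝ) + α + β + 1) * (n.factorial : ℝ) /
        (Real.Gamma ((n : ℝ) + α + 1) * Real.Gamma ((n : ℝ) + β + 1)))) *
    (Real.Gamma (α + n + 1) / ((n.factorial : ℝ) * Real.Gamma (α + β + n + 1))) *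
    ∑ m ∈ Finset.range (n + 1),
      (n.choose m : ℝ) * (Real.Gamma (α + β + n + m + 1) / Real.Gamma (α + m + 1)) *
        ((x - 1) / 2) ^ m

/-- The kernel `K_n^{(α,β)}(x) = Σ_{ℓ<n} p_ℓ^{(α,β)}(1) p_ℓ^{(α,β)}(x)`. -/
def jacobiK (α β : ℝ) (n : ℕ) (x : ℝ) : ℝ :=
  ∑ ℓ ∈ Finset.range n, jacobiP α β ℓ 1 * jacobiP α β ℓ x

/-- The unit sphere `S^d ⊂ ℝ^{d+1}`. -/
abbrev Sph (d : ℕ) := Metric.sphere (0 : EuclideanSpace ℝ (Fin (d + 1))) 1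

/-- The rotation invariant Riemannian volume probability measure `μ_d^*` on `S^d`. -/
def sphMeasure (d : ℕ) : Measure (Sph d) :=
  ((volume : Measure (EuclideanSpace ℝ (Fin (d + 1)))).toSphere Set.univ)⁻¹ •
    (volume : Measure (EuclideanSpace ℝ (Fin (d + 1)))).toSphere

/-- `f : S^d → ℝ` is the restriction to the sphere of an algebraic polynomial in `d+1`
variables of total degree `< n`, i.e. `f ∈ Π_n^d`. -/
def IsSphPoly (d : ℕ) (n : ℝ) (f : Sph d → ℝ) : Prop :=
  ∃ p : MvPolynomial (Fin (d + 1)) ℝ, (p.totalDegree : ℝ) < n ∧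
    ∀ y : Sph d, f y = MvPolynomial.eval (fun i => (y : EuclideanSpace ℝ (Fin (d + 1))) i) p

/-- Integral of `f` with respect to a signed measure (via the Jordan decomposition). -/
def sInt {X : Type*} [MeasurableSpace X] (ν : SignedMeasure X) (f : X → ℝ) : ℝ :=
  (∫ x, f x ∂ν.toJordanDecomposition.posPart) - ∫ x, f x ∂ν.toJordanDecomposition.negPart

/-- Integral of `f` over a set `s` with respect to a signed measure. -/
def sIntOn {X : Type*} [MeasurableSpace X] (ν : SignedMeasure X) (s : Set X) (f : X → ℝ) : ℝ :=
  (∫ x in s, f x ∂ν.toJordanDecomposition.posPart) -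
    ∫ x in s, f x ∂ν.toJordanDecomposition.negPart

/-- `ν` is a quadrature measure of order `n` on `S^d`. -/
def IsQuadrature (d : ℕ) (n : ℝ) (ν : SignedMeasure (Sph d)) : Prop :=
  ∀ f : Sph d → ℝ, IsSphPoly d n f → sInt ν f = ∫ y, f y ∂sphMeasure d

/-- `ν` satisfies the Marcinkiewicz-Zygmund inequality of order `n` with constant `c`;
`ν ∈ MZ(d;n)` means this holds for some `c`, and `|||ν|||_{d;n}` is the least such `c`. -/
def IsMZ (d : ℕ) (n : ℝ) (ν : SignedMeasure (Sph d)) (c : ℝ) : Prop :=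
  ∀ f : Sph d → ℝ, IsSphPoly d (n / 2) f →
    (∫ y, (f y) ^ 2 ∂ν.totalVariation) ≤ c * ∫ y, (f y) ^ 2 ∂sphMeasure d

/-- `ω_d`, the volume of `S^d`. -/
def omegaS (d : ℕ) : ℝ := 2 * Real.pi ^ (((d : ℝ) + 1) / 2) / Real.Gamma (((d : ℝ) + 1) / 2)

/-- The reproducing kernel `K_{d;n}` of `Π_n^d`. -/
def sphK (d n : ℕ) (x : ℝ) : ℝ :=
  (omegaS d / omegaS (d - 1)) * jacobiK ((d : ℝ) / 2 - 1) ((d : ℝ) / 2 - 1) n x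

/-- The kernel `Φ̃_{d;n,r}`. -/
def PhiTilde (d n : ℕ) (r : ℝ) (x : ℝ) : ℝ :=
  sphK d ((d + 2) * n) x *
    (jacobiP ((d : ℝ) / 2 + r) ((d : ℝ) / 2 - 2) (d * n) x /
      jacobiP ((d : ℝ) / 2 + r) ((d : ℝ) / 2 - 2) (d * n) 1)

/-- The kernel `Φ_{d;n,r}`. -/
def Phi (d n : ℕ) (r : ℝ) (x : ℝ) : ℝ := PhiTilde d n r x * ((1 + x) / 2) ^ n

/-- The inner product `x·y` of two points of `S^d`. -/
def ip {d : ℕ} (x y : Sph d) : ℝ :=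
  ⟪(x : EuclideanSpace ℝ (Fin (d + 1))), (y : EuclideanSpace ℝ (Fin (d + 1)))⟫

/-- The operator `σ_{d;n,r}(ν, f)`. -/
def sigmaOp (d n : ℕ) (r : ℝ) (ν : SignedMeasure (Sph d)) (f : Sph d → ℝ) (x : Sph d) : ℝ :=
  sInt ν (fun y => f y * Phi d n r (ip x y))

/-- The operator `σ̃_{d;n,r}(ν, f)`. -/
def sigmaTildeOp (d n : ℕ) (r : ℝ) (ν : SignedMeasure (Sph d)) (f : Sph d → ℝ) (x : Sph d) : ℝ :=
  sInt ν (fun y => f y * PhiTilde d n r (ip x y))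

/-- The uniform (supremum) norm `‖f‖_∞`. -/
def supNorm {X : Type*} (f : X → ℝ) : ℝ := sSup (Set.range fun x => |f x|)

/-- `E_{d;n}(f)`, the degree of approximation of `f` from `Π_n^d` in the uniform norm. -/
def bestApprox (d : ℕ) (n : ℝ) (f : Sph d → ℝ) : ℝ :=
  sInf {t | ∃ g, IsSphPoly d n g ∧ ∀ y, |f y - g y| ≤ t}

/-- `dim Π_n^d = (2n+d−2)·Γ(n+d−1)/(Γ(n)·Γ(d+1))` (for `n ≥ 2`). -/
def dimPi (d n : ℕ) : ℝ :=
  (2 * (n : ℝ) + d - 2) * Real.Gamma ((n : ℝ) + d - 1) /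
    (Real.Gamma n * Real.Gamma ((d : ℝ) + 1))

section JacobiProof

/-! ### Part A: the polynomial, its differential equation, and its norm -/

def jc (α β : ℝ) (n m : ℕ) : ℝ :=
  (n.choose m : ℝ) * (Real.Gamma (α + β + n + m + 1) / Real.Gamma (α + m + 1))

def jpoly (α β : ℝ) (n : ℕ) : Polynomial ℝ :=
  ∑ m ∈ Finset.range (n + 1), Polynomial.C (jc α β n m) * Polynomial.X ^ m

lemma jpoly_coeff (α β : ℝ) (n m : ℕ) : (jpoly α β n).coeff m = jc α β n m := by
  unfold jpoly
  rw [Polynomial.finsetSum_coeff]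
  simp only [Polynomial.coeff_C_mul, Polynomial.coeff_X_pow]
  by_cases h : m < n + 1
  · rw [Finset.sum_eq_single m]
    · simp
    · intro b _ hb
      simp [Ne.symm hb]
    · intro h'; exact absurd (Finset.mem_range.mpr h) h'
  · rw [Finset.sum_eq_zero]
    · unfold jc
      rw [Nat.choose_eq_zero_of_lt (by omega)]; simp
    · intro b hb
      have : b ≠ m := by
        have := Finset.mem_range.mp hb
        omega
      simp [Ne.symm this]

/-- value of the unnormalized polynomial and its first two derivatives -/
def jS (α β : ℝ) (n : ℕ) (x : ℝ) : ℝ := (jpoly α β n).eval ((x - 1) / 2)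
def jS1 (α β : ℝ) (n : ℕ) (x : ℝ) : ℝ :=
  (Polynomial.derivative (jpoly α β n)).eval ((x - 1) / 2) / 2
def jS2 (α β : ℝ) (n : ℕ) (x : ℝ) : ℝ :=
  (Polynomial.derivative (Polynomial.derivative (jpoly α β n))).eval ((x - 1) / 2) / 4

lemma jS_hasDerivAt (α β : ℝ) (n : ℕ) (x : ℝ) : HasDerivAt (jS α β n) (jS1 α β n x) x := by
  have h1 : HasDerivAt (fun x : ℝ => (x - 1) / 2) (1 / 2) x :=
    ((hasDerivAt_id x).sub_const 1).div_const 2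
  have := ((jpoly α β n).hasDerivAt ((x - 1) / 2)).comp x h1
  refine this.congr_deriv ?_
  unfold jS1; ring

lemma jS1_hasDerivAt (α β : ℝ) (n : ℕ) (x : ℝ) : HasDerivAt (jS1 α β n) (jS2 α β n x) x := by
  have h1 : HasDerivAt (fun x : ℝ => (x - 1) / 2) (1 / 2) x :=
    ((hasDerivAt_id x).sub_const 1).div_const 2
  have := (((Polynomial.derivative (jpoly α β n)).hasDerivAt ((x - 1) / 2)).comp x h1).div_const 2
  refine this.congr_deriv ?_
  unfold jS2; ring

lemma jc_rec (α β : ℝ) (hα : 0 ≤ α) (hβ : 0 ≤ β) (n m : ℕ) :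
    ((m : ℝ) + 1) * (m + α + 1) * jc α β n (m + 1) =
      ((n : ℝ) - m) * (n + m + α + β + 1) * jc α β n m := by
  unfold jc
  have h1 : Real.Gamma (α + β + n + (m + 1 : ℕ) + 1) =
      (α + β + n + m + 1) * Real.Gamma (α + β + n + m + 1) := by
    rw [← Real.Gamma_add_one (by positivity)]
    congr 1; push_cast; ring
  have h2 : Real.Gamma (α + (m + 1 : ℕ) + 1) = (α + m + 1) * Real.Gamma (α + m + 1) := by
    rw [← Real.Gamma_add_one (by positivity)]
    congr 1; push_cast; ring
  have h3 : ((n.choose (m + 1) : ℝ)) * (m + 1) = (n.choose m : ℝ) * ((n : ℝ) - m) := by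
    by_cases h : m ≤ n
    · have := Nat.choose_succ_right_eq n m
      have h' : ((n - m : ℕ) : ℝ) = (n : ℝ) - m := by push_cast [h]; ring
      rw [← h']; exact_mod_cast this
    · rw [Nat.choose_eq_zero_of_lt (by omega), Nat.choose_eq_zero_of_lt (by omega)]; simp
  rw [h1, h2]
  have hg : 0 < Real.Gamma (α + m + 1) := Real.Gamma_pos_of_pos (by positivity)
  have hm : 0 < α + m + 1 := by positivity
  field_simp
  linear_combination (m + α + 1) * (α + β + n + m + 1) * h3

lemma jpoly_ode (α β : ℝ) (hα : 0 ≤ α) (hβ : 0 ≤ β) (n : ℕ) :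
    Polynomial.X * Polynomial.derivative (Polynomial.derivative (jpoly α β n))
    + Polynomial.X * (Polynomial.X * Polynomial.derivative (Polynomial.derivative (jpoly α β n)))
    + Polynomial.C (α + 1) * Polynomial.derivative (jpoly α β n)
    + Polynomial.C (α + β + 2) * (Polynomial.X * Polynomial.derivative (jpoly α β n))
    = Polynomial.C ((n : ℝ) * (n + α + β + 1)) * jpoly α β n := by
  ext m
  have h0 := jc_rec α β hα hβ n m
  rcases m with _ | _ | m
  · simp only [Polynomial.coeff_add, Polynomial.coeff_C_mul, Polynomial.coeff_X_mul_zero,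
      Polynomial.coeff_derivative, jpoly_coeff]
    push_cast at h0 ⊢
    linear_combination h0
  · simp only [Polynomial.coeff_add, Polynomial.coeff_C_mul, Polynomial.coeff_X_mul,
      Polynomial.coeff_X_mul_zero, Polynomial.coeff_derivative, jpoly_coeff]
    push_cast at h0 ⊢
    linear_combination h0
  · simp only [Polynomial.coeff_add, Polynomial.coeff_C_mul, Polynomial.coeff_X_mul,
      Polynomial.coeff_derivative, jpoly_coeff]
    push_cast at h0 ⊢
    linear_combination h0

lemma jS_ode (α β : ℝ) (hα : 0 ≤ α) (hβ : 0 ≤ β) (n : ℕ) (x : ℝ) :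
    (1 - x ^ 2) * jS2 α β n x + (β - α - (α + β + 2) * x) * jS1 α β n x
      + n * (n + α + β + 1) * jS α β n x = 0 := by
  have h := congrArg (Polynomial.eval ((x - 1) / 2)) (jpoly_ode α β hα hβ n)
  simp at h
  unfold jS jS1 jS2
  linear_combination -h

lemma jS1_succ (α β : ℝ) (n : ℕ) (x : ℝ) :
    jS1 α β (n + 1) x = ((n : ℝ) + 1) / 2 * jS (α + 1) (β + 1) n x := by
  have : Polynomial.derivative (jpoly α β (n + 1)) =
      Polynomial.C ((n : ℝ) + 1) * jpoly (α + 1) (β + 1) n := by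
    ext m
    rw [Polynomial.coeff_derivative, Polynomial.coeff_C_mul, jpoly_coeff, jpoly_coeff]
    unfold jc
    have h3 : (((n + 1).choose (m + 1) : ℝ)) * (m + 1) = ((n : ℝ) + 1) * (n.choose m : ℝ) := by
      have := Nat.add_one_mul_choose_eq n m
      exact_mod_cast this.symm
    have e1 : α + β + (n + 1 : ℕ) + (m + 1 : ℕ) + 1 = α + 1 + (β + 1) + n + m + 1 := by
      push_cast; ring
    have e2 : α + (m + 1 : ℕ) + 1 = α + 1 + m + 1 := by push_cast; ring
    rw [e1, e2]
    linear_combination (Gamma (α + 1 + (β + 1) + n + m + 1) / Gamma (α + 1 + m + 1)) * h3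
  unfold jS1 jS
  rw [this]; simp; ring

/-- normalizing constant -/
def jC (α β : ℝ) (n : ℕ) : ℝ :=
  Real.sqrt ((2 * (n : ℝ) + α + β + 1) / 2 ^ (α + β + 1) *
      (Real.Gamma ((n : ℝ) + α + β + 1) * (n.factorial : ℝ) /
        (Real.Gamma ((n : ℝ) + α + 1) * Real.Gamma ((n : ℝ) + β + 1)))) *
    (Real.Gamma (α + n + 1) / ((n.factorial : ℝ) * Real.Gamma (α + β + n + 1)))

lemma jacobiP_eq (α β : ℝ) (n : ℕ) (x : ℝ) : jacobiP α β n x = jC α β n * jS α β n x := by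
  unfold jacobiP jC jS jpoly jc
  simp [Polynomial.eval_finsetSum]

lemma jC_pos (α β : ℝ) (hα : 0 ≤ α) (hβ : 0 ≤ β) (n : ℕ) : 0 < jC α β n := by
  unfold jC
  have h1 : 0 < Real.Gamma ((n : ℝ) + α + β + 1) := Real.Gamma_pos_of_pos (by positivity)
  have h2 : 0 < Real.Gamma ((n : ℝ) + α + 1) := Real.Gamma_pos_of_pos (by positivity)
  have h3 : 0 < Real.Gamma ((n : ℝ) + β + 1) := Real.Gamma_pos_of_pos (by positivity)
  have h4 : 0 < Real.Gamma (α + n + 1) := Real.Gamma_pos_of_pos (by positivity)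
  have h5 : 0 < Real.Gamma (α + β + n + 1) := Real.Gamma_pos_of_pos (by positivity)
  positivity

lemma jC_sq (α β : ℝ) (hα : 0 ≤ α) (hβ : 0 ≤ β) (n : ℕ) :
    jC α β n ^ 2 = (2 * (n : ℝ) + α + β + 1) / 2 ^ (α + β + 1) *
      (Real.Gamma (n + α + 1) /
        ((n.factorial : ℝ) * Real.Gamma (n + β + 1) * Real.Gamma (n + α + β + 1))) := by
  unfold jC
  have h1 : 0 < Real.Gamma ((n : ℝ) + α + β + 1) := Real.Gamma_pos_of_pos (by positivity)
  have h2 : 0 < Real.Gamma ((n : ℝ) + α + 1) := Real.Gamma_pos_of_pos (by positivity)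
  have h3 : 0 < Real.Gamma ((n : ℝ) + β + 1) := Real.Gamma_pos_of_pos (by positivity)
  have e1 : α + n + 1 = n + α + 1 := by ring
  have e2 : α + β + n + 1 = n + α + β + 1 := by ring
  rw [e1, e2, mul_pow, Real.sq_sqrt (by positivity)]
  field_simp

lemma w_cont (α β : ℝ) (hα : 0 ≤ α) (hβ : 0 ≤ β) :
    Continuous (fun x : ℝ => (1 - x) ^ α * (1 + x) ^ β) := by
  have h1 : Continuous (fun x : ℝ => (1 - x) ^ α) :=
    (continuous_const.sub continuous_id).rpow_const (fun x => Or.inr hα)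
  have h2 : Continuous (fun x : ℝ => (1 + x) ^ β) :=
    (continuous_const.add continuous_id).rpow_const (fun x => Or.inr hβ)
  exact h1.mul h2

lemma jS_cont (α β : ℝ) (n : ℕ) : Continuous (jS α β n) :=
  continuous_iff_continuousAt.mpr fun x => (jS_hasDerivAt α β n x).continuousAt

lemma jS1_cont (α β : ℝ) (n : ℕ) : Continuous (jS1 α β n) :=
  continuous_iff_continuousAt.mpr fun x => (jS1_hasDerivAt α β n x).continuousAt

lemma norm_step (α β : ℝ) (hα : 0 ≤ α) (hβ : 0 ≤ β) (n : ℕ) :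
    (∫ x in (-1 : ℝ)..1, jS1 α β n x ^ 2 * ((1 - x) ^ (α + 1) * (1 + x) ^ (β + 1))) =
     (n * (n + α + β + 1)) * ∫ x in (-1 : ℝ)..1, jS α β n x ^ 2 * ((1 - x) ^ α * (1 + x) ^ β) := by
  have c0 := jS_cont α β n
  have c1 := jS1_cont α β n
  have cw := w_cont α β hα hβ
  have cw1 := w_cont (α + 1) (β + 1) (by linarith) (by linarith)
  have key : (∫ x in (-1 : ℝ)..1, (jS1 α β n x ^ 2 * ((1 - x) ^ (α + 1) * (1 + x) ^ (β + 1))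
      - (n * (n + α + β + 1)) * (jS α β n x ^ 2 * ((1 - x) ^ α * (1 + x) ^ β)))) =
      (fun x => jS α β n x * jS1 α β n x * ((1 - x) ^ (α + 1) * (1 + x) ^ (β + 1))) 1 -
      (fun x => jS α β n x * jS1 α β n x * ((1 - x) ^ (α + 1) * (1 + x) ^ (β + 1))) (-1) := by
    have i1 : Continuous (fun x => (jS1 α β n x ^ 2 * ((1 - x) ^ (α + 1) * (1 + x) ^ (β + 1))
      - (n * (n + α + β + 1)) * (jS α β n x ^ 2 * ((1 - x) ^ α * (1 + x) ^ β)))) :=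
      ((c1.pow 2).mul cw1).sub (continuous_const.mul ((c0.pow 2).mul cw))
    refine intervalIntegral.integral_eq_sub_of_hasDerivAt_of_le
      (f := fun x => jS α β n x * jS1 α β n x * ((1 - x) ^ (α + 1) * (1 + x) ^ (β + 1)))
      (by norm_num) ?_ ?_ (i1.intervalIntegrable _ _)
    · exact (((c0.mul c1).mul cw1)).continuousOn
    · intro x hx
      have hx1 : 0 < 1 - x := by linarith [hx.2]
      have hx2 : 0 < 1 + x := by linarith [hx.1]
      have d0 := jS_hasDerivAt α β n x
      have d1 := jS1_hasDerivAt α β n x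
      have e1 : HasDerivAt (fun x : ℝ => (1 - x) ^ (α + 1)) (-1 * (α + 1) * (1 - x) ^ (α + 1 - 1)) x :=
        ((hasDerivAt_id x).const_sub 1).rpow_const (Or.inl hx1.ne')
      have e2 : HasDerivAt (fun x : ℝ => (1 + x) ^ (β + 1)) (1 * (β + 1) * (1 + x) ^ (β + 1 - 1)) x :=
        ((hasDerivAt_id x).const_add 1).rpow_const (Or.inl hx2.ne')
      refine ((d0.mul d1).mul (e1.mul e2)).congr_deriv ?_
      have ode := jS_ode α β hα hβ n x
      rw [add_sub_cancel_right, add_sub_cancel_right, Real.rpow_add_one hx1.ne',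
        Real.rpow_add_one hx2.ne']
      simp only [Pi.mul_apply]
      rw [Real.rpow_add_one hx1.ne', Real.rpow_add_one hx2.ne']
      linear_combination (jS α β n x * (1 - x) ^ α * (1 + x) ^ β) * ode
  have i2 : Continuous (fun x => jS1 α β n x ^ 2 * ((1 - x) ^ (α + 1) * (1 + x) ^ (β + 1))) :=
    (c1.pow 2).mul cw1
  have i3 : Continuous (fun x => ((n : ℝ) * (n + α + β + 1)) *
      (jS α β n x ^ 2 * ((1 - x) ^ α * (1 + x) ^ β))) :=
    continuous_const.mul ((c0.pow 2).mul cw)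
  rw [intervalIntegral.integral_sub (i2.intervalIntegrable _ _) (i3.intervalIntegrable _ _),
    intervalIntegral.integral_const_mul] at key
  have z1 : (0 : ℝ) ^ (α + 1) = 0 := Real.zero_rpow (by linarith)
  have z2 : (0 : ℝ) ^ (β + 1) = 0 := Real.zero_rpow (by linarith)
  simp [z1, z2] at key
  linarith

lemma w_integral (α β : ℝ) (hα : 0 ≤ α) (hβ : 0 ≤ β) :
    (∫ x in (-1 : ℝ)..1, (1 - x) ^ α * (1 + x) ^ β) =
      2 ^ (α + β + 1) * (Real.Gamma (α + 1) * Real.Gamma (β + 1) / Real.Gamma (α + β + 2)) := by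
  have hb : (∫ t in (0 : ℝ)..1, t ^ α * (1 - t) ^ β) =
      Real.Gamma (α + 1) * Real.Gamma (β + 1) / Real.Gamma (α + β + 2) := by
    have h1 := Complex.betaIntegral_eq_Gamma_mul_div ((α + 1 : ℝ) : ℂ) ((β + 1 : ℝ) : ℂ)
      (by simp; linarith) (by simp; linarith)
    unfold Complex.betaIntegral at h1
    have h2 : (∫ t in (0 : ℝ)..1, (t : ℂ) ^ (((α + 1 : ℝ) : ℂ) - 1) * (1 - (t : ℂ)) ^ (((β + 1 : ℝ) : ℂ) - 1))
        = ∫ t in (0 : ℝ)..1, ((t ^ α * (1 - t) ^ β : ℝ) : ℂ) := by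
      apply intervalIntegral.integral_congr
      intro t ht
      rw [Set.uIcc_of_le (by norm_num)] at ht
      have h3 : 0 ≤ 1 - t := by linarith [ht.2]
      simp only
      rw [Complex.ofReal_mul, Complex.ofReal_cpow ht.1, Complex.ofReal_cpow h3]
      push_cast
      simp
    rw [h2, intervalIntegral.integral_ofReal, ← Complex.ofReal_add, Complex.Gamma_ofReal, Complex.Gamma_ofReal,
      Complex.Gamma_ofReal] at h1
    have h4 : α + 1 + (β + 1) = α + β + 2 := by ring
    rw [h4] at h1
    exact_mod_cast h1
  have hs := intervalIntegral.integral_comp_sub_div (a := -1) (b := 1)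
    (fun t : ℝ => t ^ α * (1 - t) ^ β) (c := 2) (by norm_num) (1 / 2)
  norm_num at hs
  rw [hb] at hs
  have h5 : (∫ x in (-1 : ℝ)..1, (1 - x) ^ α * (1 + x) ^ β) =
     ∫ x in (-1 : ℝ)..1, 2 ^ (α + β) * ((1 / 2 - x / 2) ^ α * (1 - (1 / 2 - x / 2)) ^ β) := by
    apply intervalIntegral.integral_congr
    intro x hx
    rw [Set.uIcc_of_le (by norm_num)] at hx
    have e1 : 1 - x = 2 * (1 / 2 - x / 2) := by ring
    have e2 : 1 + x = 2 * (1 - (1 / 2 - x / 2)) := by ring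
    simp only
    rw [e1, e2, Real.mul_rpow (by norm_num) (by linarith [hx.2]),
      Real.mul_rpow (by norm_num) (by linarith [hx.1]), Real.rpow_add (by norm_num)]
    ring
  rw [h5, intervalIntegral.integral_const_mul, Real.rpow_add_one (by norm_num)]
  rw [show (∫ x in (-1 : ℝ)..1, (1 / 2 - x / 2) ^ α * (1 - (1 / 2 - x / 2)) ^ β) = _ from hs]
  ring

lemma jS_norm (n : ℕ) : ∀ (α β : ℝ), 0 ≤ α → 0 ≤ β →
    jC α β n ^ 2 * (∫ x in (-1 : ℝ)..1, jS α β n x ^ 2 * ((1 - x) ^ α * (1 + x) ^ β)) = 1 := by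
  induction n with
  | zero =>
    intro α β hα hβ
    have h0 : ∀ x, jS α β 0 x = Gamma (α + β + 1) / Gamma (α + 1) := by
      intro x; unfold jS jpoly jc; simp
    simp only [h0]
    rw [intervalIntegral.integral_const_mul, w_integral α β hα hβ, jC_sq α β hα hβ]
    have g1 : 0 < Gamma (α + 1) := Real.Gamma_pos_of_pos (by positivity)
    have g2 : 0 < Gamma (β + 1) := Real.Gamma_pos_of_pos (by positivity)
    have g3 : 0 < Gamma (α + β + 1) := Real.Gamma_pos_of_pos (by positivity)
    have g4 : Gamma (α + β + 2) = (α + β + 1) * Gamma (α + β + 1) := by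
      rw [← Real.Gamma_add_one (by positivity)]; congr 1; ring
    rw [g4]
    simp
    field_simp
  | succ n ih =>
    intro α β hα hβ
    have h := ih (α + 1) (β + 1) (by linarith) (by linarith)
    have hs := norm_step α β hα hβ (n + 1)
    simp only [jS1_succ, mul_pow, mul_assoc] at hs
    rw [intervalIntegral.integral_const_mul, ] at hs
    set I := ∫ x in (-1 : ℝ)..1, jS α β (n+1) x ^ 2 * ((1 - x) ^ α * (1 + x) ^ β)
    set J := ∫ x in (-1 : ℝ)..1, jS (α + 1) (β + 1) n x ^ 2 * ((1 - x) ^ (α + 1) * (1 + x) ^ (β + 1))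
    have hC : jC α β (n + 1) ^ 2 * ((n : ℝ) + 1) = 4 * (n + α + β + 2) * jC (α + 1) (β + 1) n ^ 2 := by
      rw [jC_sq α β hα hβ, jC_sq (α + 1) (β + 1) (by linarith) (by linarith)]
      have e1 : (((n + 1 : ℕ) : ℝ) + α + 1) = n + (α + 1) + 1 := by push_cast; ring
      have e2 : (((n + 1 : ℕ) : ℝ) + β + 1) = n + (β + 1) + 1 := by push_cast; ring
      have e3 : Gamma ((n : ℝ) + (α + 1) + (β + 1) + 1) =
        (n + α + β + 2) * Gamma (((n + 1 : ℕ) : ℝ) + α + β + 1) := by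
        have e4 : (((n + 1 : ℕ) : ℝ) + α + β + 1) = n + α + β + 2 := by push_cast; ring
        rw [e4, ← Real.Gamma_add_one (by positivity)]
        congr 1; ring
      have g1 : 0 < Gamma (n + (α + 1) + 1) := Real.Gamma_pos_of_pos (by positivity)
      have g2 : 0 < Gamma (n + (β + 1) + 1) := Real.Gamma_pos_of_pos (by positivity)
      have g3 : 0 < Gamma (((n + 1 : ℕ) : ℝ) + α + β + 1) := Real.Gamma_pos_of_pos (by positivity)
      have e5 : (2 : ℝ) ^ (α + 1 + (β + 1) + 1) = 4 * 2 ^ (α + β + 1) := by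
        rw [show α + 1 + (β + 1) + 1 = (α + β + 1) + 2 by ring, Real.rpow_add (by norm_num)]
        norm_num; ring
      rw [e1, e2, e3, e5, Nat.factorial_succ]
      push_cast
      have : 0 < (n : ℝ) + α + β + 2 := by positivity
      have h2 : (0:ℝ) < 2 ^ (α + β + 1) := by positivity
      push_cast at g3
      field_simp
      ring
    have hpos : 0 < (n : ℝ) + α + β + 2 := by positivity
    have hn : 0 < (n : ℝ) + 1 := by positivity
    push_cast at hs
    have h6 : jC α β (n + 1) ^ 2 * I * (4 * (n + α + β + 2)) =  1 * (4 * (n + α + β + 2)) := by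
      have : ((n : ℝ) + 1) * J = 4 * (n + α + β + 2) * I := by
        apply mul_left_cancel₀ hn.ne'
        linear_combination 4 * hs
      linear_combination (-jC α β (n + 1) ^ 2) * this + J * hC + (4 * (n + α + β + 2)) * h
    exact mul_right_cancel₀ (by positivity) h6

/-! ### Part B: endpoint values, Sonin function, exponential decay -/

lemma jS_one (α β : ℝ) (n : ℕ) : jS α β n 1 = Gamma (α + β + n + 1) / Gamma (α + 1) := by
  unfold jS
  rw [sub_self, zero_div, ← Polynomial.coeff_zero_eq_eval_zero, jpoly_coeff]
  unfold jc; simp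

lemma jS_one_pos (α β : ℝ) (hα : 0 ≤ α) (hβ : 0 ≤ β) (n : ℕ) : 0 < jS α β n 1 := by
  rw [jS_one]
  exact div_pos (Real.Gamma_pos_of_pos (by positivity)) (Real.Gamma_pos_of_pos (by positivity))

lemma fwd_gamma (a c : ℝ) (ha : 0 < a) (hc : 0 < c) (n : ℕ) : ∀ y : ℝ, 0 ≤ y →
    (fwdDiff (1 : ℝ))^[n] (fun y : ℝ => Gamma (a + y) / Gamma (c + y)) y =
      (∏ i ∈ Finset.range n, (a - c - i)) * (Gamma (a + y) / Gamma (c + y + n)) := by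
  induction n with
  | zero => intro y hy; simp
  | succ n ih =>
    intro y hy
    rw [Function.iterate_succ_apply']
    unfold fwdDiff at ih ⊢
    rw [ih y hy, ih (y + 1) (by linarith), Finset.prod_range_succ]
    have e1 : Gamma (a + (y + 1)) = (a + y) * Gamma (a + y) := by
      rw [← Real.Gamma_add_one (by positivity)]; congr 1; ring
    have e2 : Gamma (c + (y + 1) + n) = (c + y + n) * Gamma (c + y + n) := by
      rw [← Real.Gamma_add_one (by positivity)]; congr 1; ring
    have e3 : Gamma (c + y + (n + 1 : ℕ)) = (c + y + n) * Gamma (c + y + n) := by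
      rw [← Real.Gamma_add_one (by positivity)]; congr 1; push_cast; ring
    rw [e1, e2, e3]
    have g : 0 < Gamma (c + y + n) := Real.Gamma_pos_of_pos (by positivity)
    have : 0 < c + y + n := by positivity
    field_simp
    ring

lemma gamma_prod (α : ℝ) (hα : 0 ≤ α) (n : ℕ) :
    Gamma (α + 1 + n) = Gamma (α + 1) * ∏ j ∈ Finset.range n, (α + (j + 1)) := by
  induction n with
  | zero => simp
  | succ n ih =>
    rw [Finset.prod_range_succ, ← mul_assoc, ← ih]
    have : α + 1 + ((n + 1 : ℕ) : ℝ) = (α + 1 + n) + 1 := by push_cast; ring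
    rw [this, Real.Gamma_add_one (by positivity)]; ring

lemma jS_neg_one (α β : ℝ) (hα : 0 ≤ α) (hβ : 0 ≤ β) (n : ℕ) :
    |jS α β n (-1)| = jS α β n 1 * ∏ j ∈ Finset.range n, ((β + (j + 1)) / (α + (j + 1))) := by
  have h := fwd_gamma (α + β + n + 1) (α + 1) (by positivity) (by positivity) n 0 le_rfl
  rw [fwdDiff_iter_eq_sum_shift] at h
  have h1 : jS α β n (-1) = (-1) ^ n * ∑ k ∈ Finset.range (n + 1), ((-1 : ℤ) ^ (n - k) * (n.choose k)) •
      (fun y : ℝ => Gamma (α + β + n + 1 + y) / Gamma (α + 1 + y)) (0 + k • 1) := by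
    unfold jS jpoly
    rw [Polynomial.eval_finsetSum, Finset.mul_sum]
    apply Finset.sum_congr rfl
    intro k hk
    have hk : k ≤ n := by have := Finset.mem_range.mp hk; omega
    unfold jc
    simp only [Polynomial.eval_mul, Polynomial.eval_C, Polynomial.eval_pow, Polynomial.eval_X,
      zsmul_eq_mul, nsmul_eq_mul]
    push_cast
    have e : (-1 : ℝ) ^ n * (-1) ^ (n - k) = (-1) ^ k := by
      rw [← pow_add]
      have : n + (n - k) = 2 * (n - k) + k := by omega
      rw [this, pow_add, pow_mul]; norm_num
    have e1 : α + β + n + 1 + (0 + k * 1) = α + β + n + k + 1 := by ring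
    have e2 : α + 1 + (0 + (k : ℝ) * 1) = α + k + 1 := by ring
    rw [e1, e2, show ((-1 : ℝ) - 1) / 2 = -1 by norm_num, ← e]
    ring
  rw [h] at h1
  rw [h1, abs_mul, abs_pow, abs_neg, abs_one, one_pow, one_mul, add_zero, add_zero, gamma_prod α hα,
    jS_one, Finset.prod_div_distrib]
  have h2 : ∏ i ∈ Finset.range n, (α + β + n + 1 - (α + 1) - (i : ℝ)) =
      ∏ j ∈ Finset.range n, (β + ((j : ℝ) + 1)) := by
    rw [← Finset.prod_range_reflect]
    apply Finset.prod_congr rfl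
    intro i hi
    have hi : i < n := Finset.mem_range.mp hi
    have : ((n - 1 - i : ℕ) : ℝ) = n - 1 - i := by
      rw [Nat.cast_sub (by omega), Nat.cast_sub (by omega)]; simp
    rw [this]; ring
  rw [h2]
  have g1 : 0 < Gamma (α + 1) := Real.Gamma_pos_of_pos (by positivity)
  have g2 : 0 < Gamma (α + β + n + 1) := Real.Gamma_pos_of_pos (by positivity)
  have p1 : 0 < ∏ j ∈ Finset.range n, (α + ((j : ℝ) + 1)) := Finset.prod_pos fun i _ => by positivity
  have p2 : 0 < ∏ j ∈ Finset.range n, (β + ((j : ℝ) + 1)) := Finset.prod_pos fun i _ => by positivity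
  rw [abs_of_pos (by positivity)]
  field_simp

def jF (α β : ℝ) (n : ℕ) (x : ℝ) : ℝ :=
  n * (n + α + β + 1) * jS α β n x ^ 2 + (1 - x ^ 2) * jS1 α β n x ^ 2

lemma jF_hasDerivAt (α β : ℝ) (hα : 0 ≤ α) (hβ : 0 ≤ β) (n : ℕ) (x : ℝ) :
    HasDerivAt (jF α β n) (2 * jS1 α β n x ^ 2 * ((α - β) + (α + β + 1) * x)) x := by
  have d0 := jS_hasDerivAt α β n x
  have d1 := jS1_hasDerivAt α β n x
  have dx : HasDerivAt (fun x : ℝ => 1 - x ^ 2) (-(2 * x)) x := by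
    simpa using ((hasDerivAt_id x).pow 2).const_sub 1
  have := ((d0.pow 2).const_mul ((n : ℝ) * (n + α + β + 1))).add (dx.mul (d1.pow 2))
  refine this.congr_deriv ?_
  have ode := jS_ode α β hα hβ n x
  simp only [Pi.pow_apply]
  push_cast
  linear_combination (2 * jS1 α β n x) * ode

lemma jF_mono (α β : ℝ) (hα : 0 ≤ α) (hβ : 0 ≤ β) (hab : β ≤ α) (n : ℕ) {x y : ℝ}
    (hx : -((α - β) / (α + β + 1)) ≤ x) (hxy : x ≤ y) : jF α β n x ≤ jF α β n y := by
  have hm : MonotoneOn (jF α β n) (Icc x y) := by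
    apply monotoneOn_of_hasDerivWithinAt_nonneg (convex_Icc x y)
    · exact fun t _ => (jF_hasDerivAt α β hα hβ n t).continuousAt.continuousWithinAt
    · intro t _; exact (jF_hasDerivAt α β hα hβ n t).hasDerivWithinAt
    · intro t ht
      rw [interior_Icc] at ht
      have h1 : -((α - β) / (α + β + 1)) ≤ t := by linarith [ht.1]
      have h2 : 0 < α + β + 1 := by positivity
      rw [← neg_div, div_le_iff₀ h2] at h1
      have : 0 ≤ (α - β) + (α + β + 1) * t := by linarith
      positivity
  exact hm (left_mem_Icc.mpr hxy) (right_mem_Icc.mpr hxy) hxy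

lemma jF_anti (α β : ℝ) (hα : 0 ≤ α) (hβ : 0 ≤ β) (n : ℕ) {x y : ℝ}
    (hy : y ≤ -((α - β) / (α + β + 1))) (hxy : x ≤ y) : jF α β n y ≤ jF α β n x := by
  have hm : AntitoneOn (jF α β n) (Icc x y) := by
    apply antitoneOn_of_hasDerivWithinAt_nonpos (convex_Icc x y)
    · exact fun t _ => (jF_hasDerivAt α β hα hβ n t).continuousAt.continuousWithinAt
    · intro t _; exact (jF_hasDerivAt α β hα hβ n t).hasDerivWithinAt
    · intro t ht
      rw [interior_Icc] at ht
      have h1 : t ≤ -((α - β) / (α + β + 1)) := by linarith [ht.2]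
      have h2 : 0 < α + β + 1 := by positivity
      rw [← neg_div, le_div_iff₀ h2] at h1
      have : 0 ≤ -((α - β) + (α + β + 1) * t) := by linarith
      have := mul_nonneg (show 0 ≤ 2 * jS1 α β n t ^ 2 by positivity) this
      linarith
  exact hm (left_mem_Icc.mpr hxy) (right_mem_Icc.mpr hxy) hxy

/-- for `-1 ≤ x ≤ x₁`, `0 ≤ x₁`: the Sonin function is at most the larger boundary value -/
lemma jF_le_max (α β : ℝ) (hα : 0 ≤ α) (hβ : 0 ≤ β) (hab : β ≤ α) (n : ℕ) {x x₁ : ℝ}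
    (hx : -1 ≤ x) (hxx : x ≤ x₁) : jF α β n x ≤ max (jF α β n x₁) (jF α β n (-1)) := by
  rcases le_total x (-((α - β) / (α + β + 1))) with h | h
  · exact le_max_of_le_right (jF_anti α β hα hβ n h hx)
  · exact le_max_of_le_left (jF_mono α β hα hβ hab n h hxx)

lemma jS_sq_le (α β : ℝ) (hα : 0 ≤ α) (hβ : 0 ≤ β) (hab : β ≤ α) (n : ℕ) (hn : 1 ≤ n) {x x₁ E : ℝ}
    (hx : -1 ≤ x) (hxx : x ≤ x₁) (hx1 : x₁ ≤ 1)
    (hE1 : jF α β n x₁ ≤ (n * (n + α + β + 1)) * E)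
    (hE2 : jS α β n (-1) ^ 2 ≤ E) : jS α β n x ^ 2 ≤ E := by
  have hn' : (1 : ℝ) ≤ n := by exact_mod_cast hn
  have hl : 0 < (n : ℝ) * (n + α + β + 1) := by positivity
  have h1 : (n : ℝ) * (n + α + β + 1) * jS α β n x ^ 2 ≤ jF α β n x := by
    unfold jF
    have : 0 ≤ 1 - x ^ 2 := by nlinarith
    have := mul_nonneg this (sq_nonneg (jS1 α β n x))
    linarith
  have h2 := jF_le_max α β hα hβ hab n hx hxx
  have h3 : jF α β n (-1) ≤ (n * (n + α + β + 1)) * E := by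
    unfold jF
    have := mul_le_mul_of_nonneg_left hE2 hl.le
    norm_num
    linarith
  have h4 := h1.trans (h2.trans (max_le hE1 h3))
  exact le_of_mul_le_mul_left h4 hl

lemma jS_neg_one_le (α β : ℝ) (hα : 0 ≤ α) (hβ : 0 ≤ β) (hab : β ≤ α) (n : ℕ) :
    |jS α β n (-1)| ≤ jS α β n 1 := by
  rw [jS_neg_one α β hα hβ]
  apply mul_le_of_le_one_right (jS_one_pos α β hα hβ n).le
  apply Finset.prod_le_one
  · intro i _; positivity
  · intro i _
    rw [div_le_one (by positivity)]
    linarith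

lemma jS_abs_le (α β : ℝ) (hα : 0 ≤ α) (hβ : 0 ≤ β) (hab : β ≤ α) (n : ℕ) {x : ℝ}
    (hx : -1 ≤ x) (hx1 : x ≤ 1) : |jS α β n x| ≤ jS α β n 1 := by
  rcases Nat.eq_zero_or_pos n with rfl | hn
  · have h0 : ∀ x, jS α β 0 x = Gamma (α + β + 1) / Gamma (α + 1) := by
      intro x; unfold jS jpoly jc; simp
    rw [h0, h0, abs_of_pos]
    exact div_pos (Real.Gamma_pos_of_pos (by positivity)) (Real.Gamma_pos_of_pos (by positivity))
  · apply abs_le_of_sq_le_sq _ (jS_one_pos α β hα hβ n).le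
    apply jS_sq_le α β hα hβ hab n hn hx hx1 le_rfl
    · unfold jF; simp
    · rw [← sq_abs]
      exact pow_le_pow_left₀ (abs_nonneg _) (jS_neg_one_le α β hα hβ hab n) 2

lemma decay_alg {α k l r y t s w z : ℝ} (hα : 0 < α) (hk0 : 0 < k) (hl0 : 0 < l) (hkα : k * α = 1 / 2100000)
    (hkl : k * l ≤ α / 2) (hr : r = k * l / 3) (hy0 : 0 ≤ y) (hy1 : y ≤ 1) (hc1 : α ≤ w)
    (hc2 : z ≤ 2 * α) (hc3 : 0 ≤ z) :
    r * (3 / 2 * (l * s ^ 2 + y * t ^ 2)) ≤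
      2 * t ^ 2 * w - k * l * (y * t ^ 2 + z * (s * t) - l * s ^ 2) := by
  have b1 : 2 * t ^ 2 * α ≤ 2 * t ^ 2 * w := by gcongr
  have b2 : k * l * (y * t ^ 2) ≤ (α / 2) * (1 * t ^ 2) := by gcongr
  have b3 : k * (z * t) ^ 2 ≤ k * (2 * α) ^ 2 * t ^ 2 := by
    rw [mul_pow, ← mul_assoc]; gcongr
  have b4 : k * (2 * α) ^ 2 = 4 * (k * α) * α := by ring
  rw [b4, hkα] at b3
  have b5 : 0 ≤ k * (l * s - z * t) ^ 2 := by positivity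
  have b6 : r * (3 / 2 * (l * s ^ 2 + y * t ^ 2)) = k * l ^ 2 * s ^ 2 / 2 + k * l * (y * t ^ 2) / 2 := by
    rw [hr]; ring
  rw [b6]
  have b7 : 0 ≤ α * t ^ 2 := by positivity
  nlinarith

lemma decay_alg2 {k l y t s : ℝ} (hl0 : 0 < l) 
    (hk2l : k * (k * l) ≤ 1 / 4) (hy0 : 0 ≤ y) (hy1 : y ≤ 1) :
    |k * l * (y * (s * t))| ≤ (l * s ^ 2 + y * t ^ 2) / 2 := by
  have a1 : y * t ^ 2 * (k * (k * l)) ≤ y * t ^ 2 * (1 / 4) := by gcongr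
  have a0 : 0 ≤ k * (k * l) := by nlinarith [mul_nonneg (sq_nonneg k) hl0.le]
  have a2 : y * (y * t ^ 2 * (k * (k * l))) ≤ 1 * (y * t ^ 2 * (1 / 4)) := by
    apply mul_le_mul hy1 a1 (by positivity) (by norm_num)
  have a3 : 0 ≤ l * (s - k * y * t) ^ 2 := by positivity
  have a4 : 0 ≤ l * (s + k * y * t) ^ 2 := by positivity
  have a5 : 0 ≤ y * t ^ 2 := by positivity
  rw [abs_le]
  constructor <;> nlinarith

set_option maxHeartbeats 1000000 in
/-- Exponential decay of the Sonin function near `1` in the regime `n ≤ 1000 α`. -/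
lemma jF_decay (α β : ℝ) (hα : 1 ≤ α) (hβ : 0 ≤ β) (hab : β ≤ α) (n : ℕ) (hn : 1 ≤ n)
    (hnA : (n : ℝ) ≤ 1000 * α) {x : ℝ} (hx : 1 / 2 ≤ x) (hx1 : x ≤ 1) :
    jF α β n x ≤ (n * (n + α + β + 1)) * (2 * jS α β n 1 ^ 2 *
      exp (-((n : ℝ) * (1 - x) / 6300000))) := by
  have hα0 : 0 ≤ α := by linarith
  have hn' : (1 : ℝ) ≤ n := by exact_mod_cast hn
  set l : ℝ := n * (n + α + β + 1) with hl
  set k : ℝ := 1 / (2100000 * α) with hk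
  have hαp : 0 < α := by linarith
  have hl0 : 0 < l := by positivity
  have hk0 : 0 < k := by positivity
  have hkα : k * α = 1 / 2100000 := by rw [hk]; field_simp
  have hlα : l ≤ 1003000 * α ^ 2 := by
    have : n * (n + α + β + 1) ≤ 1000 * α * (1000 * α + α + α + α) := by gcongr
    rw [hl]; linarith
  have hkl : k * l ≤ α / 2 := by
    have : k * l ≤ k * (1003000 * α ^ 2) := by gcongr
    have h2 : k * (1003000 * α ^ 2) = (k * α) * 1003000 * α := by ring
    rw [h2, hkα] at this; linarith
  have hln : n * α ≤ l := by
    rw [hl]; apply mul_le_mul_of_nonneg_left _ (by linarith); linarith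
  set r : ℝ := k * l / 3 with hr
  have hrn : (n : ℝ) / 6300000 ≤ r := by
    have : k * (n * α) ≤ k * l := by gcongr
    have h2 : k * (n * α) = (k * α) * n := by ring
    rw [h2, hkα] at this; rw [hr]; linarith
  have hk2l : k * (k * l) ≤ 1 / 4 := by
    have : k * (k * l) ≤ k * (α / 2) := by gcongr
    nlinarith
  -- the modified function
  let Ft : ℝ → ℝ := fun x => jF α β n x - k * l * ((1 - x ^ 2) * (jS α β n x * jS1 α β n x))
  let Ft' : ℝ → ℝ := fun x => 2 * jS1 α β n x ^ 2 * ((α - β) + (α + β + 1) * x)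
     - k * l * ((1 - x ^ 2) * jS1 α β n x ^ 2 + ((α - β) + (α + β) * x) * (jS α β n x * jS1 α β n x)
       - l * jS α β n x ^ 2)
  have hd : ∀ x, HasDerivAt Ft (Ft' x) x := by
    intro x
    have d0 := jS_hasDerivAt α β n x
    have d1 := jS1_hasDerivAt α β n x
    have dx : HasDerivAt (fun x : ℝ => 1 - x ^ 2) (-(2 * x)) x := by
      simpa using ((hasDerivAt_id x).pow 2).const_sub 1
    refine ((jF_hasDerivAt α β hα0 hβ n x).sub ((dx.mul (d0.mul d1)).const_mul (k * l))).congr_deriv ?_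
    have ode := jS_ode α β hα0 hβ n x
    simp only [Ft', Pi.mul_apply]
    linear_combination (-k * l * jS α β n x) * ode
  have hbd : ∀ x, 1 / 2 ≤ x → x ≤ 1 →
      |k * l * ((1 - x ^ 2) * (jS α β n x * jS1 α β n x))| ≤ jF α β n x / 2 := by
    intro x h1 h2
    unfold jF
    rw [← hl]
    have hy0 : 0 ≤ 1 - x ^ 2 := by nlinarith
    have hy1 : 1 - x ^ 2 ≤ 1 := by nlinarith
    exact decay_alg2 hl0 hk2l hy0 hy1
  have hgr : ∀ x, 1 / 2 ≤ x → x ≤ 1 → r * Ft x ≤ Ft' x := by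
    intro x h1 h2
    have hb := (abs_le.mp (hbd x h1 h2)).1
    have hF : Ft x ≤ 3 / 2 * jF α β n x := by simp only [Ft]; linarith
    have hr0 : 0 ≤ r := by positivity
    refine (mul_le_mul_of_nonneg_left hF hr0).trans ?_
    simp only [Ft']
    unfold jF
    rw [← hl]
    have hy0 : 0 ≤ 1 - x ^ 2 := by nlinarith
    have hy1 : 1 - x ^ 2 ≤ 1 := by nlinarith
    have hc1 : α ≤ (α - β) + (α + β + 1) * x := by nlinarith
    have hc2 : (α - β) + (α + β) * x ≤ 2 * α := by nlinarith
    have hc3 : 0 ≤ (α - β) + (α + β) * x := by nlinarith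
    exact decay_alg hαp hk0 hl0 hkα hkl hr hy0 hy1 hc1 hc2 hc3
  have hmono : MonotoneOn (fun x => Ft x * exp (-(r * x))) (Icc (1 / 2) 1) := by
    have hdd : ∀ x, HasDerivAt (fun x => Ft x * exp (-(r * x)))
        ((Ft' x - r * Ft x) * exp (-(r * x))) x := by
      intro x
      have he : HasDerivAt (fun x : ℝ => exp (-(r * x))) (exp (-(r * x)) * (-(r * 1))) x :=
        (((hasDerivAt_id x).const_mul r).neg).exp
      refine ((hd x).mul he).congr_deriv ?_
      ring
    apply monotoneOn_of_hasDerivWithinAt_nonneg (convex_Icc _ _)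
    · exact fun t _ => (hdd t).continuousAt.continuousWithinAt
    · intro t _; exact (hdd t).hasDerivWithinAt
    · intro t ht
      rw [interior_Icc] at ht
      have := hgr t ht.1.le ht.2.le
      exact mul_nonneg (by linarith) (exp_pos _).le
  have h1 := hmono ⟨hx, hx1⟩ ⟨by norm_num, le_rfl⟩ hx1
  have hF1 : Ft 1 = l * jS α β n 1 ^ 2 := by simp only [Ft, jF]; norm_num [hl]
  simp only [hF1] at h1
  have h2 : jF α β n x ≤ 2 * Ft x := by
    have hb := (abs_le.mp (hbd x hx hx1)).2
    simp only [Ft]; linarith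
  have h3 : Ft x ≤ l * jS α β n 1 ^ 2 * exp (-(r * (1 - x))) := by
    have h4 : Ft x = Ft x * exp (-(r * x)) * exp (r * x) := by
      rw [mul_assoc, ← exp_add]; simp
    rw [h4, show -(r * (1 - x)) = -(r * 1) + r * x by ring, exp_add, ← mul_assoc]
    exact mul_le_mul_of_nonneg_right h1 (exp_pos _).le
  have h5 : exp (-(r * (1 - x))) ≤ exp (-((n : ℝ) * (1 - x) / 6300000)) := by
    apply exp_le_exp.mpr
    have : (n : ℝ) / 6300000 * (1 - x) ≤ r * (1 - x) := by
      apply mul_le_mul_of_nonneg_right hrn; linarith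
    linarith
  have h6 : l * jS α β n 1 ^ 2 * exp (-(r * (1 - x))) ≤
     l * jS α β n 1 ^ 2 * exp (-((n : ℝ) * (1 - x) / 6300000)) := by gcongr
  linarith

/-! ### Part C: the Liouville form -/
open Filter Topology

def QQ (N m1 m2 θ : ℝ) : ℝ := N ^ 2 - m1 / (2 * (1 - cos θ)) - m2 / (2 * (1 + cos θ))

structure JV (N m1 m2 : ℝ) (v v1 : ℝ → ℝ) : Prop where
  cont : ContinuousOn v (Icc 0 π)
  d1 : ∀ θ ∈ Ioo 0 π, HasDerivAt v (v1 θ) θ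
  d2 : ∀ θ ∈ Ioo 0 π, HasDerivAt v1 (-(QQ N m1 m2 θ) * v θ) θ
  int : ∫ θ in (0 : ℝ)..π, v θ ^ 2 ≤ 1
  v0 : v 0 = 0
  vpi : v π = 0
  lim0 : Tendsto (fun θ => v θ ^ 2 / (1 - cos θ)) (𝓝[>] 0) (𝓝 0)
  limpi : Tendsto (fun θ => v θ ^ 2 / (1 + cos θ)) (𝓝[<] π) (𝓝 0)

lemma JV.reflect {N m1 m2 : ℝ} {v v1 : ℝ → ℝ} (h : JV N m1 m2 v v1) :
    JV N m2 m1 (fun θ => v (π - θ)) (fun θ => -v1 (π - θ)) where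
  cont := by
    apply h.cont.comp (by fun_prop)
    intro x hx
    exact ⟨by linarith [hx.2], by linarith [hx.1]⟩
  d1 := by
    intro θ hθ
    have := h.d1 (π - θ) ⟨by linarith [hθ.2], by linarith [hθ.1]⟩
    have e : HasDerivAt (fun θ : ℝ => π - θ) (-1) θ := (hasDerivAt_id θ).const_sub π
    exact (this.comp θ e).congr_deriv (by ring)
  d2 := by
    intro θ hθ
    have := h.d2 (π - θ) ⟨by linarith [hθ.2], by linarith [hθ.1]⟩
    have e : HasDerivAt (fun θ : ℝ => π - θ) (-1) θ := (hasDerivAt_id θ).const_sub π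
    refine (this.comp θ e).neg.congr_deriv ?_
    unfold QQ
    rw [cos_pi_sub, sub_neg_eq_add, ← sub_eq_add_neg]; ring
  int := by
    have := intervalIntegral.integral_comp_sub_left (a := 0) (b := π) (fun θ => v θ ^ 2) π
    simp only [sub_self, sub_zero] at this
    rw [this]; exact h.int
  v0 := by simpa using h.vpi
  vpi := by simpa using h.v0
  lim0 := by
    have e : Tendsto (fun θ : ℝ => π - θ) (𝓝[>] 0) (𝓝[<] π) := by
      apply tendsto_nhdsWithin_of_tendsto_nhds_of_eventually_within
      · have : Continuous (fun θ : ℝ => π - θ) := by fun_prop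
        have := this.tendsto 0
        simp only [sub_zero] at this
        exact this.mono_left nhdsWithin_le_nhds
      · filter_upwards [self_mem_nhdsWithin] with x hx
        have : 0 < x := hx
        simp only [mem_Iio]; linarith
    refine (h.limpi.comp e).congr ?_
    intro x; simp only [Function.comp]; rw [cos_pi_sub, ← sub_eq_add_neg]
  limpi := by
    have e : Tendsto (fun θ : ℝ => π - θ) (𝓝[<] π) (𝓝[>] 0) := by
      apply tendsto_nhdsWithin_of_tendsto_nhds_of_eventually_within
      · have : Continuous (fun θ : ℝ => π - θ) := by fun_prop
        have := this.tendsto π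
        simp only [sub_self] at this
        exact this.mono_left nhdsWithin_le_nhds
      · filter_upwards [self_mem_nhdsWithin] with x hx
        have : x < π := hx
        simp only [mem_Ioi]; linarith
    refine (h.lim0.comp e).congr ?_
    intro x; simp only [Function.comp]; rw [cos_pi_sub, sub_neg_eq_add]

def jg (A B θ : ℝ) : ℝ := (1 - cos θ) ^ (A / 2 + 1 / 4) * (1 + cos θ) ^ (B / 2 + 1 / 4)
def jL (A B θ : ℝ) : ℝ := (A / 2 + 1 / 4) * (sin θ / (1 - cos θ)) - (B / 2 + 1 / 4) * (sin θ / (1 + cos θ))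
def jv (A B : ℝ) (n : ℕ) (θ : ℝ) : ℝ := jg A B θ * (jC A B n * jS A B n (cos θ))
def jv1 (A B : ℝ) (n : ℕ) (θ : ℝ) : ℝ :=
  jg A B θ * (jC A B n * (jL A B θ * jS A B n (cos θ) - sin θ * jS1 A B n (cos θ)))

lemma cos_bds {θ : ℝ} (h : θ ∈ Ioo 0 π) : 0 < 1 - cos θ ∧ 0 < 1 + cos θ ∧ 0 < sin θ := by
  have hs := sin_pos_of_pos_of_lt_pi h.1 h.2
  have := sin_sq_add_cos_sq θ
  refine ⟨?_, ?_, hs⟩ <;> nlinarith [neg_one_le_cos θ, cos_le_one θ, sq_pos_of_pos hs]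

lemma jg_hasDerivAt (A B : ℝ) {θ : ℝ} (h : θ ∈ Ioo 0 π) :
    HasDerivAt (jg A B) (jg A B θ * jL A B θ) θ := by
  obtain ⟨h1, h2, h3⟩ := cos_bds h
  have c1 : HasDerivAt (fun θ : ℝ => 1 - cos θ) (sin θ) θ := by
    simpa using (hasDerivAt_cos θ).const_sub 1
  have c2 : HasDerivAt (fun θ : ℝ => 1 + cos θ) (-sin θ) θ := (hasDerivAt_cos θ).const_add 1
  have e1 := c1.rpow_const (p := A / 2 + 1 / 4) (Or.inl h1.ne')
  have e2 := c2.rpow_const (p := B / 2 + 1 / 4) (Or.inl h2.ne')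
  refine (e1.mul e2).congr_deriv ?_
  unfold jg jL
  rw [Real.rpow_sub_one h1.ne', Real.rpow_sub_one h2.ne']
  ring

lemma jL_hasDerivAt (A B : ℝ) {θ : ℝ} (h : θ ∈ Ioo 0 π) :
    HasDerivAt (jL A B) (-((A / 2 + 1 / 4) / (1 - cos θ)) - (B / 2 + 1 / 4) / (1 + cos θ)) θ := by
  obtain ⟨h1, h2, h3⟩ := cos_bds h
  have c1 : HasDerivAt (fun θ : ℝ => 1 - cos θ) (sin θ) θ := by
    simpa using (hasDerivAt_cos θ).const_sub 1
  have c2 : HasDerivAt (fun θ : ℝ => 1 + cos θ) (-sin θ) θ := (hasDerivAt_cos θ).const_add 1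
  have e1 := ((hasDerivAt_sin θ).div c1 h1.ne').const_mul (A / 2 + 1 / 4)
  have e2 := ((hasDerivAt_sin θ).div c2 h2.ne').const_mul (B / 2 + 1 / 4)
  refine (e1.sub e2).congr_deriv ?_
  have hs := sin_sq_add_cos_sq θ
  have f1 : (cos θ * (1 - cos θ) - sin θ * sin θ) / (1 - cos θ) ^ 2 = -(1 / (1 - cos θ)) := by
    field_simp
    linear_combination -hs
  have f2 : (cos θ * (1 + cos θ) - sin θ * -sin θ) / (1 + cos θ) ^ 2 = 1 / (1 + cos θ) := by
    field_simp
    linear_combination hs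
  rw [f1, f2]; ring

lemma jv_hasDerivAt (A B : ℝ) (n : ℕ) {θ : ℝ} (h : θ ∈ Ioo 0 π) :
    HasDerivAt (jv A B n) (jv1 A B n θ) θ := by
  have e1 := (jS_hasDerivAt A B n (cos θ)).comp θ (hasDerivAt_cos θ)
  refine ((jg_hasDerivAt A B h).mul (e1.const_mul (jC A B n))).congr_deriv ?_
  unfold jv1
  simp only [Function.comp]
  ring

lemma jv1_hasDerivAt (A B : ℝ) (hA : 0 ≤ A) (hB : 0 ≤ B) (n : ℕ) {θ : ℝ} (h : θ ∈ Ioo 0 π) :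
    HasDerivAt (jv1 A B n) (-(QQ (n + (A + B + 1) / 2) (A ^ 2 - 1 / 4) (B ^ 2 - 1 / 4) θ) * jv A B n θ) θ := by
  have e0 := (jS_hasDerivAt A B n (cos θ)).comp θ (hasDerivAt_cos θ)
  have e1 := (jS1_hasDerivAt A B n (cos θ)).comp θ (hasDerivAt_cos θ)
  refine ((jg_hasDerivAt A B h).mul ((((jL_hasDerivAt A B h).mul e0).sub
    ((hasDerivAt_sin θ).mul e1)).const_mul (jC A B n))).congr_deriv ?_
  obtain ⟨h1, h2, h3⟩ := cos_bds h
  have hs := sin_sq_add_cos_sq θ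
  have ode := jS_ode A B hA hB n (cos θ)
  simp only [Function.comp, Pi.mul_apply, Pi.sub_apply]
  unfold jv QQ
  have hL1 : sin θ * jL A B θ = (A / 2 + 1 / 4) * (1 + cos θ) - (B / 2 + 1 / 4) * (1 - cos θ) := by
    unfold jL
    field_simp
    linear_combination 2 * ((A * 2 + 1) * (1 + cos θ) - (1 - cos θ) * (B * 2 + 1)) * hs
  have hL2 : jL A B θ ^ 2 -((A / 2 + 1 / 4) / (1 - cos θ)) - (B / 2 + 1 / 4) / (1 + cos θ)
      = (A ^ 2 - 1 / 4) / (2 * (1 - cos θ)) + (B ^ 2 - 1 / 4) / (2 * (1 + cos θ)) - ((A + B + 1) / 2) ^ 2 := by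
    unfold jL
    have hs2 : sin θ ^ 2 = (1 - cos θ) * (1 + cos θ) := by linear_combination hs
    have : ((A / 2 + 1 / 4) * (sin θ / (1 - cos θ)) - (B / 2 + 1 / 4) * (sin θ / (1 + cos θ))) ^ 2
      = sin θ ^ 2 * ((A / 2 + 1 / 4) / (1 - cos θ) - (B / 2 + 1 / 4) / (1 + cos θ)) ^ 2 := by ring
    rw [this, hs2]
    field_simp
    ring
  generalize jL A B θ = L at *
  generalize jS A B n (cos θ) = s0 at *
  generalize jS1 A B n (cos θ) = s1 at *
  generalize jS2 A B n (cos θ) = s2 at *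
  linear_combination (jg A B θ * jC A B n) * (ode + s2 * hs - 2 * s1 * hL1 + s0 * hL2)

lemma jv_sq (A B : ℝ) (n : ℕ) {θ : ℝ} :
    jv A B n θ ^ 2 = (1 - cos θ) ^ (A + 1 / 2) * (1 + cos θ) ^ (B + 1 / 2) * (jC A B n * jS A B n (cos θ)) ^ 2 := by
  have h1 : 0 ≤ 1 - cos θ := by linarith [cos_le_one θ]
  have h2 : 0 ≤ 1 + cos θ := by linarith [neg_one_le_cos θ]
  unfold jv jg
  rw [mul_pow, mul_pow, ← Real.rpow_mul_natCast h1, ← Real.rpow_mul_natCast h2]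
  congr 3 <;> push_cast <;> ring_nf

lemma jv_cont (A B : ℝ) (hA : 0 ≤ A) (hB : 0 ≤ B) (n : ℕ) : Continuous (jv A B n) := by
  unfold jv jg
  have h1 : Continuous (fun x : ℝ => (1 - cos x) ^ (A / 2 + 1 / 4)) :=
    (continuous_const.sub continuous_cos).rpow_const (fun x => Or.inr (by positivity))
  have h2 : Continuous (fun x : ℝ => (1 + cos x) ^ (B / 2 + 1 / 4)) :=
    (continuous_const.add continuous_cos).rpow_const (fun x => Or.inr (by positivity))
  exact (h1.mul h2).mul (continuous_const.mul ((jS_cont A B n).comp continuous_cos))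

lemma jv_JV (A B : ℝ) (hA : 1 ≤ A) (hB : 1 ≤ B) (n : ℕ) :
    JV (n + (A + B + 1) / 2) (A ^ 2 - 1 / 4) (B ^ 2 - 1 / 4) (jv A B n) (jv1 A B n) where
  cont := (jv_cont A B (by linarith) (by linarith) n).continuousOn
  d1 := fun θ h => jv_hasDerivAt A B n h
  d2 := fun θ h => jv1_hasDerivAt A B (by linarith) (by linarith) n h
  v0 := by
    unfold jv jg; simp
    left; left; exact Real.zero_rpow (by positivity)
  vpi := by
    unfold jv jg; simp
    left; right; exact Real.zero_rpow (by positivity)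
  int := by
    apply le_of_eq
    have hn := jS_norm n A B (by linarith) (by linarith)
    rw [← hn]
    have hc : Continuous (fun x => jC A B n ^ 2 * (jS A B n x ^ 2 * ((1 - x) ^ A * (1 + x) ^ B))) :=
      continuous_const.mul (((jS_cont A B n).pow 2).mul (w_cont A B (by linarith) (by linarith)))
    have hsub := intervalIntegral.integral_comp_mul_deriv (a := 0) (b := π) (f := cos)
      (f' := fun θ => -sin θ) (g := fun x => jC A B n ^ 2 * (jS A B n x ^ 2 * ((1 - x) ^ A * (1 + x) ^ B)))
      (fun x _ => hasDerivAt_cos x) (continuous_sin.neg.continuousOn) hc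
    rw [cos_zero, cos_pi, intervalIntegral.integral_symm (-1) 1, intervalIntegral.integral_const_mul] at hsub
    rw [← neg_eq_iff_eq_neg] at hsub
    rw [← hsub, ← intervalIntegral.integral_neg]
    apply intervalIntegral.integral_congr
    intro θ hθ
    rw [Set.uIcc_of_le pi_pos.le] at hθ
    have h1 : 0 ≤ 1 - cos θ := by linarith [cos_le_one θ]
    have h2 : 0 ≤ 1 + cos θ := by linarith [neg_one_le_cos θ]
    have hs : sin θ = (1 - cos θ) ^ (1 / 2 : ℝ) * (1 + cos θ) ^ (1 / 2 : ℝ) := by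
      rw [← Real.mul_rpow h1 h2, ← Real.sqrt_eq_rpow, show (1 - cos θ) * (1 + cos θ) = sin θ ^ 2 by
        linear_combination -(sin_sq_add_cos_sq θ), Real.sqrt_sq (sin_nonneg_of_nonneg_of_le_pi hθ.1 hθ.2)]
    simp only [Function.comp]
    rw [jv_sq, Real.rpow_add_of_nonneg h1 (by linarith) (by norm_num),
      Real.rpow_add_of_nonneg h2 (by linarith) (by norm_num), hs]
    ring
  lim0 := by
    have h1 : Continuous (fun x : ℝ => (1 - cos x) ^ (A - 1 / 2)) :=
      (continuous_const.sub continuous_cos).rpow_const (fun x => Or.inr (by linarith))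
    have h2 : Continuous (fun x : ℝ => (1 + cos x) ^ (B + 1 / 2)) :=
      (continuous_const.add continuous_cos).rpow_const (fun x => Or.inr (by positivity))
    have h3 : Continuous (fun x : ℝ => (1 - cos x) ^ (A - 1 / 2) * (1 + cos x) ^ (B + 1 / 2) *
      (jC A B n * jS A B n (cos x)) ^ 2) :=
      (h1.mul h2).mul ((continuous_const.mul ((jS_cont A B n).comp continuous_cos)).pow 2)
    have h4 := h3.tendsto 0
    simp only [cos_zero, sub_self, Real.zero_rpow (show A - 1 / 2 ≠ 0 by linarith), zero_mul] at h4
    refine (h4.mono_left nhdsWithin_le_nhds).congr' ?_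
    filter_upwards [Ioo_mem_nhdsGT pi_pos] with θ hθ
    obtain ⟨g1, g2, g3⟩ := cos_bds hθ
    rw [jv_sq, show A + 1 / 2 = (A - 1 / 2) + 1 by ring, Real.rpow_add_one g1.ne']
    field_simp
  limpi := by
    have h1 : Continuous (fun x : ℝ => (1 - cos x) ^ (A + 1 / 2)) :=
      (continuous_const.sub continuous_cos).rpow_const (fun x => Or.inr (by linarith))
    have h2 : Continuous (fun x : ℝ => (1 + cos x) ^ (B - 1 / 2)) :=
      (continuous_const.add continuous_cos).rpow_const (fun x => Or.inr (by linarith))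
    have h3 : Continuous (fun x : ℝ => (1 - cos x) ^ (A + 1 / 2) * (1 + cos x) ^ (B - 1 / 2) *
      (jC A B n * jS A B n (cos x)) ^ 2) :=
      (h1.mul h2).mul ((continuous_const.mul ((jS_cont A B n).comp continuous_cos)).pow 2)
    have h4 := h3.tendsto π
    simp only [cos_pi, add_neg_cancel, Real.zero_rpow (show B - 1 / 2 ≠ 0 by linarith), zero_mul,
      mul_zero] at h4
    refine (h4.mono_left nhdsWithin_le_nhds).congr' ?_
    filter_upwards [Ioo_mem_nhdsLT pi_pos] with θ hθ
    obtain ⟨g1, g2, g3⟩ := cos_bds hθ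
    rw [jv_sq, show B + 1 / 2 = (B - 1 / 2) + 1 by ring, Real.rpow_add_one g2.ne']
    field_simp

/-! ### Part D1: derivatives of the potential; crude maximum bound -/
open Filter Topology

def Q1 (m1 m2 θ : ℝ) : ℝ := m1 * (sin θ / (2 * (1 - cos θ) ^ 2)) - m2 * (sin θ / (2 * (1 + cos θ) ^ 2))
def Q2 (m1 m2 θ : ℝ) : ℝ :=
  -(m1 * ((2 + cos θ) / (2 * (1 - cos θ) ^ 2))) - m2 * ((2 - cos θ) / (2 * (1 + cos θ) ^ 2))
def Q3 (m1 m2 θ : ℝ) : ℝ :=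
  m1 * (sin θ * (5 + cos θ) / (2 * (1 - cos θ) ^ 3)) - m2 * (sin θ * (5 - cos θ) / (2 * (1 + cos θ) ^ 3))

lemma QQ_hasDerivAt (N m1 m2 : ℝ) {θ : ℝ} (h : θ ∈ Ioo 0 π) :
    HasDerivAt (QQ N m1 m2) (Q1 m1 m2 θ) θ := by
  obtain ⟨h1, h2, h3⟩ := cos_bds h
  have c1 : HasDerivAt (fun θ : ℝ => 2 * (1 - cos θ)) (2 * (- -sin θ)) θ :=
    ((hasDerivAt_cos θ).const_sub 1).const_mul 2
  have c2 : HasDerivAt (fun θ : ℝ => 2 * (1 + cos θ)) (2 * (-sin θ)) θ :=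
    ((hasDerivAt_cos θ).const_add 1).const_mul 2
  refine ((((hasDerivAt_const θ m1).div c1 (by positivity)).const_sub (N ^ 2)).sub
    ((hasDerivAt_const θ m2).div c2 (by positivity))).congr_deriv ?_
  unfold Q1
  field_simp
  ring

lemma Q1_hasDerivAt (m1 m2 : ℝ) {θ : ℝ} (h : θ ∈ Ioo 0 π) :
    HasDerivAt (Q1 m1 m2) (Q2 m1 m2 θ) θ := by
  obtain ⟨h1, h2, h3⟩ := cos_bds h
  have c1 : HasDerivAt (fun θ : ℝ => 2 * (1 - cos θ) ^ 2) (2 * (((2 : ℕ) : ℝ) * (1 - cos θ) ^ (2 - 1) * (- -sin θ))) θ :=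
    (((hasDerivAt_cos θ).const_sub 1).pow 2).const_mul 2
  have c2 : HasDerivAt (fun θ : ℝ => 2 * (1 + cos θ) ^ 2) (2 * (((2 : ℕ) : ℝ) * (1 + cos θ) ^ (2 - 1) * (-sin θ))) θ :=
    (((hasDerivAt_cos θ).const_add 1).pow 2).const_mul 2
  refine (((((hasDerivAt_sin θ).div c1 (by positivity)).const_mul m1)).sub
    (((hasDerivAt_sin θ).div c2 (by positivity)).const_mul m2)).congr_deriv ?_
  unfold Q2
  have hs := sin_sq_add_cos_sq θ
  rw [sub_eq_add_neg, sub_eq_add_neg, ← mul_neg, ← mul_neg]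
  congr 2
  · field_simp
    push_cast
    linear_combination (-2 * m1 * (1 - cos θ)) * hs
  · field_simp
    push_cast
    linear_combination (2 * m2 * (1 + cos θ)) * hs

lemma Q2_hasDerivAt (m1 m2 : ℝ) {θ : ℝ} (h : θ ∈ Ioo 0 π) :
    HasDerivAt (Q2 m1 m2) (Q3 m1 m2 θ) θ := by
  obtain ⟨h1, h2, h3⟩ := cos_bds h
  have c1 : HasDerivAt (fun θ : ℝ => 2 * (1 - cos θ) ^ 2) (2 * (((2 : ℕ) : ℝ) * (1 - cos θ) ^ (2 - 1) * (- -sin θ))) θ :=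
    (((hasDerivAt_cos θ).const_sub 1).pow 2).const_mul 2
  have c2 : HasDerivAt (fun θ : ℝ => 2 * (1 + cos θ) ^ 2) (2 * (((2 : ℕ) : ℝ) * (1 + cos θ) ^ (2 - 1) * (-sin θ))) θ :=
    (((hasDerivAt_cos θ).const_add 1).pow 2).const_mul 2
  refine ((((((hasDerivAt_cos θ).const_add 2).div c1 (by positivity)).const_mul m1)).neg.sub
    ((((hasDerivAt_cos θ).const_sub 2).div c2 (by positivity)).const_mul m2)).congr_deriv ?_
  unfold Q3
  rw [sub_eq_add_neg, sub_eq_add_neg, ← mul_neg, ← mul_neg, ← mul_neg]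
  congr 2
  · field_simp
    push_cast
    ring
  · field_simp
    push_cast
    ring

lemma QQ_le (N m1 m2 : ℝ) (hm1 : 0 ≤ m1) (hm2 : 0 ≤ m2) (θ : ℝ) : QQ N m1 m2 θ ≤ N ^ 2 := by
  have h1 : 0 ≤ 1 - cos θ := by linarith [cos_le_one θ]
  have h2 : 0 ≤ 1 + cos θ := by linarith [neg_one_le_cos θ]
  unfold QQ
  have : 0 ≤ m1 / (2 * (1 - cos θ)) := by positivity
  have : 0 ≤ m2 / (2 * (1 + cos θ)) := by positivity
  linarith

lemma Q2_nonpos (m1 m2 : ℝ) (hm1 : 0 ≤ m1) (hm2 : 0 ≤ m2) (θ : ℝ) : Q2 m1 m2 θ ≤ 0 := by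
  unfold Q2
  have h1 : 0 ≤ 2 + cos θ := by linarith [neg_one_le_cos θ]
  have h2 : 0 ≤ 2 - cos θ := by linarith [cos_le_one θ]
  have : 0 ≤ (m1 * ((2 + cos θ) / (2 * (1 - cos θ) ^ 2))) := by positivity
  have : 0 ≤ m2 * ((2 - cos θ) / (2 * (1 + cos θ) ^ 2)) := by positivity
  linarith

/-- monotonicity helpers -/
lemma mono_of_deriv {f f' : ℝ → ℝ} {a b : ℝ} (hab : a ≤ b) (hd : ∀ x ∈ Icc a b, HasDerivAt f (f' x) x)
    (hf : ∀ x ∈ Icc a b, 0 ≤ f' x) : f a ≤ f b := by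
  have : MonotoneOn f (Icc a b) := by
    apply monotoneOn_of_hasDerivWithinAt_nonneg (convex_Icc a b)
    · exact fun t ht => (hd t ht).continuousAt.continuousWithinAt
    · intro t ht; exact (hd t (interior_subset ht)).hasDerivWithinAt
    · intro t ht; exact hf t (interior_subset ht)
  exact this (left_mem_Icc.mpr hab) (right_mem_Icc.mpr hab) hab

lemma Q1_anti {m1 m2 x y : ℝ} (hm1 : 0 ≤ m1) (hm2 : 0 ≤ m2) (hx : 0 < x) (hxy : x ≤ y) (hy : y < π) :
    Q1 m1 m2 y ≤ Q1 m1 m2 x := by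
  have := mono_of_deriv (f := fun t => -Q1 m1 m2 t) (f' := fun t => -Q2 m1 m2 t) hxy
    (fun t ht => (Q1_hasDerivAt m1 m2 ⟨by linarith [ht.1], by linarith [ht.2]⟩).neg)
    (fun t _ => by linarith [Q2_nonpos m1 m2 hm1 hm2 t])
  simpa using this

lemma JV.sq_deriv {N m1 m2 : ℝ} {v v1 : ℝ → ℝ} (h : JV N m1 m2 v v1) {θ : ℝ} (hθ : θ ∈ Ioo 0 π) :
    HasDerivAt (fun t => v t ^ 2) (2 * v θ * v1 θ) θ := by
  refine ((h.d1 θ hθ).pow 2).congr_deriv ?_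
  push_cast; ring

lemma JV.vv_deriv {N m1 m2 : ℝ} {v v1 : ℝ → ℝ} (h : JV N m1 m2 v v1) {θ : ℝ} (hθ : θ ∈ Ioo 0 π) :
    HasDerivAt (fun t => v t * v1 t) (v1 θ ^ 2 - QQ N m1 m2 θ * v θ ^ 2) θ := by
  refine ((h.d1 θ hθ).mul (h.d2 θ hθ)).congr_deriv ?_
  ring

lemma JV.taylor {N m1 m2 : ℝ} {v v1 : ℝ → ℝ} (h : JV N m1 m2 v v1) {s x K : ℝ} (hs : s ∈ Ioo 0 π)
    (hx : x ∈ Ioo 0 π) (hs1 : v1 s = 0) (hK : ∀ t ∈ uIcc s x, QQ N m1 m2 t * v t ^ 2 ≤ K) :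
    v s ^ 2 - K * (x - s) ^ 2 ≤ v x ^ 2 := by
  have dw : ∀ t ∈ Ioo 0 π, HasDerivAt (fun t => v t ^ 2 + K * (t - s) ^ 2)
      (2 * (v t * v1 t + K * (t - s))) t := by
    intro t ht
    have e : HasDerivAt (fun t => K * (t - s) ^ 2) (K * (((2 : ℕ) : ℝ) * (t - s) ^ (2 - 1) * 1)) t :=
      (((hasDerivAt_id t).sub_const s).pow 2).const_mul K
    refine ((h.sq_deriv ht).add e).congr_deriv ?_
    push_cast; ring
  have dw1 : ∀ t ∈ Ioo 0 π, HasDerivAt (fun t => v t * v1 t + K * (t - s))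
      (v1 t ^ 2 - QQ N m1 m2 t * v t ^ 2 + K * 1) t := by
    intro t ht
    exact (h.vv_deriv ht).add (((hasDerivAt_id t).sub_const s).const_mul K)
  rcases le_total s x with hsx | hsx
  · rw [uIcc_of_le hsx] at hK
    have h1 : ∀ y ∈ Icc s x, 0 ≤ v y * v1 y + K * (y - s) := by
      intro y hy
      have := mono_of_deriv hy.1
        (fun t ht => dw1 t ⟨by linarith [ht.1, hs.1], by linarith [ht.2, hy.2, hx.2]⟩)
        (fun t ht => by nlinarith [hK t ⟨ht.1, ht.2.trans hy.2⟩, sq_nonneg (v1 t)])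
      simpa [hs1] using this
    have h2 := mono_of_deriv hsx
        (fun t ht => dw t ⟨by linarith [ht.1, hs.1], by linarith [ht.2, hx.2]⟩)
        (fun t ht => by linarith [h1 t ht])
    simp at h2; linarith
  · rw [uIcc_of_ge hsx] at hK
    have h1 : ∀ y ∈ Icc x s, v y * v1 y + K * (y - s) ≤ 0 := by
      intro y hy
      have := mono_of_deriv hy.2
        (fun t ht => dw1 t ⟨by linarith [ht.1, hy.1, hx.1], by linarith [ht.2, hs.2]⟩)
        (fun t ht => by nlinarith [hK t ⟨hy.1.trans ht.1, ht.2⟩, sq_nonneg (v1 t)])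
      simpa [hs1] using this
    have h2 := mono_of_deriv hsx (f := fun t => -(v t ^ 2 + K * (t - s) ^ 2))
        (fun t ht => (dw t ⟨by linarith [ht.1, hx.1], by linarith [ht.2, hs.2]⟩).neg)
        (fun t ht => by linarith [h1 t ht])
    simp at h2; linarith

/-- an interior critical point where `v²` is maximal -/
structure IsMx (v v1 : ℝ → ℝ) (s : ℝ) : Prop where
  mem : s ∈ Ioo 0 π
  crit : v1 s = 0
  pos : 0 < v s ^ 2
  le : ∀ t ∈ Icc 0 π, v t ^ 2 ≤ v s ^ 2

lemma JV.exists_max {N m1 m2 : ℝ} {v v1 : ℝ → ℝ} (h : JV N m1 m2 v v1) :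
    (∀ t ∈ Icc 0 π, v t ^ 2 = 0) ∨ ∃ s, IsMx v v1 s := by
  obtain ⟨s, hs, hmax⟩ := isCompact_Icc.exists_isMaxOn (nonempty_Icc.mpr pi_pos.le) (h.cont.pow 2)
  have hle : ∀ t ∈ Icc 0 π, v t ^ 2 ≤ v s ^ 2 := fun t ht => hmax ht
  rcases (sq_nonneg (v s)).eq_or_lt with h0 | h0
  · left; intro t ht
    have := hle t ht
    exact le_antisymm (by rw [← h0] at this; exact this) (sq_nonneg _)
  · right
    have hvs : v s ≠ 0 := by intro h'; rw [h'] at h0; norm_num at h0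
    have hs1 : s ≠ 0 := by intro h'; rw [h'] at hvs; exact hvs h.v0
    have hs2 : s ≠ π := by intro h'; rw [h'] at hvs; exact hvs h.vpi
    have hsI : s ∈ Ioo 0 π := ⟨lt_of_le_of_ne hs.1 (Ne.symm hs1), lt_of_le_of_ne hs.2 hs2⟩
    refine ⟨s, hsI, ?_, h0, hle⟩
    have hl : IsLocalMax (fun t => v t ^ 2) s := by
      filter_upwards [Icc_mem_nhds hsI.1 hsI.2] with t ht using hle t ht
    have := hl.hasDerivAt_eq_zero (h.sq_deriv hsI)
    have h2 : (2 * v s) ≠ 0 := mul_ne_zero two_ne_zero hvs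
    exact (mul_eq_zero.mp this).resolve_left h2

lemma IsMx.reflect {v v1 : ℝ → ℝ} {s : ℝ} (h : IsMx v v1 s) :
    IsMx (fun θ => v (π - θ)) (fun θ => -v1 (π - θ)) (π - s) where
  mem := ⟨by linarith [h.mem.2], by linarith [h.mem.1]⟩
  crit := by simp [h.crit]
  pos := by simpa using h.pos
  le := fun t ht => by simpa using h.le (π - t) ⟨by linarith [ht.2], by linarith [ht.1]⟩

lemma JV.sq_int {N m1 m2 : ℝ} {v v1 : ℝ → ℝ} (h : JV N m1 m2 v v1) {a b : ℝ} (ha : 0 ≤ a) (hab : a ≤ b)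
    (hb : b ≤ π) : IntervalIntegrable (fun t => v t ^ 2) volume a b ∧ ∫ t in a..b, v t ^ 2 ≤ 1 := by
  have hi : IntervalIntegrable (fun t => v t ^ 2) volume 0 π := by
    apply ContinuousOn.intervalIntegrable
    rw [uIcc_of_le pi_pos.le]
    exact h.cont.pow 2
  refine ⟨hi.mono_set ?_, le_trans ?_ h.int⟩
  · rw [uIcc_of_le hab, uIcc_of_le pi_pos.le]; exact Icc_subset_Icc ha hb
  · exact intervalIntegral.integral_mono_interval ha hab hb (Eventually.of_forall fun t => sq_nonneg _) hi

lemma JV.crude_half {N m1 m2 : ℝ} {v v1 : ℝ → ℝ} (h : JV N m1 m2 v v1) (hN : 1 ≤ N) (hm1 : 0 ≤ m1)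
    (hm2 : 0 ≤ m2) {s : ℝ} (hs : IsMx v v1 s) (hs2 : s ≤ π / 2) : v s ^ 2 ≤ 3 / 2 * N := by
  have hN0 : 0 < N := by linarith
  have hNi : 1 / N ≤ 1 := by rw [div_le_one hN0]; exact hN
  have hNp : 0 < 1 / N := by positivity
  have hp := pi_gt_three
  have hsm := hs.mem
  obtain ⟨hi, hle⟩ := h.sq_int (a := s) (b := s + 1 / N) hsm.1.le (by linarith) (by linarith)
  have hlow : ∀ x ∈ Icc s (s + 1 / N), v s ^ 2 - N ^ 2 * v s ^ 2 * (x - s) ^ 2 ≤ v x ^ 2 := by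
    intro x hx
    apply h.taylor hsm ⟨by linarith [hx.1, hsm.1], by linarith [hx.2]⟩ hs.crit
    intro t ht
    rw [uIcc_of_le hx.1] at ht
    have h1 := QQ_le N m1 m2 hm1 hm2 t
    have h2 := hs.le t ⟨by linarith [ht.1, hsm.1], by linarith [ht.2, hx.2]⟩
    calc QQ N m1 m2 t * v t ^ 2 ≤ N ^ 2 * v t ^ 2 := by gcongr
      _ ≤ N ^ 2 * v s ^ 2 := by gcongr
  have hc : Continuous (fun x => v s ^ 2 - N ^ 2 * v s ^ 2 * (x - s) ^ 2) := by fun_prop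
  have hmono := intervalIntegral.integral_mono_on (by linarith : s ≤ s + 1 / N) (hc.intervalIntegrable _ _) hi hlow
  have hcomp : ∫ x in s..(s + 1 / N), (v s ^ 2 - N ^ 2 * v s ^ 2 * (x - s) ^ 2) = v s ^ 2 * (2 / 3 * (1 / N)) := by
    rw [intervalIntegral.integral_comp_sub_right (fun y => v s ^ 2 - N ^ 2 * v s ^ 2 * y ^ 2) s]
    rw [intervalIntegral.integral_sub (continuous_const.intervalIntegrable _ _) ((by fun_prop : Continuous fun y : ℝ => N ^ 2 * v s ^ 2 * y ^ 2).intervalIntegrable _ _)]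
    rw [intervalIntegral.integral_const_mul, integral_pow, intervalIntegral.integral_const]
    simp
    field_simp
    ring
  rw [hcomp] at hmono
  have h5 : v s ^ 2 * (2 / 3 * (1 / N)) ≤ 1 := hmono.trans hle
  have h6 : v s ^ 2 * (2 / 3 * (1 / N)) = (2 / 3 * v s ^ 2) / N := by ring
  rw [h6, div_le_one hN0] at h5
  linarith

lemma JV.crude {N m1 m2 : ℝ} {v v1 : ℝ → ℝ} (h : JV N m1 m2 v v1) (hN : 1 ≤ N) (hm1 : 0 ≤ m1)
    (hm2 : 0 ≤ m2) {t : ℝ} (ht : t ∈ Icc 0 π) : v t ^ 2 ≤ 3 / 2 * N := by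
  rcases h.exists_max with h0 | ⟨s, hs⟩
  · rw [h0 t ht]; linarith
  · refine (hs.le t ht).trans ?_
    rcases le_total s (π / 2) with h2 | h2
    · exact h.crude_half hN hm1 hm2 hs h2
    · have := h.reflect.crude_half hN hm2 hm1 hs.reflect (by linarith)
      simpa using this

/-! ### Part D2: the window estimate -/
open Filter Topology

lemma cos_window {x : ℝ} (h1 : π / 3 ≤ x) (h2 : x ≤ 2 * π / 3) : -(1 / 2) ≤ cos x ∧ cos x ≤ 1 / 2 := by
  have hp := pi_pos
  constructor
  · have e : cos (2 * π / 3) = -(1 / 2) := by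
      rw [show 2 * π / 3 = π - π / 3 by ring, cos_pi_sub, cos_pi_div_three]
    rw [← e]
    exact cos_le_cos_of_nonneg_of_le_pi (by linarith) (by linarith) h2
  · rw [← cos_pi_div_three]
    exact cos_le_cos_of_nonneg_of_le_pi (by linarith) (by linarith) h1

lemma QQ_window {N m1 m2 D x : ℝ} (hm1 : 0 ≤ m1) (hm2 : 0 ≤ m2) (hD1 : m1 ≤ D) (hD2 : m2 ≤ D)
    (h1 : π / 3 ≤ x) (h2 : x ≤ 2 * π / 3) : N ^ 2 - 2 * D ≤ QQ N m1 m2 x ∧ |Q1 m1 m2 x| ≤ 2 * D := by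
  obtain ⟨c1, c2⟩ := cos_window h1 h2
  have hp := pi_pos
  have s0 : 0 ≤ sin x := sin_nonneg_of_nonneg_of_le_pi (by linarith) (by linarith)
  have s1 := sin_le_one x
  constructor
  · unfold QQ
    have e1 : m1 / (2 * (1 - cos x)) ≤ m1 / 1 := by gcongr; linarith
    have e2 : m2 / (2 * (1 + cos x)) ≤ m2 / 1 := by gcongr; linarith
    linarith
  · unfold Q1
    have f1 : sin x / (2 * (1 - cos x) ^ 2) ≤ 2 := by
      rw [div_le_iff₀ (by nlinarith)]; nlinarith
    have f2 : sin x / (2 * (1 + cos x) ^ 2) ≤ 2 := by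
      rw [div_le_iff₀ (by nlinarith)]; nlinarith
    have f3 : 0 ≤ sin x / (2 * (1 - cos x) ^ 2) := by positivity
    have f4 : 0 ≤ sin x / (2 * (1 + cos x) ^ 2) := by positivity
    have a1 : m1 * (sin x / (2 * (1 - cos x) ^ 2)) ≤ D * 2 := by gcongr; linarith
    have a2 : m2 * (sin x / (2 * (1 + cos x) ^ 2)) ≤ D * 2 := by gcongr; linarith
    have a3 : 0 ≤ m1 * (sin x / (2 * (1 - cos x) ^ 2)) := by positivity
    have a4 : 0 ≤ m2 * (sin x / (2 * (1 + cos x) ^ 2)) := by positivity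
    rw [abs_le]; constructor <;> linarith

lemma JV.S_deriv {N m1 m2 : ℝ} {v v1 : ℝ → ℝ} (h : JV N m1 m2 v v1) {θ : ℝ} (hθ : θ ∈ Ioo 0 π) :
    HasDerivAt (fun t => v1 t ^ 2 + QQ N m1 m2 t * v t ^ 2) (Q1 m1 m2 θ * v θ ^ 2) θ := by
  refine (((h.d2 θ hθ).pow 2).add ((QQ_hasDerivAt N m1 m2 hθ).mul (h.sq_deriv hθ))).congr_deriv ?_
  push_cast; ring

lemma JV.window {N m1 m2 D : ℝ} {v v1 : ℝ → ℝ} (h : JV N m1 m2 v v1) (hN : 1000 ≤ N) (hm1 : 0 ≤ m1)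
    (hm2 : 0 ≤ m2) (hD1 : m1 ≤ D) (hD2 : m2 ≤ D) (hDN : 1000000 * D ≤ N ^ 2) {x0 : ℝ} (hx0 : π / 3 ≤ x0)
    (hx1 : x0 ≤ π / 2) :
    (v1 x0 ^ 2 + QQ N m1 m2 x0 * v x0 ^ 2) * (2 * π / 3 - x0 - 1 / 100) ≤ 2 * N ^ 2 := by
  have hp := pi_gt_three
  have hp' := pi_lt_d2
  have hN2 : (1000000 : ℝ) ≤ N ^ 2 := by nlinarith
  set S : ℝ → ℝ := fun t => v1 t ^ 2 + QQ N m1 m2 t * v t ^ 2 with hS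
  have hQ : ∀ x, x0 ≤ x → x ≤ 2 * π / 3 → N ^ 2 - 2 * D ≤ QQ N m1 m2 x ∧ |Q1 m1 m2 x| ≤ 2 * D :=
    fun x a b => QQ_window hm1 hm2 hD1 hD2 (by linarith) b
  have hI : ∀ x, x0 ≤ x → x ≤ 2 * π / 3 → x ∈ Ioo 0 π := fun x a b => ⟨by linarith, by linarith⟩
  have hQ1 : ∀ x, x0 ≤ x → x ≤ 2 * π / 3 → |Q1 m1 m2 x * v x ^ 2| ≤ 3 / 1000000 * S x := by
    intro x a b
    obtain ⟨q1, q2⟩ := hQ x a b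
    rw [abs_mul, abs_of_nonneg (sq_nonneg (v x))]
    have : |Q1 m1 m2 x| ≤ 3 / 1000000 * QQ N m1 m2 x := by nlinarith
    have h2 := mul_le_mul_of_nonneg_right this (sq_nonneg (v x))
    simp only [hS]
    nlinarith [sq_nonneg (v1 x)]
  have hS0 : ∀ x, x0 ≤ x → x ≤ 2 * π / 3 → 0 ≤ S x := by
    intro x a b
    have := (abs_nonneg _).trans (hQ1 x a b)
    linarith
  have de : ∀ (k x : ℝ), HasDerivAt (fun x => exp (k * (x - x0))) (exp (k * (x - x0)) * (k * 1)) x := by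
    intro k x
    exact (((hasDerivAt_id x).sub_const x0).const_mul k).exp
  have hlow : ∀ x, x0 ≤ x → x ≤ 2 * π / 3 → S x0 * (1 - 1 / 10000) ≤ S x := by
    intro x a b
    have := mono_of_deriv (f := fun x => S x * exp (3 / 1000000 * (x - x0))) a
      (fun t ht => (h.S_deriv (hI t ht.1 (ht.2.trans b))).mul (de _ t)) (fun t ht => by
        have := (abs_le.mp (hQ1 t ht.1 (ht.2.trans b))).1
        have e := exp_pos (3 / 1000000 * (t - x0))
        have : 0 ≤ (Q1 m1 m2 t * v t ^ 2 + 3 / 1000000 * S t) * exp (3 / 1000000 * (t - x0)) :=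
          mul_nonneg (by linarith) e.le
        simp only [hS] at this
        linarith)
    simp only [sub_self, mul_zero, exp_zero, mul_one] at this
    have h3 : S x = S x * exp (3 / 1000000 * (x - x0)) * exp (-(3 / 1000000 * (x - x0))) := by
      rw [mul_assoc, ← exp_add]; simp
    have h4 : 1 - 1 / 10000 ≤ exp (-(3 / 1000000 * (x - x0))) := by
      have := add_one_le_exp (-(3 / 1000000 * (x - x0)))
      linarith
    rw [h3]
    have s0 := hS0 x0 le_rfl (by linarith)
    exact mul_le_mul this h4 (by norm_num) (s0.trans this)
  have hup : S (2 * π / 3) ≤ 2 * S x0 := by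
    have a : x0 ≤ 2 * π / 3 := by linarith
    have := mono_of_deriv (f := fun x => -(S x * exp ((-3 / 1000000) * (x - x0)))) a
      (fun t ht => ((h.S_deriv (hI t ht.1 ht.2)).mul (de _ t)).neg) (fun t ht => by
        have := (abs_le.mp (hQ1 t ht.1 ht.2)).2
        have e := exp_pos ((-3 / 1000000) * (t - x0))
        have : 0 ≤ (3 / 1000000 * S t - Q1 m1 m2 t * v t ^ 2) * exp ((-3 / 1000000) * (t - x0)) :=
          mul_nonneg (by linarith) e.le
        simp only [hS] at this
        linarith)
    simp only [sub_self, mul_zero, exp_zero, mul_one, neg_le_neg_iff] at this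
    have h4 : 1 / 2 ≤ exp ((-3 / 1000000) * (2 * π / 3 - x0)) := by
      have := add_one_le_exp ((-3 / 1000000) * (2 * π / 3 - x0))
      linarith
    have s0 := hS0 _ a le_rfl
    nlinarith
  have hvv : ∀ x, x0 ≤ x → x ≤ 2 * π / 3 → |v x * v1 x| ≤ S x / 1998 := by
    intro x a b
    have q1 : (999 : ℝ) ^ 2 ≤ QQ N m1 m2 x := by linarith [(hQ x a b).1]
    have h2 := mul_le_mul_of_nonneg_right q1 (sq_nonneg (v x))
    simp only [hS]
    rw [abs_le]
    constructor <;> nlinarith [sq_nonneg (v1 x - 999 * v x), sq_nonneg (v1 x + 999 * v x)]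
  have hab : x0 ≤ 2 * π / 3 := by linarith
  obtain ⟨hi, hle⟩ := h.sq_int (a := x0) (b := 2 * π / 3) (by linarith) hab (by linarith)
  have hv : ContinuousOn v (uIcc x0 (2 * π / 3)) := by
    rw [uIcc_of_le hab]
    exact fun t ht => (h.d1 t (hI t ht.1 ht.2)).continuousAt.continuousWithinAt
  have hv1 : ContinuousOn v1 (uIcc x0 (2 * π / 3)) := by
    rw [uIcc_of_le hab]
    exact fun t ht => (h.d2 t (hI t ht.1 ht.2)).continuousAt.continuousWithinAt
  have hQc : ContinuousOn (QQ N m1 m2) (uIcc x0 (2 * π / 3)) := by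
    rw [uIcc_of_le hab]
    exact fun t ht => (QQ_hasDerivAt N m1 m2 (hI t ht.1 ht.2)).continuousAt.continuousWithinAt
  have hHi : IntervalIntegrable (fun t => v1 t ^ 2 - QQ N m1 m2 t * v t ^ 2) volume x0 (2 * π / 3) :=
    ((hv1.pow 2).sub (hQc.mul (hv.pow 2))).intervalIntegrable
  have hFTC : ∫ t in x0..(2 * π / 3), (v1 t ^ 2 - QQ N m1 m2 t * v t ^ 2) =
      v (2 * π / 3) * v1 (2 * π / 3) - v x0 * v1 x0 := by
    apply intervalIntegral.integral_eq_sub_of_hasDerivAt (f := fun t => v t * v1 t)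
    · intro t ht
      rw [uIcc_of_le hab] at ht
      exact h.vv_deriv (hI t ht.1 ht.2)
    · exact hHi
  have hmono : ∫ t in x0..(2 * π / 3), S x0 * (1 - 1 / 10000) ≤
      ∫ t in x0..(2 * π / 3), ((v1 t ^ 2 - QQ N m1 m2 t * v t ^ 2) + 2 * N ^ 2 * v t ^ 2) := by
    apply intervalIntegral.integral_mono_on hab (continuous_const.intervalIntegrable _ _)
      (hHi.add (hi.const_mul (2 * N ^ 2)))
    intro t ht
    have h1 := hlow t ht.1 ht.2
    have h2 := mul_le_mul_of_nonneg_right (QQ_le N m1 m2 hm1 hm2 t) (sq_nonneg (v t))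
    simp only [hS] at h1 ⊢
    linarith
  rw [intervalIntegral.integral_add hHi (hi.const_mul (2 * N ^ 2)), hFTC, intervalIntegral.integral_const,
    smul_eq_mul, intervalIntegral.integral_const_mul] at hmono
  have b1 := (abs_le.mp (hvv x0 le_rfl hab)).1
  have b2 := (abs_le.mp (hvv _ hab le_rfl)).2
  have s0 := hS0 x0 le_rfl hab
  have b3 : 2 * N ^ 2 * ∫ t in x0..(2 * π / 3), v t ^ 2 ≤ 2 * N ^ 2 * 1 := by gcongr
  have e0 : v1 x0 ^ 2 + QQ N m1 m2 x0 * v x0 ^ 2 = S x0 := rfl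
  rw [e0]
  have b4 : 0 ≤ S x0 * (109 / 100 - (2 * π / 3 - x0)) := mul_nonneg s0 (by linarith)
  nlinarith

/-! ### Part D3: lower bound for the potential at the maximum -/
open Filter Topology

lemma JV.S_nonneg {N m1 m2 : ℝ} {v v1 : ℝ → ℝ} (h : JV N m1 m2 v v1) (hm1 : 0 ≤ m1) (hm2 : 0 ≤ m2)
    {x : ℝ} (hx : x ∈ Ioo 0 π) (hq : 0 ≤ Q1 m1 m2 x) : 0 ≤ v1 x ^ 2 + QQ N m1 m2 x * v x ^ 2 := by
  have hl : Tendsto (fun t => -((m1 + m2) / 2) * (v t ^ 2 / (1 - cos t))) (𝓝[>] 0) (𝓝 0) := by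
    simpa using h.lim0.const_mul (-((m1 + m2) / 2))
  apply le_of_tendsto hl
  have hp := pi_pos
  have hpos : 0 < min x (π / 2) := lt_min hx.1 (by linarith)
  filter_upwards [Ioo_mem_nhdsGT hpos] with t ht
  have t1 : t < x := lt_of_lt_of_le ht.2 (min_le_left _ _)
  have t2 : t < π / 2 := lt_of_lt_of_le ht.2 (min_le_right _ _)
  have htI : t ∈ Ioo 0 π := ⟨ht.1, by linarith⟩
  obtain ⟨c1, c2, c3⟩ := cos_bds htI
  have c4 : 0 ≤ cos t := cos_nonneg_of_neg_pi_div_two_le_of_le (by linarith [ht.1]) t2.le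
  have hS := mono_of_deriv t1.le (fun y hy => h.S_deriv (θ := y) ⟨by linarith [hy.1, ht.1], by linarith [hy.2, hx.2]⟩)
    (fun y hy => by
      have := Q1_anti hm1 hm2 (by linarith [hy.1, ht.1]) hy.2 hx.2
      exact mul_nonneg (hq.trans this) (sq_nonneg _))
  refine le_trans ?_ hS
  have e1 : m2 / (2 * (1 + cos t)) ≤ m2 / (2 * (1 - cos t)) := by gcongr; linarith
  have e2 : -((m1 + m2) / 2) * (v t ^ 2 / (1 - cos t)) =
      (-(m1 / (2 * (1 - cos t))) - m2 / (2 * (1 - cos t))) * v t ^ 2 := by field_simp; ring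
  rw [e2]
  have e3 : -(m1 / (2 * (1 - cos t))) - m2 / (2 * (1 - cos t)) ≤ QQ N m1 m2 t := by
    unfold QQ; nlinarith [sq_nonneg N]
  have := mul_le_mul_of_nonneg_right e3 (sq_nonneg (v t))
  nlinarith [sq_nonneg (v1 t)]

lemma JV.gain {N m1 m2 : ℝ} {v v1 : ℝ → ℝ} (h : JV N m1 m2 v v1) (hm1 : 0 ≤ m1) (hm2 : 0 ≤ m2)
    {s x0 : ℝ} (hs : IsMx v v1 s) (hx0 : 0 < x0) (hxs : x0 ≤ s) (hq : 0 ≤ Q1 m1 m2 s)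
    (hτ : QQ N m1 m2 s * (s - x0) ^ 2 ≤ 1) :
    0 ≤ QQ N m1 m2 s ∧ 2 / 3 * Q1 m1 m2 s * (s - x0) ≤ QQ N m1 m2 s := by
  have hsm := hs.mem
  have hS := h.S_nonneg hm1 hm2 hsm hq
  rw [hs.crit] at hS
  have hQ0 : 0 ≤ QQ N m1 m2 s := by
    by_contra hc
    push Not at hc
    nlinarith [mul_neg_of_neg_of_pos hc hs.pos]
  refine ⟨hQ0, ?_⟩
  have hI : ∀ t, x0 ≤ t → t ≤ s → t ∈ Ioo 0 π := fun t a b => ⟨by linarith, by linarith [hsm.2]⟩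
  have hq1 : ∀ t, x0 ≤ t → t ≤ s → Q1 m1 m2 s ≤ Q1 m1 m2 t := fun t a b =>
    Q1_anti hm1 hm2 (by linarith) b hsm.2
  have hQle : ∀ t, x0 ≤ t → t ≤ s → QQ N m1 m2 t ≤ QQ N m1 m2 s := fun t a b =>
    mono_of_deriv b (fun y hy => QQ_hasDerivAt N m1 m2 (hI y (a.trans hy.1) hy.2))
      (fun y hy => hq.trans (hq1 y (a.trans hy.1) hy.2))
  set Qs := QQ N m1 m2 s with hQs
  set σ := Q1 m1 m2 s with hσ
  set M := v s ^ 2 with hM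
  have hMp : 0 < M := hs.pos
  have hlow : ∀ t, x0 ≤ t → t ≤ s → M - Qs * M * (t - s) ^ 2 ≤ v t ^ 2 := by
    intro t a b
    apply h.taylor hsm (hI t a b) hs.crit
    intro y hy
    rw [uIcc_of_ge b] at hy
    have h1 := hQle y (a.trans hy.1) hy.2
    have h2 := hs.le y ⟨(hI y (a.trans hy.1) hy.2).1.le, (hI y (a.trans hy.1) hy.2).2.le⟩
    calc QQ N m1 m2 y * v y ^ 2 ≤ Qs * v y ^ 2 := by gcongr
      _ ≤ Qs * M := by gcongr
  have hW := mono_of_deriv (f := fun t => (v1 t ^ 2 + QQ N m1 m2 t * v t ^ 2) -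
      σ * M * ((t - s) - Qs / 3 * (t - s) ^ 3))
    (f' := fun t => Q1 m1 m2 t * v t ^ 2 - σ * M * (1 - Qs * (t - s) ^ 2)) hxs
    (fun t ht => by
      have e0 : HasDerivAt (fun t : ℝ => t - s) 1 t := (hasDerivAt_id t).sub_const s
      refine ((h.S_deriv (hI t ht.1 ht.2)).sub ((e0.sub ((e0.pow 3).const_mul (Qs / 3))).const_mul (σ * M))).congr_deriv ?_
      push_cast; ring)
    (fun t ht => by
      have h1 := hlow t ht.1 ht.2
      have h2 := mul_le_mul_of_nonneg_left h1 hq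
      have h3 := mul_le_mul_of_nonneg_right (hq1 t ht.1 ht.2) (sq_nonneg (v t))
      nlinarith)
  simp only [sub_self, hs.crit] at hW
  have hS0 := h.S_nonneg hm1 hm2 (hI x0 le_rfl hxs) (hq.trans (hq1 x0 le_rfl hxs))
  have h5 : σ * M * (2 / 3 * (s - x0)) ≤ Qs * M := by
    have h6 : σ * M * ((s - x0) * (Qs * (s - x0) ^ 2)) ≤ σ * M * ((s - x0) * 1) := by
      have : 0 ≤ s - x0 := by linarith
      gcongr
    nlinarith
  have : (2 / 3 * σ * (s - x0)) * M ≤ Qs * M := by linarith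
  exact le_of_mul_le_mul_right this hMp

set_option maxHeartbeats 2000000 in
lemma qstar_slope {N m1 m2 d s : ℝ} (hd : 1 ≤ d) (hm1 : 3 / 4 ≤ m1) (hm2 : 0 ≤ m2)
    (hD1 : m1 ≤ d ^ 6) (hD2 : m2 ≤ d ^ 6) (hN : 1000 * d ^ 3 ≤ N) (hs0 : 0 < s) (hs : s ≤ π / 3)
    (hQ : QQ N m1 m2 s ≤ N ^ 2 / 2) :
    7 / 10 * N ^ 3 ≤ Q1 m1 m2 s * √m1 := by
  have hp := pi_pos
  obtain ⟨c1, c2, c3⟩ := cos_bds (θ := s) ⟨hs0, by linarith⟩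
  have hc : 1 / 2 ≤ cos s := by
    rw [← cos_pi_div_three]
    exact cos_le_cos_of_nonneg_of_le_pi hs0.le (by linarith) hs
  have hd3 : 1 ≤ d ^ 3 := one_le_pow₀ hd
  have hN0 : 0 < N := by linarith
  have hd6 : 1000000 * d ^ 6 ≤ N ^ 2 := by
    have : (1000 * d ^ 3) ^ 2 ≤ N ^ 2 := by gcongr
    nlinarith
  have hss := sin_sq_add_cos_sq s
  have hs1 := sin_le_one s
  unfold QQ at hQ
  unfold Q1
  have a2 : m2 / (2 * (1 + cos s)) ≤ d ^ 6 / 3 := by gcongr; linarith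
  have b2 : m2 * (sin s / (2 * (1 + cos s) ^ 2)) ≤ d ^ 6 * (1 / 4) := by
    have : sin s / (2 * (1 + cos s) ^ 2) ≤ 1 / 4 := by
      rw [div_le_iff₀ (by positivity)]; nlinarith
    have h0 : 0 ≤ sin s / (2 * (1 + cos s) ^ 2) := by positivity
    gcongr
  set e := 1 - cos s with he
  set X := m1 / (2 * e) with hX
  have hm1X : m1 = 2 * e * X := by rw [hX]; field_simp
  have hXN : 499 / 1000 * N ^ 2 ≤ X := by linarith
  have heN : e * (998 / 1000 * N ^ 2) ≤ m1 := by rw [hm1X]; nlinarith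
  have he2 : e ≤ 1 / 100000 := by
    have : e * (998 / 1000 * N ^ 2) ≤ 1 / 1000000 * N ^ 2 := by linarith
    have h2 : 0 < N ^ 2 := by positivity
    nlinarith
  set μ := √m1 with hμ
  have hμ2 : μ ^ 2 = m1 := Real.sq_sqrt (by linarith)
  have hμ0 : 0 < μ := Real.sqrt_pos.mpr (by linarith)
  have hμd : μ ≤ d ^ 3 := by
    rw [hμ]; apply Real.sqrt_le_iff.mpr; constructor
    · positivity
    · rw [← pow_mul]; exact hD1
  have hsin : 141 / 100 * (e * N) ≤ sin s * μ := by
    apply le_of_sq_le_sq _ (by positivity)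
    rw [mul_pow (sin s), hμ2]
    have h1 : sin s ^ 2 = e * (2 - e) := by rw [he]; linear_combination hss
    rw [h1]
    have h2 : e * (998 / 1000 * N ^ 2) * (e * (2 - e)) ≤ m1 * (e * (2 - e)) := by
      apply mul_le_mul_of_nonneg_right heN
      apply mul_nonneg c1.le; linarith
    have h3 : (e * N) ^ 2 * (2 - 1 / 100000) ≤ (e * N) ^ 2 * (2 - e) := by gcongr
    nlinarith [sq_nonneg (e * N)]
  have hmain : 7035 / 10000 * N ^ 3 ≤ m1 * (sin s / (2 * e ^ 2)) * μ := by
    have h1 : m1 * (sin s / (2 * e ^ 2)) * μ = X * (sin s * μ / e) := by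
      rw [hX]; field_simp
    rw [h1]
    have h2 : 141 / 100 * N ≤ sin s * μ / e := by
      rw [le_div_iff₀ c1]; linarith
    have h3 : (499 / 1000 * N ^ 2) * (141 / 100 * N) ≤ X * (sin s * μ / e) := by gcongr
    have : 0 < N ^ 3 := by positivity
    nlinarith
  have hsmall : d ^ 6 * (1 / 4) * μ ≤ 1 / 1000 * N ^ 3 := by
    have : d ^ 6 * μ ≤ (N ^ 2 / 1000000) * N := by
      apply mul_le_mul (by linarith) (by linarith) hμ0.le (by positivity)
    have : 0 < N ^ 3 := by positivity
    nlinarith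
  have := mul_le_mul_of_nonneg_right b2 hμ0.le
  have : 0 < N ^ 3 := by positivity
  nlinarith

lemma JV.qstar {N m1 m2 d : ℝ} {v v1 : ℝ → ℝ} (h : JV N m1 m2 v v1) (hd : 1 ≤ d) (hm1 : 3 / 4 ≤ m1) (hm2 : 0 ≤ m2)
    (hD1 : m1 ≤ d ^ 6) (hD2 : m2 ≤ d ^ 6) (hN : 1000 * d ^ 3 ≤ N) {s : ℝ} (hs : IsMx v v1 s) (hs3 : s ≤ π / 3) :
    (66 / 100 * N / d) ^ 2 ≤ QQ N m1 m2 s := by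
  have hd3 : 1 ≤ d ^ 3 := one_le_pow₀ hd
  have hd0 : 0 < d := by linarith
  have hN0 : 0 < N := by linarith
  have hNd : (66 / 100 * N / d) ^ 2 ≤ (66 / 100 * N) ^ 2 := by
    gcongr; exact div_le_self (by positivity) hd
  rcases le_total (QQ N m1 m2 s) (N ^ 2 / 2) with hQ | hQ
  swap
  · nlinarith
  have hslope := qstar_slope hd hm1 hm2 hD1 hD2 hN hs.mem.1 hs3 hQ
  obtain ⟨c1, c2, c3⟩ := cos_bds hs.mem
  set μ := √m1 with hμ
  have hμ2 : μ ^ 2 = m1 := Real.sq_sqrt (by linarith)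
  have hμ0 : 0 < μ := Real.sqrt_pos.mpr (by linarith)
  have hμd : μ ≤ d ^ 3 := by
    rw [hμ]; apply Real.sqrt_le_iff.mpr; constructor
    · positivity
    · rw [← pow_mul]; exact hD1
  set σ := Q1 m1 m2 s with hσ
  have hσ0 : 0 < σ := by
    have : 0 < σ * μ := lt_of_lt_of_le (by positivity) hslope
    exact pos_of_mul_pos_left this hμ0.le
  have hm10 : 0 ≤ m1 := by linarith
  set Qs := QQ N m1 m2 s with hQs
  have hg := fun x0 a b c => h.gain hm10 hm2 (s := s) (x0 := x0) hs a b hσ0.le c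
  have hQ0 : 0 ≤ Qs := (hg s hs.mem.1 le_rfl (by norm_num)).1
  have hθ : μ ≤ s * N := by
    apply le_of_sq_le_sq _ (mul_pos hs.mem.1 hN0).le
    rw [hμ2]
    have h1 : 1 - s ^ 2 / 2 ≤ cos s := Real.one_sub_sq_div_two_le_cos
    have h2 : 0 ≤ N ^ 2 - m1 / (2 * (1 - cos s)) := by
      have : 0 ≤ m2 / (2 * (1 + cos s)) := by positivity
      have h3 : Qs = N ^ 2 - m1 / (2 * (1 - cos s)) - m2 / (2 * (1 + cos s)) := rfl
      linarith
    have h3 : m1 / (2 * (1 - cos s)) ≤ N ^ 2 := by linarith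
    rw [div_le_iff₀ (by positivity)] at h3
    have : N ^ 2 * (2 * (1 - cos s)) ≤ N ^ 2 * s ^ 2 := by gcongr; linarith
    nlinarith
  rcases le_total (Qs * s ^ 2) 1 with hc | hc
  · have h1 := (hg (s / 100) (by linarith [hs.mem.1]) (by linarith [hs.mem.1]) (by
      have : Qs * (s - s / 100) ^ 2 = (99 / 100) ^ 2 * (Qs * s ^ 2) := by ring
      rw [this]; nlinarith)).2
    have h2 : 7 / 10 * N ^ 3 ≤ σ * (s * N) := hslope.trans (by gcongr)
    have h3 : 7 / 10 * N ^ 2 ≤ σ * s := by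
      have : (7 / 10 * N ^ 2) * N ≤ (σ * s) * N := by linarith
      exact le_of_mul_le_mul_right this hN0
    nlinarith
  · have hQpos : 0 < Qs := by
      rcases hQ0.eq_or_lt with h0 | h0
      · rw [← h0] at hc; norm_num at hc
      · exact h0
    set r := √Qs with hr
    have hr0 : 0 < r := Real.sqrt_pos.mpr hQpos
    have hr2 : r ^ 2 = Qs := Real.sq_sqrt hQ0
    have hrs : 1 / r ≤ s := by
      rw [div_le_iff₀ hr0]
      have : 1 ≤ (s * r) ^ 2 := by rw [mul_pow, hr2]; linarith
      nlinarith [mul_pos hs.mem.1 hr0]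
    have h1 := (hg (s - 99 / 100 * (1 / r)) (by nlinarith [hs.mem.1, (by positivity : 0 < 1 / r)])
      (by have : 0 < 1 / r := by positivity
          linarith) (by
        have : s - (s - 99 / 100 * (1 / r)) = 99 / 100 * (1 / r) := by ring
        rw [this, ← hQs, ← hr2]
        have : r ^ 2 * (99 / 100 * (1 / r)) ^ 2 = (99 / 100) ^ 2 := by field_simp
        rw [this]; norm_num)).2
    have h2 : s - (s - 99 / 100 * (1 / r)) = 99 / 100 * (1 / r) := by ring
    rw [h2, ← hQs, ← hσ, ← hr2] at h1
    have h3 : 66 / 100 * σ ≤ r ^ 3 := by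
      have : 66 / 100 * σ = (2 / 3 * σ * (99 / 100 * (1 / r))) * r := by field_simp; ring
      rw [this]
      calc _ ≤ r ^ 2 * r := by gcongr
        _ = r ^ 3 := by ring
    have h4 : (66 / 100 * N) ^ 3 ≤ (r * d) ^ 3 := by
      rw [mul_pow r]
      have : 66 / 100 * (7 / 10 * N ^ 3) ≤ r ^ 3 * d ^ 3 := by
        calc 66 / 100 * (7 / 10 * N ^ 3) ≤ 66 / 100 * (σ * μ) := by gcongr
          _ = (66 / 100 * σ) * μ := by ring
          _ ≤ r ^ 3 * d ^ 3 := by gcongr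
      have : 0 < N ^ 3 := by positivity
      nlinarith
    have h5 : 66 / 100 * N ≤ r * d := le_of_pow_le_pow_left₀ (by norm_num) (by positivity) h4
    rw [← hr2]
    gcongr
    rw [div_le_iff₀ hd0]; exact h5

/-! ### Part D4: the maximum bound -/
open Filter Topology

def H2 (q1 q2 R : ℝ) : ℝ := -q2 / (2 * R ^ 3) + 3 * q1 ^ 2 / (4 * R ^ 5)
def H3 (q1 q2 q3 R : ℝ) : ℝ :=
  -q3 / (2 * R ^ 3) + 9 / 4 * (q1 * q2) / R ^ 5 - 15 / 8 * q1 ^ 3 / R ^ 7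

lemma QR_hasDerivAt (N m1 m2 : ℝ) {θ : ℝ} (h : θ ∈ Ioo 0 π) (hQ : 0 < QQ N m1 m2 θ) :
    HasDerivAt (fun t => √(QQ N m1 m2 t)) (Q1 m1 m2 θ / (2 * √(QQ N m1 m2 θ))) θ :=
  (QQ_hasDerivAt N m1 m2 h).sqrt hQ.ne'

lemma JV.G_deriv {N m1 m2 M : ℝ} {v v1 : ℝ → ℝ} (h : JV N m1 m2 v v1) {θ : ℝ} (hθ : θ ∈ Ioo 0 π)
    (hQ : 0 < QQ N m1 m2 θ) :
    HasDerivAt (fun t => v1 t ^ 2 / √(QQ N m1 m2 t) + Q1 m1 m2 t * (v t * v1 t) / (2 * √(QQ N m1 m2 t) ^ 3)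
      + √(QQ N m1 m2 t) * v t ^ 2 + 1 / 2 * (H2 (Q1 m1 m2 t) (Q2 m1 m2 t) (√(QQ N m1 m2 t)) * (v t ^ 2 - M)))
      (1 / 2 * H3 (Q1 m1 m2 θ) (Q2 m1 m2 θ) (Q3 m1 m2 θ) (√(QQ N m1 m2 θ)) * (v θ ^ 2 - M)) θ := by
  have hR := QR_hasDerivAt N m1 m2 hθ hQ
  have hR0 : 0 < √(QQ N m1 m2 θ) := Real.sqrt_pos.mpr hQ
  have hR2 : QQ N m1 m2 θ = √(QQ N m1 m2 θ) ^ 2 := (Real.sq_sqrt hQ.le).symm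
  have hv1 := h.d2 θ hθ
  have hvv := h.vv_deriv hθ
  rw [hR2] at hv1 hvv
  have hv2 := h.sq_deriv hθ
  have h1 := Q1_hasDerivAt m1 m2 hθ
  have h2 := Q2_hasDerivAt m1 m2 hθ
  unfold H2 H3
  generalize hRR : √(QQ N m1 m2 θ) = R at *
  have e3 := (hR.pow 3).const_mul 2
  have e3' := (hR.pow 3).const_mul 2
  have e5 := (hR.pow 5).const_mul 4
  refine (((((hv1.pow 2).div hR ?_).add ((h1.mul hvv).div e3 ?_)).add (hR.mul hv2)).add
    ((((h2.neg.div e3 ?_).add (((h1.pow 2).const_mul 3).div e5 ?_)).mul (hv2.sub_const M)).const_mul (1 / 2))).congr_deriv ?_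
  · simp only [hRR]; positivity
  · simp only [Pi.pow_apply, hRR]; positivity
  · simp only [Pi.pow_apply, hRR]; positivity
  · simp only [Pi.pow_apply, hRR]; positivity
  · simp only [Pi.pow_apply, Pi.mul_apply, Pi.neg_apply, Pi.add_apply, Pi.div_apply, hRR]
    generalize Q1 m1 m2 θ = q1
    generalize Q2 m1 m2 θ = q2
    generalize Q3 m1 m2 θ = q3
    generalize v θ = x
    generalize v1 θ = y
    push_cast
    field_simp
    ring

lemma H3_le_pos {q1 q2 q3 R d : ℝ} (hd : 1 ≤ d) (h1 : 0 ≤ q1) (h2 : q2 ≤ 0) (h3 : -q3 ≤ d ^ 6)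
    (hR : 660 * d ^ 2 ≤ R) : H3 q1 q2 q3 R ≤ 1 / 1000 := by
  have hR0 : 0 < R := lt_of_lt_of_le (by positivity) hR
  unfold H3
  have e1 : -q3 / (2 * R ^ 3) ≤ 1 / 1000 := by
    rw [div_le_iff₀ (by positivity)]
    have : (660 * d ^ 2) ^ 3 ≤ R ^ 3 := by gcongr
    have : 0 ≤ d ^ 6 := by positivity
    nlinarith
  have e2 : 9 / 4 * (q1 * q2) / R ^ 5 ≤ 0 := by
    apply div_nonpos_of_nonpos_of_nonneg _ (by positivity)
    nlinarith
  have e3 : 0 ≤ 15 / 8 * q1 ^ 3 / R ^ 7 := by positivity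
  linarith

lemma H3_le_neg {q1 q2 q3 R D : ℝ} (hD : 1 ≤ D) (h1 : q1 ≤ 0) (h1' : -q1 ≤ D) (h2 : q2 ≤ 0) (h2' : -q2 ≤ D)
    (h3 : -q3 ≤ D) (hR0 : 1 ≤ R) (hR : 900000 * D ≤ R ^ 2) : H3 q1 q2 q3 R ≤ 1 / 1000 := by
  unfold H3
  have hDR : D ≤ R ^ 2 / 900000 := by linarith
  have e1 : -q3 / (2 * R ^ 3) ≤ 1 / 10000 := by
    rw [div_le_iff₀ (by positivity)]
    have : R ^ 2 ≤ R ^ 3 := pow_le_pow_right₀ hR0 (by norm_num)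
    nlinarith
  have e2 : 9 / 4 * (q1 * q2) / R ^ 5 ≤ 1 / 10000 := by
    rw [div_le_iff₀ (by positivity)]
    have : R ^ 4 ≤ R ^ 5 := pow_le_pow_right₀ hR0 (by norm_num)
    have : (-q1) * (-q2) ≤ (R ^ 2 / 900000) * (R ^ 2 / 900000) := by
      apply mul_le_mul <;> linarith
    nlinarith
  have e3 : -(15 / 8 * q1 ^ 3 / R ^ 7) ≤ 1 / 10000 := by
    rw [← neg_div, div_le_iff₀ (by positivity)]
    have : R ^ 6 ≤ R ^ 7 := pow_le_pow_right₀ hR0 (by norm_num)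
    have : (-q1) ^ 3 ≤ (R ^ 2 / 900000) ^ 3 := by
      gcongr <;> linarith
    nlinarith
  linarith

lemma Qs_bounds {m1 m2 D x : ℝ} (hm1 : 0 ≤ m1) (hm2 : 0 ≤ m2) (hD2 : m2 ≤ D) (hx : 0 < x) (hx3 : x ≤ π / 3) :
    -Q3 m1 m2 x ≤ D ∧ -Q1 m1 m2 x ≤ D ∧ (Q1 m1 m2 x ≤ 0 → -Q2 m1 m2 x ≤ D) := by
  have hp := pi_pos
  obtain ⟨c1, c2, c3⟩ := cos_bds (θ := x) ⟨hx, by linarith⟩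
  have hc : 1 / 2 ≤ cos x := by
    rw [← cos_pi_div_three]
    exact cos_le_cos_of_nonneg_of_le_pi hx.le (by linarith) hx3
  have hs1 := sin_le_one x
  unfold Q1 Q2 Q3
  generalize sin x = s at *
  generalize cos x = c at *
  have c5 : c ≤ 1 := by linarith
  have hD0 : 0 ≤ D := hm2.trans hD2
  refine ⟨?_, ?_, ?_⟩
  · have e1 : 0 ≤ m1 * (s * (5 + c) / (2 * (1 - c) ^ 3)) := by positivity
    have e2 : s * (5 - c) / (2 * (1 + c) ^ 3) ≤ 1 := by
      rw [div_le_one (by positivity)]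
      have : (3 / 2 : ℝ) ^ 3 ≤ (1 + c) ^ 3 := by gcongr; linarith
      nlinarith
    have e3 : m2 * (s * (5 - c) / (2 * (1 + c) ^ 3)) ≤ D * 1 := by
      apply mul_le_mul hD2 e2 _ hD0
      apply div_nonneg (mul_nonneg c3.le (by linarith)) (by positivity)
    linarith
  · have e1 : 0 ≤ m1 * (s / (2 * (1 - c) ^ 2)) := by positivity
    have e2 : s / (2 * (1 + c) ^ 2) ≤ 1 := by
      rw [div_le_one (by positivity)]
      nlinarith
    have e3 : m2 * (s / (2 * (1 + c) ^ 2)) ≤ D * 1 := by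
      apply mul_le_mul hD2 e2 (by positivity) hD0
    linarith
  · intro hq
    have e1 : m1 / (1 - c) ^ 2 ≤ m2 / (1 + c) ^ 2 := by
      have : (m1 / (1 - c) ^ 2) * (s / 2) ≤ (m2 / (1 + c) ^ 2) * (s / 2) := by
        calc _ = m1 * (s / (2 * (1 - c) ^ 2)) := by field_simp
          _ ≤ m2 * (s / (2 * (1 + c) ^ 2)) := by linarith
          _ = _ := by field_simp
      exact le_of_mul_le_mul_right this (by positivity)
    have e2 : m2 / (1 + c) ^ 2 ≤ D / 2 := by
      rw [div_le_div_iff₀ (by positivity) (by positivity)]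
      nlinarith
    have e3 : -(-(m1 * ((2 + c) / (2 * (1 - c) ^ 2))) - m2 * ((2 - c) / (2 * (1 + c) ^ 2)))
      = (m1 / (1 - c) ^ 2) * ((2 + c) / 2) + (m2 / (1 + c) ^ 2) * ((2 - c) / 2) := by
      field_simp
      ring
    rw [e3]
    nlinarith

lemma JV.H3_bound {N m1 m2 d : ℝ} {v v1 : ℝ → ℝ} (h : JV N m1 m2 v v1) (hd : 1 ≤ d) (hm1 : 3 / 4 ≤ m1) (hm2 : 0 ≤ m2)
    (hD1 : m1 ≤ d ^ 6) (hD2 : m2 ≤ d ^ 6) (hN : 1000 * d ^ 3 ≤ N) {s : ℝ} (hs : IsMx v v1 s) (hs3 : s ≤ π / 3)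
    {x : ℝ} (hsx : s ≤ x) (hx3 : x ≤ π / 3) :
    0 < QQ N m1 m2 x ∧ H3 (Q1 m1 m2 x) (Q2 m1 m2 x) (Q3 m1 m2 x) (√(QQ N m1 m2 x)) ≤ 1 / 1000 := by
  have hp := pi_pos
  have hm10 : 0 ≤ m1 := by linarith
  have hd0 : 0 < d := by linarith
  have hd3 : 1 ≤ d ^ 3 := one_le_pow₀ hd
  have hd6' : 1 ≤ d ^ 6 := one_le_pow₀ hd
  have hN0 : 0 < N := by linarith
  have hd6 : 1000000 * d ^ 6 ≤ N ^ 2 := by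
    have : (1000 * d ^ 3) ^ 2 ≤ N ^ 2 := by gcongr
    nlinarith
  have hx0 : 0 < x := lt_of_lt_of_le hs.mem.1 hsx
  obtain ⟨b3, b1, b2⟩ := Qs_bounds hm10 hm2 hD2 hx0 hx3
  have hq2 := Q2_nonpos m1 m2 hm10 hm2 x
  rcases le_total 0 (Q1 m1 m2 x) with hq | hq
  · have hQ := h.qstar hd hm1 hm2 hD1 hD2 hN hs hs3
    have hQ2 : QQ N m1 m2 s ≤ QQ N m1 m2 x :=
      mono_of_deriv hsx (fun y hy => QQ_hasDerivAt N m1 m2 ⟨by linarith [hy.1, hs.mem.1], by linarith [hy.2]⟩)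
        (fun y hy => hq.trans (Q1_anti hm10 hm2 (by linarith [hy.1, hs.mem.1]) hy.2 (by linarith)))
    have hr : 660 * d ^ 2 ≤ 66 / 100 * N / d := by
      rw [le_div_iff₀ hd0]; nlinarith
    have hQ3 : (660 * d ^ 2) ^ 2 ≤ QQ N m1 m2 x := by
      refine le_trans ?_ (hQ.trans hQ2)
      gcongr
    refine ⟨lt_of_lt_of_le (by positivity) hQ3, H3_le_pos hd hq hq2 b3 ?_⟩
    exact Real.le_sqrt_of_sq_le hQ3
  · have hQ2 : QQ N m1 m2 (π / 3) ≤ QQ N m1 m2 x := by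
      have := mono_of_deriv (f := fun t => -QQ N m1 m2 t) (f' := fun t => -Q1 m1 m2 t) hx3
        (fun y hy => (QQ_hasDerivAt N m1 m2 ⟨by linarith [hy.1], by linarith [hy.2]⟩).neg)
        (fun y hy => by
          have := Q1_anti hm10 hm2 hx0 hy.1 (by linarith [hy.2])
          linarith)
      linarith
    have hw := (QQ_window (N := N) hm10 hm2 hD1 hD2 (le_refl (π / 3)) (by linarith)).1
    have hQ3 : 900000 * d ^ 6 ≤ QQ N m1 m2 x := by linarith
    have hQ0 : 0 < QQ N m1 m2 x := by linarith
    refine ⟨hQ0, H3_le_neg hd6' hq b1 hq2 (b2 hq) b3 ?_ ?_⟩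
    · apply Real.le_sqrt_of_sq_le; linarith
    · rw [Real.sq_sqrt hQ0.le]; exact hQ3

lemma abs_cross_le (z y R : ℝ) : |y * z * R| ≤ z ^ 2 + R ^ 2 * y ^ 2 := by
  rw [abs_le]
  constructor
  · nlinarith [sq_nonneg (z + R * y), sq_nonneg z, sq_nonneg (R * y)]
  · nlinarith [sq_nonneg (z - R * y), sq_nonneg z, sq_nonneg (R * y)]

set_option maxHeartbeats 1000000 in
lemma JV.max_left {N m1 m2 d : ℝ} {v v1 : ℝ → ℝ} (h : JV N m1 m2 v v1) (hd : 1 ≤ d) (hm1 : 3 / 4 ≤ m1) (hm2 : 0 ≤ m2)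
    (hD1 : m1 ≤ d ^ 6) (hD2 : m2 ≤ d ^ 6) (hN : 1000 * d ^ 3 ≤ N) {s : ℝ} (hs : IsMx v v1 s) (hs2 : s ≤ π / 2) :
    v s ^ 2 ≤ 4 * d := by
  have hp := pi_pos
  have hp1 := pi_gt_d2
  have hp2 := pi_lt_d2
  have hm10 : 0 ≤ m1 := by linarith
  have hd0 : 0 < d := by linarith
  have hd3 : 1 ≤ d ^ 3 := one_le_pow₀ hd
  have hN0 : 1000 ≤ N := by linarith
  have hd6 : 1000000 * d ^ 6 ≤ N ^ 2 := by
    have : (1000 * d ^ 3) ^ 2 ≤ N ^ 2 := by gcongr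
    nlinarith
  have hM := hs.pos
  set M := v s ^ 2 with hMdef
  have hN2 : 0 < N ^ 2 := by positivity
  rcases le_total (π / 3) s with hs3 | hs3
  · have hw := h.window hN0 hm10 hm2 hD1 hD2 hd6 hs3 hs2
    have hq := (QQ_window (N := N) hm10 hm2 hD1 hD2 hs3 (by linarith)).1
    rw [hs.crit] at hw
    have h1 : 99 / 100 * N ^ 2 ≤ QQ N m1 m2 s := by linarith
    have h2 : (99 / 100 * N ^ 2 * M) * (51 / 100) ≤
        (0 ^ 2 + QQ N m1 m2 s * M) * (2 * π / 3 - s - 1 / 100) := by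
      have : 99 / 100 * N ^ 2 * M ≤ 0 ^ 2 + QQ N m1 m2 s * M := by
        rw [zero_pow two_ne_zero, zero_add]; gcongr
      apply mul_le_mul this (by linarith) (by norm_num)
      exact le_trans (by positivity) this
    have h3 : N ^ 2 * (M * (99 / 100 * (51 / 100))) ≤ N ^ 2 * 2 := by linarith
    have := le_of_mul_le_mul_left h3 hN2
    linarith
  · have hH := fun x a b => h.H3_bound hd hm1 hm2 hD1 hD2 hN hs hs3 (x := x) a b
    have hw := h.window hN0 hm10 hm2 hD1 hD2 hd6 (le_refl (π / 3)) (by linarith)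
    obtain ⟨hq, hq1⟩ := QQ_window (N := N) hm10 hm2 hD1 hD2 (le_refl (π / 3)) (by linarith)
    have hG := mono_of_deriv (f := fun t => (v1 t ^ 2 / √(QQ N m1 m2 t) +
        Q1 m1 m2 t * (v t * v1 t) / (2 * √(QQ N m1 m2 t) ^ 3)
      + √(QQ N m1 m2 t) * v t ^ 2 + 1 / 2 * (H2 (Q1 m1 m2 t) (Q2 m1 m2 t) (√(QQ N m1 m2 t)) * (v t ^ 2 - M)))
        + (M / 2000) * t)
      (f' := fun θ => (1 / 2 * H3 (Q1 m1 m2 θ) (Q2 m1 m2 θ) (Q3 m1 m2 θ) (√(QQ N m1 m2 θ)) * (v θ ^ 2 - M))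
        + (M / 2000) * 1) hs3
      (fun t ht => by
        have htI : t ∈ Ioo 0 π := ⟨by linarith [ht.1, hs.mem.1], by linarith [ht.2]⟩
        exact (h.G_deriv htI (hH t ht.1 ht.2).1).add ((hasDerivAt_id t).const_mul _))
      (fun t ht => by
        have h1 := (hH t ht.1 ht.2).2
        have h2 := hs.le t ⟨by linarith [ht.1, hs.mem.1], by linarith [ht.2]⟩
        have h3 := sq_nonneg (v t)
        have h4 := mul_le_mul_of_nonneg_right h1 (sub_nonneg.mpr h2)
        nlinarith)
    simp only [hs.crit] at hG
    have hQs := h.qstar hd hm1 hm2 hD1 hD2 hN hs hs3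
    have hr : 66 / 100 * N / d ≤ √(QQ N m1 m2 s) := Real.le_sqrt_of_sq_le hQs
    have hR0 : 0 < √(QQ N m1 m2 (π / 3)) := Real.sqrt_pos.mpr (hH _ hs3 le_rfl).1
    have hR2 : √(QQ N m1 m2 (π / 3)) ^ 2 = QQ N m1 m2 (π / 3) := Real.sq_sqrt (hH _ hs3 le_rfl).1.le
    have hRN : 99 / 100 * N ≤ √(QQ N m1 m2 (π / 3)) := by
      apply Real.le_sqrt_of_sq_le; nlinarith
    have hH2 : 0 ≤ H2 (Q1 m1 m2 (π / 3)) (Q2 m1 m2 (π / 3)) (√(QQ N m1 m2 (π / 3))) := by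
      have := Q2_nonpos m1 m2 hm10 hm2 (π / 3)
      unfold H2
      have : 0 ≤ -Q2 m1 m2 (π / 3) := by linarith
      positivity
    have hvM := hs.le (π / 3) ⟨by linarith, by linarith⟩
    rw [← hMdef] at hG
    rw [← hR2] at hw hq
    generalize √(QQ N m1 m2 (π / 3)) = R at *
    generalize √(QQ N m1 m2 s) = r at *
    generalize v (π / 3) = y at *
    generalize v1 (π / 3) = z at *
    generalize H2 (Q1 m1 m2 (π / 3)) (Q2 m1 m2 (π / 3)) R = k2 at *
    generalize Q1 m1 m2 (π / 3) = q at *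
    have hG2 : r * M - M / 2000 * 2 ≤ z ^ 2 / R + q * (y * z) / (2 * R ^ 3) + R * y ^ 2 := by
      have e1 : k2 * (y ^ 2 - M) ≤ 0 := mul_nonpos_of_nonneg_of_nonpos hH2 (by linarith)
      have e2 : M / 2000 * (π / 3) ≤ M / 2000 * 2 := by gcongr; linarith
      have e3 : 0 ≤ M / 2000 * s := by have := hs.mem.1; positivity
      simp only [sub_self, mul_zero, zero_div, ne_eq, OfNat.ofNat_ne_zero, not_false_eq_true, zero_pow, zero_add, add_zero] at hG
      linarith
    have hcross : q * (y * z) / (2 * R ^ 3) ≤ 1 / 100 * ((z ^ 2 + R ^ 2 * y ^ 2) / R) := by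
      rw [mul_div_assoc', div_le_div_iff₀ (by positivity) hR0]
      have hqR : |q| ≤ 1 / 100 * R ^ 3 := by
        have : 99 / 100 * N * (99 / 100 * N) ^ 2 ≤ R * R ^ 2 := by gcongr
        nlinarith
      have e1 : q * (y * z) * R ≤ |q| * |y * z * R| := by
        rw [← abs_mul]
        refine (le_abs_self _).trans (le_of_eq ?_)
        congr 1; ring
      have e2 : |y * z * R| ≤ z ^ 2 + R ^ 2 * y ^ 2 := by
        exact abs_cross_le z y R
      have e3 : |q| * |y * z * R| ≤ (1 / 100 * R ^ 3) * (z ^ 2 + R ^ 2 * y ^ 2) := by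
        apply mul_le_mul hqR e2 (abs_nonneg _) (by positivity)
      have : 0 ≤ R ^ 3 * (z ^ 2 + R ^ 2 * y ^ 2) := by positivity
      nlinarith
    have hS : r * M - M / 2000 * 2 ≤ 101 / 100 * ((z ^ 2 + R ^ 2 * y ^ 2) / R) := by
      have : z ^ 2 / R + R * y ^ 2 = (z ^ 2 + R ^ 2 * y ^ 2) / R := by field_simp
      linarith
    have hNd : d ≤ N := by
      have : d ≤ d ^ 3 := le_self_pow₀ hd (by norm_num)
      linarith
    have hrr : 65 / 100 * N / d * M ≤ r * M - M / 2000 * 2 := by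
      have : 66 / 100 * N / d = 65 / 100 * N / d + 1 / 100 * (N / d) := by ring
      have h1 : 1 ≤ N / d := by rw [le_div_iff₀ hd0]; linarith
      nlinarith
    have hS2 : (65 / 100 * N / d * M) * (99 / 100 * N) ≤ 101 / 100 * (z ^ 2 + R ^ 2 * y ^ 2) := by
      have e : 101 / 100 * (z ^ 2 + R ^ 2 * y ^ 2) = (101 / 100 * ((z ^ 2 + R ^ 2 * y ^ 2) / R)) * R := by
        field_simp
      rw [e]
      apply mul_le_mul (hrr.trans hS) hRN (by positivity)
      positivity
    have hSS : (z ^ 2 + R ^ 2 * y ^ 2) * 1 ≤ 2 * N ^ 2 := by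
      refine le_trans ?_ hw
      gcongr; linarith
    have hfin : N ^ 2 * (65 / 100 * M / d * (99 / 100)) ≤ N ^ 2 * (202 / 100) := by
      have : (65 / 100 * N / d * M) * (99 / 100 * N) = N ^ 2 * (65 / 100 * M / d * (99 / 100)) := by ring
      linarith
    have h6 := le_of_mul_le_mul_left hfin hN2
    have h7 : M / d ≤ 4 := by
      have : 65 / 100 * M / d * (99 / 100) = 65 / 100 * (99 / 100) * (M / d) := by ring
      linarith
    rwa [div_le_iff₀ hd0] at h7

lemma JV.max_bound {N m1 m2 d : ℝ} {v v1 : ℝ → ℝ} (h : JV N m1 m2 v v1) (hd : 1 ≤ d) (hm1 : 3 / 4 ≤ m1)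
    (hm2 : 3 / 4 ≤ m2) (hD1 : m1 ≤ d ^ 6) (hD2 : m2 ≤ d ^ 6) (hN : 1000 * d ^ 3 ≤ N) {t : ℝ} (ht : t ∈ Icc 0 π) :
    v t ^ 2 ≤ 4 * d := by
  rcases h.exists_max with h0 | ⟨s, hs⟩
  · rw [h0 t ht]; linarith
  · refine (hs.le t ht).trans ?_
    rcases le_total s (π / 2) with h2 | h2
    · exact h.max_left hd hm1 (by linarith) hD1 hD2 hN hs h2
    · have := h.reflect.max_left hd hm2 (by linarith) hD2 hD1 hN hs.reflect (by linarith)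
      simpa using this

/-! ### Part E1: abstract integral estimates -/
open Filter Topology

lemma int_bound {F : ℝ → ℝ} (hF : ContinuousOn F (Icc 0 1)) {s γ δ K : ℝ} (hs : 1 ≤ s) (hγ : s < γ)
    (hδ : 0 < δ) (hK : 0 ≤ K) (h1 : ∀ u ∈ Icc (0 : ℝ) 1, F u ≤ u ^ (s - 1))
    (h2 : ∀ u ∈ Icc (0 : ℝ) 1, δ ≤ u → F u ≤ K * (δ / u) ^ γ * u ^ (s - 1)) :
    ∫ u in (0 : ℝ)..1, F u ≤ δ ^ s * (1 / s + K / (γ - s)) := by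
  have hgs : 0 < γ - s := by linarith
  have hs0 : 0 < s := by linarith
  have key : ∀ d : ℝ, 0 ≤ d → d ≤ 1 → ∫ u in (0 : ℝ)..d, F u ≤ d ^ s / s := by
    intro d hd0 hd1
    have e : ∫ u in (0 : ℝ)..d, u ^ (s - 1) = d ^ s / s := by
      rw [integral_rpow (Or.inl (by linarith))]
      rw [sub_add_cancel, Real.zero_rpow hs0.ne', sub_zero]
    rw [← e]
    apply intervalIntegral.integral_mono_on hd0
    · apply ContinuousOn.intervalIntegrable
      rw [uIcc_of_le hd0]
      exact hF.mono (Icc_subset_Icc le_rfl hd1)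
    · exact intervalIntegral.intervalIntegrable_rpow' (by linarith)
    · intro u hu
      exact h1 u ⟨hu.1, hu.2.trans hd1⟩
  rcases le_total 1 δ with h | h
  · refine (key 1 zero_le_one le_rfl).trans ?_
    rw [Real.one_rpow]
    have : 1 ≤ δ ^ s := Real.one_le_rpow h hs0.le
    have h3 : 0 ≤ K / (γ - s) := by positivity
    calc 1 / s ≤ 1 * (1 / s + K / (γ - s)) := by linarith
      _ ≤ _ := by gcongr
  · have i1 : IntervalIntegrable F volume 0 δ := by
      apply ContinuousOn.intervalIntegrable
      rw [uIcc_of_le hδ.le]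
      exact hF.mono (Icc_subset_Icc le_rfl h)
    have i2 : IntervalIntegrable F volume δ 1 := by
      apply ContinuousOn.intervalIntegrable
      rw [uIcc_of_le h]
      exact hF.mono (Icc_subset_Icc hδ.le le_rfl)
    rw [← intervalIntegral.integral_add_adjacent_intervals i1 i2]
    have e1 := key δ hδ.le h
    have h0 : (0 : ℝ) ∉ uIcc δ 1 := by
      rw [uIcc_of_le h]; intro hh; linarith [hh.1]
    have e2 : ∫ u in δ..1, F u ≤ ∫ u in δ..1, (K * δ ^ γ) * u ^ (s - 1 - γ) := by
      apply intervalIntegral.integral_mono_on h i2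
      · exact (intervalIntegral.intervalIntegrable_rpow (Or.inr h0)).const_mul _
      · intro u hu
        have hu0 : 0 < u := lt_of_lt_of_le hδ hu.1
        refine (h2 u ⟨hu0.le, hu.2⟩ hu.1).trans (le_of_eq ?_)
        rw [Real.div_rpow hδ.le hu0.le, Real.rpow_sub hu0 (s - 1) γ]
        ring
    have e3 : ∫ u in δ..1, (K * δ ^ γ) * u ^ (s - 1 - γ) ≤ δ ^ s * (K / (γ - s)) := by
      rw [intervalIntegral.integral_const_mul, integral_rpow (Or.inr ⟨by linarith, h0⟩)]
      have e : s - 1 - γ + 1 = -(γ - s) := by ring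
      rw [e, Real.one_rpow]
      have e4 : δ ^ γ * δ ^ (-(γ - s)) = δ ^ s := by
        rw [← Real.rpow_add hδ]; congr 1; ring
      have e5 : K * δ ^ γ * ((1 - δ ^ (-(γ - s))) / -(γ - s)) =
          K / (γ - s) * (δ ^ γ * δ ^ (-(γ - s)) - δ ^ γ) := by
        field_simp; ring
      rw [e5, e4, mul_comm]
      have : 0 ≤ δ ^ γ := by positivity
      gcongr
      linarith
    rw [mul_add]
    have : δ ^ s * (1 / s) = δ ^ s / s := by ring
    linarith

lemma cont_gp {g : ℝ → ℝ} (hg : ContinuousOn g (Icc 0 1)) {p s : ℝ} (hp : 0 < p) (hs : 1 ≤ s) :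
    ContinuousOn (fun u => g u ^ p * u ^ (s - 1)) (Icc 0 1) := by
  apply ContinuousOn.mul
  · exact hg.rpow_const (fun x _ => Or.inr hp.le)
  · exact continuousOn_id.rpow_const (fun x _ => Or.inr (by linarith))

lemma gp_le_one {g : ℝ → ℝ} (h0 : ∀ u ∈ Icc (0 : ℝ) 1, 0 ≤ g u) (h1 : ∀ u ∈ Icc (0 : ℝ) 1, g u ≤ 1) {p s : ℝ}
    (hp : 0 < p) : ∀ u ∈ Icc (0 : ℝ) 1, g u ^ p * u ^ (s - 1) ≤ u ^ (s - 1) := by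
  intro u hu
  have := Real.rpow_le_one (h0 u hu) (h1 u hu) hp.le
  have h2 : 0 ≤ u ^ (s - 1) := Real.rpow_nonneg hu.1 _
  nlinarith

lemma gp_decay {g k Y p u : ℝ} (hg : 0 ≤ g) (hu : 0 < u) (hp : 0 < p) (h : g * u ^ k ≤ Y) :
    g ^ p ≤ Y ^ p / u ^ (p * k) := by
  rw [le_div_iff₀ (by positivity), mul_comm p k, Real.rpow_mul hu.le, ← Real.mul_rpow hg (by positivity)]
  exact Real.rpow_le_rpow (by positivity) h hp.le

lemma regime1 {g : ℝ → ℝ} (hg : ContinuousOn g (Icc 0 1)) (h0 : ∀ u ∈ Icc (0 : ℝ) 1, 0 ≤ g u)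
    (h1 : ∀ u ∈ Icc (0 : ℝ) 1, g u ≤ 1) {p s k T : ℝ} (hp : 0 < p) (hs : 1 ≤ s) (hk : 0 < k) (hT : 0 < T)
    (hd : ∀ u ∈ Icc (0 : ℝ) 1, g u * u ^ k ≤ T) (hpk : s < p * k) :
    ∫ u in (0 : ℝ)..1, g u ^ p * u ^ (s - 1) ≤ 2 / s * (T ^ (s / k) * (s / (p * k - s)) ^ (s / (p * k))) := by
  have hpk0 : 0 < p * k - s := by linarith
  have hs0 : 0 < s := by linarith
  set R := s / (p * k - s) with hR
  have hR0 : 0 < R := by positivity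
  set δ := T ^ (1 / k) * R ^ (1 / (p * k)) with hδ
  have hδ0 : 0 < δ := by positivity
  have hδγ : δ ^ (p * k) = T ^ p * R := by
    rw [hδ, Real.mul_rpow (by positivity) (by positivity), ← Real.rpow_mul hT.le, ← Real.rpow_mul hR0.le]
    rw [show 1 / k * (p * k) = p by field_simp, show 1 / (p * k) * (p * k) = 1 by field_simp, Real.rpow_one]
  have hδs : δ ^ s = T ^ (s / k) * R ^ (s / (p * k)) := by
    rw [hδ, Real.mul_rpow (by positivity) (by positivity), ← Real.rpow_mul hT.le, ← Real.rpow_mul hR0.le]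
    congr 2 <;> ring
  have := int_bound (cont_gp hg hp hs) hs hpk hδ0 (K := 1 / R) (by positivity) (gp_le_one h0 h1 hp)
    (fun u hu hdu => by
      have hu0 : 0 < u := lt_of_lt_of_le hδ0 hdu
      have h3 := gp_decay (h0 u hu) hu0 hp (hd u hu)
      have : 1 / R * (δ / u) ^ (p * k) = T ^ p / u ^ (p * k) := by
        rw [Real.div_rpow hδ0.le hu0.le, hδγ]; field_simp
      rw [this]
      gcongr)
  refine this.trans (le_of_eq ?_)
  rw [hδs]
  have : 1 / R / (p * k - s) = 1 / s := by rw [hR]; field_simp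
  rw [this]; ring

lemma regime2 {g : ℝ → ℝ} (hg : ContinuousOn g (Icc 0 1)) (h0 : ∀ u ∈ Icc (0 : ℝ) 1, 0 ≤ g u)
    (h1 : ∀ u ∈ Icc (0 : ℝ) 1, g u ≤ 1) {p s k Y : ℝ} (hp : 0 < p) (hs : 1 ≤ s) (hk : 0 < k) (hY : 0 < Y)
    (hd : ∀ u ∈ Icc (0 : ℝ) 1, g u * u ^ k ≤ Y) (hpk : 2 * s ≤ p * k) :
    ∫ u in (0 : ℝ)..1, g u ^ p * u ^ (s - 1) ≤ 2 / s * Y ^ (s / k) := by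
  have hs0 : 0 < s := by linarith
  set δ := Y ^ (1 / k) with hδ
  have hδ0 : 0 < δ := by positivity
  have hδγ : δ ^ (p * k) = Y ^ p := by
    rw [hδ, ← Real.rpow_mul hY.le]
    rw [show 1 / k * (p * k) = p by field_simp]
  have hδs : δ ^ s = Y ^ (s / k) := by
    rw [hδ, ← Real.rpow_mul hY.le]
    congr 1; ring
  have := int_bound (cont_gp hg hp hs) hs (γ := p * k) (by linarith) hδ0 (K := 1) (by positivity) (gp_le_one h0 h1 hp)
    (fun u hu hdu => by
      have hu0 : 0 < u := lt_of_lt_of_le hδ0 hdu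
      have h3 := gp_decay (h0 u hu) hu0 hp (hd u hu)
      have : 1 * (δ / u) ^ (p * k) = Y ^ p / u ^ (p * k) := by
        rw [Real.div_rpow hδ0.le hu0.le, hδγ, one_mul]
      rw [this]
      gcongr)
  refine this.trans ?_
  rw [hδs]
  have : 1 / (p * k - s) ≤ 1 / s := by gcongr; linarith
  calc Y ^ (s / k) * (1 / s + 1 / (p * k - s)) ≤ Y ^ (s / k) * (1 / s + 1 / s) := by gcongr
    _ = _ := by ring

lemma regime3 {g : ℝ → ℝ} (hg : ContinuousOn g (Icc 0 1)) (h0 : ∀ u ∈ Icc (0 : ℝ) 1, 0 ≤ g u)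
    (h1 : ∀ u ∈ Icc (0 : ℝ) 1, g u ≤ 1) {p s k T X ε K : ℝ} (hp : 0 < p) (hp1 : p ≤ 1) (hs : 1 ≤ s) (hk : 0 < k)
    (hT : 0 < T) (hX : 0 < X) (hε : 0 < ε) (hK : 1 ≤ K) (hεX : ε * X ^ 3 ≤ K)
    (hd : ∀ u ∈ Icc (0 : ℝ) 1, g u * u ^ k ≤ X * T)
    (he : ∀ u ∈ Icc (0 : ℝ) 1, T ^ (1 / k) ≤ u → g u ≤ ε) (hpk : 2 * s ≤ p * k) :
    ∫ u in (0 : ℝ)..1, g u ^ p * u ^ (s - 1) ≤ (1 + 2 * K) / s * T ^ (s / k) := by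
  have hs0 : 0 < s := by linarith
  set δ := T ^ (1 / k) with hδ
  have hδ0 : 0 < δ := by positivity
  have hδγ : δ ^ (3 / 4 * p * k) = T ^ (3 / 4 * p) := by
    rw [hδ, ← Real.rpow_mul hT.le]
    congr 1; field_simp
  have hδs : δ ^ s = T ^ (s / k) := by
    rw [hδ, ← Real.rpow_mul hT.le]
    congr 1; ring
  have hKK : ε ^ (p / 4) * X ^ (3 / 4 * p) ≤ K := by
    have : ε ^ (p / 4) * X ^ (3 / 4 * p) = (ε * X ^ 3) ^ (p / 4) := by
      rw [Real.mul_rpow hε.le (by positivity), ← Real.rpow_natCast_mul hX.le]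
      congr 2; push_cast; ring
    rw [this]
    calc (ε * X ^ 3) ^ (p / 4) ≤ K ^ (p / 4) := Real.rpow_le_rpow (by positivity) hεX (by positivity)
      _ ≤ K ^ (1 : ℝ) := Real.rpow_le_rpow_of_exponent_le hK (by linarith)
      _ = K := Real.rpow_one K
  have := int_bound (cont_gp hg hp hs) hs (γ := 3 / 4 * p * k) (by nlinarith) hδ0 (K := K) (by positivity) (gp_le_one h0 h1 hp)
    (fun u hu hdu => by
      have hu0 : 0 < u := lt_of_lt_of_le hδ0 hdu
      have h3 := gp_decay (p := 3 / 4 * p) (h0 u hu) hu0 (by positivity) (hd u hu)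
      have h4 : g u ^ (p / 4) ≤ ε ^ (p / 4) := Real.rpow_le_rpow (h0 u hu) (he u hu hdu) (by positivity)
      have h5 : g u ^ p = g u ^ (p / 4) * g u ^ (3 / 4 * p) := by
        rw [← Real.rpow_add_of_nonneg (h0 u hu) (by positivity) (by positivity)]
        congr 1; ring
      have h6 : g u ^ p ≤ K * (δ / u) ^ (3 / 4 * p * k) := by
        rw [h5, Real.div_rpow hδ0.le hu0.le, hδγ]
        calc _ ≤ ε ^ (p / 4) * ((X * T) ^ (3 / 4 * p) / u ^ (3 / 4 * p * k)) := by
              apply mul_le_mul h4 h3 (Real.rpow_nonneg (h0 u hu) _) (by positivity)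
          _ = (ε ^ (p / 4) * X ^ (3 / 4 * p)) * (T ^ (3 / 4 * p) / u ^ (3 / 4 * p * k)) := by
              rw [Real.mul_rpow hX.le hT.le]; ring
          _ ≤ _ := by gcongr
      gcongr)
  refine this.trans ?_
  rw [hδs]
  have : K / (3 / 4 * p * k - s) ≤ K / (s / 2) := by gcongr; nlinarith
  calc T ^ (s / k) * (1 / s + K / (3 / 4 * p * k - s)) ≤ T ^ (s / k) * (1 / s + K / (s / 2)) := by gcongr
    _ = _ := by field_simp

/-! ### Part E2: Jacobi specific estimates -/
open Filter Topology

def qG (A B : ℝ) (n : ℕ) (u : ℝ) : ℝ :=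
  |jS A B n (1 - 2 * u) / jS A B n 1| * (1 - u) ^ ((B + 1 / 2) / 2)

def qT (A B : ℝ) (n : ℕ) : ℝ := A ^ ((1 : ℝ) / 6) / (2 ^ ((A + B - 1) / 2) * jacobiP A B n 1)

lemma jP_one_pos (A B : ℝ) (hA : 0 ≤ A) (hB : 0 ≤ B) (n : ℕ) : 0 < jacobiP A B n 1 := by
  rw [jacobiP_eq]
  exact mul_pos (jC_pos A B hA hB n) (jS_one_pos A B hA hB n)

lemma qT_pos (A B : ℝ) (hA : 1 ≤ A) (hB : 1 ≤ B) (n : ℕ) : 0 < qT A B n := by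
  have := jP_one_pos A B (by linarith) (by linarith) n
  unfold qT
  have : 0 < A := by linarith
  positivity

lemma qG_cont (A B : ℝ) (hB : 1 ≤ B) (n : ℕ) : ContinuousOn (qG A B n) (Icc 0 1) := by
  apply Continuous.continuousOn
  unfold qG
  apply Continuous.mul
  · exact ((((jS_cont A B n).comp (by fun_prop : Continuous fun u : ℝ => 1 - 2 * u))).div_const _).abs
  · exact (continuous_const.sub continuous_id).rpow_const (fun x => Or.inr (by linarith))

lemma qG_nonneg (A B : ℝ) (n : ℕ) : ∀ u ∈ Icc (0 : ℝ) 1, 0 ≤ qG A B n u := by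
  intro u hu
  unfold qG
  have : 0 ≤ 1 - u := by linarith [hu.2]
  positivity

lemma qG_le_abs (A B : ℝ) (hB : 1 ≤ B) (n : ℕ) : ∀ u ∈ Icc (0 : ℝ) 1,
    qG A B n u ≤ |jS A B n (1 - 2 * u) / jS A B n 1| := by
  intro u hu
  unfold qG
  have h0 : 0 ≤ 1 - u := by linarith [hu.2]
  have := Real.rpow_le_one h0 (by linarith [hu.1]) (by linarith : 0 ≤ (B + 1 / 2) / 2)
  exact mul_le_of_le_one_right (abs_nonneg _) this

lemma qabs_le_one (A B : ℝ) (hA : 0 ≤ A) (hB : 0 ≤ B) (hab : B ≤ A) (n : ℕ) : ∀ u ∈ Icc (0 : ℝ) 1,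
    |jS A B n (1 - 2 * u) / jS A B n 1| ≤ 1 := by
  intro u hu
  have h1 := jS_one_pos A B hA hB n
  rw [abs_div, abs_of_pos h1, div_le_one h1]
  exact jS_abs_le A B hA hB hab n (by linarith [hu.2]) (by linarith [hu.1])

lemma qG_le_one (A B : ℝ) (hB : 1 ≤ B) (hab : B ≤ A) (n : ℕ) : ∀ u ∈ Icc (0 : ℝ) 1, qG A B n u ≤ 1 :=
  fun u hu => (qG_le_abs A B hB n u hu).trans (qabs_le_one A B (by linarith) (by linarith) hab n u hu)

lemma qG_decay (A B : ℝ) (hA : 1 ≤ A) (hB : 1 ≤ B) (n : ℕ) {X : ℝ} (hX : 0 ≤ X)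
    (hM : ∀ t ∈ Icc 0 π, jv A B n t ^ 2 ≤ 4 * A ^ ((1 : ℝ) / 3) * X ^ 2) :
    ∀ u ∈ Icc (0 : ℝ) 1, qG A B n u * u ^ ((A + 1 / 2) / 2) ≤ X * qT A B n := by
  intro u hu
  have hA0 : 0 < A := by linarith
  have hP := jP_one_pos A B (by linarith) (by linarith) n
  have hT := qT_pos A B hA hB n
  have h1 := hM (arccos (1 - 2 * u)) ⟨arccos_nonneg _, arccos_le_pi _⟩
  rw [jv_sq, cos_arccos (by linarith [hu.2]) (by linarith [hu.1])] at h1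
  have hu1 : 0 ≤ 1 - u := by linarith [hu.2]
  have e1 : 1 - (1 - 2 * u) = 2 * u := by ring
  have e2 : 1 + (1 - 2 * u) = 2 * (1 - u) := by ring
  rw [e1, e2, Real.mul_rpow (by norm_num) hu.1, Real.mul_rpow (by norm_num) hu1] at h1
  apply le_of_sq_le_sq _ (by positivity)
  have hJ := jS_one_pos A B (by linarith) (by linarith) n
  have hC := jC_pos A B (by linarith) (by linarith) n
  have s1 : ((1 - u) ^ ((B + 1 / 2) / 2)) ^ 2 = (1 - u) ^ (B + 1 / 2) := by
    rw [← Real.rpow_mul_natCast hu1]; congr 1; push_cast; ring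
  have s2 : (u ^ ((A + 1 / 2) / 2)) ^ 2 = u ^ (A + 1 / 2) := by
    rw [← Real.rpow_mul_natCast hu.1]; congr 1; push_cast; ring
  have s3 : (A ^ ((1 : ℝ) / 6)) ^ 2 = A ^ ((1 : ℝ) / 3) := by
    rw [← Real.rpow_mul_natCast hA0.le]; congr 1; push_cast; ring
  have s4 : ((2 : ℝ) ^ ((A + B - 1) / 2)) ^ 2 = 2 ^ (A + B - 1) := by
    rw [← Real.rpow_mul_natCast (by norm_num)]; congr 1; push_cast; ring
  have s5 : (2 : ℝ) ^ (A + 1 / 2) * 2 ^ (B + 1 / 2) = 4 * 2 ^ (A + B - 1) := by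
    rw [← Real.rpow_add (by norm_num), show A + 1 / 2 + (B + 1 / 2) = (A + B - 1) + 2 by ring,
      Real.rpow_add (by norm_num)]
    norm_num; ring
  have hL : (qG A B n u * u ^ ((A + 1 / 2) / 2)) ^ 2 =
      (jS A B n (1 - 2 * u) / jS A B n 1) ^ 2 * (1 - u) ^ (B + 1 / 2) * u ^ (A + 1 / 2) := by
    unfold qG
    rw [mul_pow, mul_pow, sq_abs, s1, s2]
  have hRr : (X * qT A B n) ^ 2 = X ^ 2 * A ^ ((1 : ℝ) / 3) / (2 ^ (A + B - 1) * (jC A B n * jS A B n 1) ^ 2) := by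
    unfold qT
    rw [jacobiP_eq, mul_pow, div_pow, s3, mul_pow (2 ^ ((A + B - 1) / 2)), s4]
    ring
  rw [hL, hRr, le_div_iff₀ (by positivity)]
  have h2 : (4 * 2 ^ (A + B - 1)) * (u ^ (A + 1 / 2) * (1 - u) ^ (B + 1 / 2) * (jC A B n * jS A B n (1 - 2 * u)) ^ 2)
      ≤ 4 * (A ^ ((1 : ℝ) / 3) * X ^ 2) := by
    rw [← s5]; calc _ = _ := by ring
      _ ≤ _ := h1
      _ = _ := by ring
  have h3 : (jS A B n (1 - 2 * u) / jS A B n 1) ^ 2 * (1 - u) ^ (B + 1 / 2) * u ^ (A + 1 / 2) *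
      (2 ^ (A + B - 1) * (jC A B n * jS A B n 1) ^ 2) =
      2 ^ (A + B - 1) * (u ^ (A + 1 / 2) * (1 - u) ^ (B + 1 / 2) * (jC A B n * jS A B n (1 - 2 * u)) ^ 2) := by
    field_simp
  rw [h3]
  linarith

lemma jac_reduce (a b A B p : ℝ) (n : ℕ) (hb : 0 ≤ b) (ha : 0 ≤ a) (hB : 1 ≤ B) (hA : 1 ≤ A) (hp : 0 < p)
    (hpb : p * B + p / 2 ≤ 2 * b) :
    (∫ x in (-1 : ℝ)..1, |jacobiP A B n x / jacobiP A B n 1| ^ p * (1 - x) ^ a * (1 + x) ^ b) ≤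
      2 * 2 ^ (a + b) * ∫ u in (0 : ℝ)..1, qG A B n u ^ p * u ^ ((a + 1) - 1) := by
  have hC := jC_pos A B (by linarith) (by linarith) n
  have hJ := jS_one_pos A B (by linarith) (by linarith) n
  have e1 := intervalIntegral.integral_comp_sub_mul (a := 0) (b := 1)
    (fun x : ℝ => |jacobiP A B n x / jacobiP A B n 1| ^ p * (1 - x) ^ a * (1 + x) ^ b) (two_ne_zero) 1
  norm_num at e1
  have e2 : (∫ x in (-1 : ℝ)..1, |jacobiP A B n x / jacobiP A B n 1| ^ p * (1 - x) ^ a * (1 + x) ^ b)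
    = 2 * ∫ u in (0 : ℝ)..1, (|jS A B n (1 - 2 * u) / jS A B n 1| ^ p * (2 * u) ^ a * (2 * (1 - u)) ^ b) := by
    have : ∀ u : ℝ, |jS A B n (1 - 2 * u) / jS A B n 1| ^ p * (2 * u) ^ a * (2 * (1 - u)) ^ b =
        |jacobiP A B n (1 - 2 * u) / jacobiP A B n 1| ^ p * (2 * u) ^ a * (1 + (1 - 2 * u)) ^ b := by
      intro u
      rw [jacobiP_eq, jacobiP_eq, mul_div_mul_left _ _ hC.ne']
      congr 2; ring
    simp_rw [this]
    rw [e1]; ring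
  rw [e2, mul_assoc]
  apply mul_le_mul_of_nonneg_left _ (by norm_num)
  rw [← intervalIntegral.integral_const_mul]
  have c1 : Continuous (fun u : ℝ => |jS A B n (1 - 2 * u) / jS A B n 1| ^ p) := by
    apply Continuous.rpow_const
    · exact ((((jS_cont A B n).comp (by fun_prop : Continuous fun u : ℝ => 1 - 2 * u))).div_const _).abs
    · intro x; exact Or.inr hp.le
  have c2 : Continuous (fun u : ℝ => (2 * u) ^ a) :=
    (continuous_const.mul continuous_id).rpow_const (fun x => Or.inr ha)
  have c3 : Continuous (fun u : ℝ => (2 * (1 - u)) ^ b) :=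
    (continuous_const.mul (continuous_const.sub continuous_id)).rpow_const (fun x => Or.inr hb)
  apply intervalIntegral.integral_mono_on (by norm_num)
  · exact ((c1.mul c2).mul c3).intervalIntegrable _ _
  · apply ContinuousOn.intervalIntegrable
    rw [uIcc_of_le (by norm_num)]
    exact (cont_gp (qG_cont A B hB n) hp (by linarith)).const_mul _
  · intro u hu
    have hu1 : 0 ≤ 1 - u := by linarith [hu.2]
    unfold qG
    rw [Real.mul_rpow (by norm_num) hu.1, Real.mul_rpow (by norm_num) hu1, Real.mul_rpow (abs_nonneg _) (by positivity),
      ← Real.rpow_mul hu1, Real.rpow_add (by norm_num), add_sub_cancel_right]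
    have hle : (1 - u) ^ b ≤ (1 - u) ^ ((B + 1 / 2) / 2 * p) := by
      rcases hu1.eq_or_lt with h0 | h0
      · rw [← h0, Real.zero_rpow, Real.zero_rpow]
        · positivity
        · nlinarith
      · apply Real.rpow_le_rpow_of_exponent_ge h0 (by linarith [hu.1])
        nlinarith
    have hu0 := hu.1
    calc _ = (2 ^ a * 2 ^ b) * ((|jS A B n (1 - 2 * u) / jS A B n 1| ^ p * u ^ a) * (1 - u) ^ b) := by ring
      _ ≤ (2 ^ a * 2 ^ b) * ((|jS A B n (1 - 2 * u) / jS A B n 1| ^ p * u ^ a) * (1 - u) ^ ((B + 1 / 2) / 2 * p)) := by gcongr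
      _ = _ := by ring

/-- large degree: the sharp pointwise bound -/
lemma jv_large (A B : ℝ) (hB : 1 ≤ B) (hab : B ≤ A) (n : ℕ) (hn : 1000 * A ≤ n) :
    ∀ t ∈ Icc 0 π, jv A B n t ^ 2 ≤ 4 * A ^ ((1 : ℝ) / 3) * 1 ^ 2 := by
  intro t ht
  have hA0 : 0 ≤ A := by linarith
  have h3 : (A ^ ((1 : ℝ) / 3)) ^ 3 = A := by
    rw [← Real.rpow_mul_natCast hA0]; norm_num
  have h6 : (A ^ ((1 : ℝ) / 3)) ^ 6 = A ^ 2 := by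
    rw [show 6 = 3 * 2 by norm_num, pow_mul, h3]
  rw [one_pow, mul_one]
  refine (jv_JV A B (by linarith) hB n).max_bound (d := A ^ ((1 : ℝ) / 3)) ?_ ?_ ?_ ?_ ?_ ?_ ht
  · exact Real.one_le_rpow (by linarith) (by norm_num)
  · nlinarith
  · nlinarith
  · rw [h6]; linarith
  · rw [h6]; nlinarith
  · rw [h3]; linarith

/-- moderate degree: a crude pointwise bound -/
lemma jv_mod (A B : ℝ) (hB : 1 ≤ B) (hab : B ≤ A) (n : ℕ) (hn : n ≤ 1000 * A) :
    ∀ t ∈ Icc 0 π, jv A B n t ^ 2 ≤ 4 * A ^ ((1 : ℝ) / 3) * (20 * √A) ^ 2 := by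
  intro t ht
  have hA0 : 1 ≤ A := by linarith
  have hn0 : (0 : ℝ) ≤ n := Nat.cast_nonneg n
  have h1 : 1 ≤ A ^ ((1 : ℝ) / 3) := Real.one_le_rpow hA0 (by norm_num)
  have := (jv_JV A B hA0 hB n).crude (by linarith) (by nlinarith) (by nlinarith) ht
  rw [mul_pow, Real.sq_sqrt (by linarith)]
  nlinarith

lemma gamma_ratio (α β : ℝ) (hα : 0 ≤ α) (hβ : 0 ≤ β) :
    Gamma (α + β + 2) ≤ 2 ^ (2 * (α + β) + 1) * (Gamma (α + 1) * Gamma (β + 1)) := by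
  have hw := w_integral α β hα hβ
  have g1 : 0 < Gamma (α + 1) := Real.Gamma_pos_of_pos (by linarith)
  have g2 : 0 < Gamma (β + 1) := Real.Gamma_pos_of_pos (by linarith)
  have g3 : 0 < Gamma (α + β + 2) := Real.Gamma_pos_of_pos (by linarith)
  have hc := w_cont α β hα hβ
  have h1 : (2 : ℝ)⁻¹ ^ (α + β) ≤ ∫ x in (-1 : ℝ)..1, (1 - x) ^ α * (1 + x) ^ β := by
    calc (2 : ℝ)⁻¹ ^ (α + β) = ∫ x in (-(1 / 2) : ℝ)..(1 / 2), (2 : ℝ)⁻¹ ^ (α + β) := by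
          rw [intervalIntegral.integral_const]; norm_num
      _ ≤ ∫ x in (-(1 / 2) : ℝ)..(1 / 2), (1 - x) ^ α * (1 + x) ^ β := by
          apply intervalIntegral.integral_mono_on (by norm_num)
          · exact intervalIntegrable_const
          · exact hc.intervalIntegrable _ _
          · intro x hx
            rw [Real.rpow_add (by norm_num)]
            apply mul_le_mul
            · apply Real.rpow_le_rpow (by norm_num) _ hα; linarith [hx.2]
            · apply Real.rpow_le_rpow (by norm_num) _ hβ; linarith [hx.1]
            · positivity
            · apply Real.rpow_nonneg; linarith [hx.2]
      _ ≤ _ := by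
          apply intervalIntegral.integral_mono_interval (by norm_num) (by norm_num) (by norm_num)
          · rw [Filter.EventuallyLE, ae_restrict_iff' measurableSet_Ioc]
            filter_upwards with x hx
            apply mul_nonneg
            · apply Real.rpow_nonneg; linarith [hx.2]
            · apply Real.rpow_nonneg; linarith [hx.1]
          · exact hc.intervalIntegrable _ _
  rw [hw, mul_div_assoc', le_div_iff₀ g3] at h1
  have e : (2 : ℝ)⁻¹ ^ (α + β) * 2 ^ (α + β) = 1 := by
    rw [← Real.mul_rpow (by norm_num) (by norm_num)]; norm_num
  have e2 : (2 : ℝ) ^ (2 * (α + β) + 1) = 2 ^ (α + β) * 2 ^ (α + β + 1) := by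
    rw [← Real.rpow_add (by norm_num)]; congr 1; ring
  calc Gamma (α + β + 2) = ((2 : ℝ)⁻¹ ^ (α + β) * Gamma (α + β + 2)) * 2 ^ (α + β) := by
        linear_combination (-Gamma (α + β + 2)) * e
    _ ≤ (2 ^ (α + β + 1) * (Gamma (α + 1) * Gamma (β + 1))) * 2 ^ (α + β) := by gcongr
    _ = _ := by rw [e2]; ring

lemma jP_one_sq_le (A B : ℝ) (hB : 1 ≤ B) (hab : B ≤ A) (n : ℕ) :
    jacobiP A B n 1 ^ 2 * 2 ^ (A + B + 1) ≤ 2 ^ (4 * (n : ℝ) + 4 * A + 2 * B + 3) := by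
  have hA0 : 0 ≤ A := by linarith
  have hB0 : 0 ≤ B := by linarith
  have hn0 : (0 : ℝ) ≤ n := Nat.cast_nonneg n
  have r1 := gamma_ratio A n hA0 hn0
  have r2 := gamma_ratio A (n + B) hA0 (by linarith)
  rw [Real.Gamma_nat_eq_factorial] at r1
  have f1 : Gamma (A + n + 2) = (A + n + 1) * Gamma (A + n + 1) := by
    rw [show A + n + 2 = (A + n + 1) + 1 by ring, Real.Gamma_add_one (by positivity)]
  have f2 : Gamma (A + (n + B) + 2) = (A + B + n + 1) * Gamma (A + B + n + 1) := by
    rw [show A + (n + B) + 2 = (A + B + n + 1) + 1 by ring, Real.Gamma_add_one (by positivity)]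
  have g1 : 0 < Gamma (A + 1) := Real.Gamma_pos_of_pos (by positivity)
  have g2 : 0 < Gamma (n + B + 1) := Real.Gamma_pos_of_pos (by positivity)
  have g3 : 0 < Gamma (A + n + 1) := Real.Gamma_pos_of_pos (by positivity)
  have g4 : 0 < Gamma (A + B + n + 1) := Real.Gamma_pos_of_pos (by positivity)
  have g5 : (0 : ℝ) < n.factorial := by positivity
  rw [f1] at r1
  rw [f2] at r2
  have r1' : Gamma (A + n + 1) ≤ 2 ^ (2 * (A + n) + 1) * (Gamma (A + 1) * n.factorial) := by
    refine le_trans ?_ r1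
    exact le_mul_of_one_le_left g3.le (by linarith)
  have r2' : (2 * n + A + B + 1) * Gamma (A + B + n + 1) ≤
      2 * (2 ^ (2 * (A + (n + B)) + 1) * (Gamma (A + 1) * Gamma (n + B + 1))) := by
    refine le_trans ?_ (mul_le_mul_of_nonneg_left r2 (by norm_num : (0 : ℝ) ≤ 2))
    nlinarith
  rw [jacobiP_eq, mul_pow, jC_sq A B hA0 hB0, jS_one]
  rw [show (n : ℝ) + A + 1 = A + n + 1 by ring, show (n : ℝ) + A + B + 1 = A + B + n + 1 by ring]
  have e : (2 * (n : ℝ) + A + B + 1) / 2 ^ (A + B + 1) *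
      (Gamma (A + n + 1) / ((n.factorial : ℝ) * Gamma (n + B + 1) * Gamma (A + B + n + 1))) *
      (Gamma (A + B + n + 1) / Gamma (A + 1)) ^ 2 * 2 ^ (A + B + 1) =
      (Gamma (A + n + 1) * ((2 * n + A + B + 1) * Gamma (A + B + n + 1))) /
        ((Gamma (A + 1) * n.factorial) * (Gamma (A + 1) * Gamma (n + B + 1))) := by
    field_simp
  rw [e, div_le_iff₀ (by positivity)]
  have e3 : (2 : ℝ) ^ (4 * (n : ℝ) + 4 * A + 2 * B + 3) =
      2 ^ (2 * (A + n) + 1) * (2 * 2 ^ (2 * (A + (n + B)) + 1)) := by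
    rw [show 4 * (n : ℝ) + 4 * A + 2 * B + 3 = (2 * (A + n) + 1) + (1 + (2 * (A + (n + B)) + 1)) by ring,
      Real.rpow_add (by norm_num) (2 * (A + n) + 1), Real.rpow_add (by norm_num) 1 (2 * (A + (n + B)) + 1), Real.rpow_one]
  rw [e3]
  calc _ ≤ (2 ^ (2 * (A + n) + 1) * (Gamma (A + 1) * n.factorial)) *
        (2 * (2 ^ (2 * (A + (n + B)) + 1) * (Gamma (A + 1) * Gamma (n + B + 1)))) := by
        apply mul_le_mul r1' r2' (by positivity) (by positivity)
    _ = _ := by ring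

lemma qT_lower : ∃ u0 : ℝ, 0 < u0 ∧ u0 ≤ 1 / 4 ∧ ∀ (A B : ℝ) (n : ℕ), 1 ≤ B → B ≤ A → (n : ℝ) ≤ 1000 * A →
    u0 ≤ qT A B n ^ (1 / ((A + 1 / 2) / 2)) := by
  refine ⟨(2 : ℝ)⁻¹ ^ (4010 : ℝ), by positivity, ?_, ?_⟩
  · calc (2 : ℝ)⁻¹ ^ (4010 : ℝ) ≤ (2 : ℝ)⁻¹ ^ (2 : ℝ) :=
        Real.rpow_le_rpow_of_exponent_ge (by norm_num) (by norm_num) (by norm_num)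
      _ = 1 / 4 := by norm_num
  · intro A B n hB hab hn
    have hA0 : 0 ≤ A := by linarith
    have hP := jP_one_pos A B hA0 (by linarith) n
    have hT := qT_pos A B (by linarith) hB n
    have h1 := jP_one_sq_le A B hB hab n
    have hk : 0 < (A + 1 / 2) / 2 := by linarith
    have h2 : ((2 : ℝ)⁻¹ ^ (4010 : ℝ)) ^ ((A + 1 / 2) / 2) ≤ qT A B n := by
      apply le_of_sq_le_sq _ hT.le
      unfold qT
      have s4 : ((2 : ℝ) ^ ((A + B - 1) / 2)) ^ 2 = 2 ^ (A + B - 1) := by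
        rw [← Real.rpow_mul_natCast (by norm_num)]; congr 1; push_cast; ring
      rw [div_pow, mul_pow, s4]
      have hA6 : 1 ≤ (A ^ ((1 : ℝ) / 6)) ^ 2 := one_le_pow₀ (Real.one_le_rpow (by linarith) (by norm_num))
      rw [le_div_iff₀ (by positivity)]
      refine le_trans ?_ hA6
      have e1 : (((2 : ℝ)⁻¹ ^ (4010 : ℝ)) ^ ((A + 1 / 2) / 2)) ^ 2 = 2 ^ (-(4010 * (A + 1 / 2))) := by
        rw [← Real.rpow_mul (by norm_num), ← Real.rpow_mul_natCast (by norm_num), Real.inv_rpow (by norm_num),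
          ← Real.rpow_neg (by norm_num)]
        congr 1; push_cast; ring
      have e2 : (2 : ℝ) ^ (A + B - 1) ≤ 2 ^ (A + B + 1) :=
        Real.rpow_le_rpow_of_exponent_le (by norm_num) (by linarith)
      calc _ ≤ 2 ^ (-(4010 * (A + 1 / 2))) * (2 ^ (A + B + 1) * jacobiP A B n 1 ^ 2) := by
            rw [e1]; gcongr
        _ ≤ 2 ^ (-(4010 * (A + 1 / 2))) * 2 ^ (4 * (n : ℝ) + 4 * A + 2 * B + 3) := by
            gcongr; linarith
        _ ≤ 1 := by
            rw [← Real.rpow_add (by norm_num)]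
            apply Real.rpow_le_one_of_one_le_of_nonpos (by norm_num)
            linarith
    calc (2 : ℝ)⁻¹ ^ (4010 : ℝ) = (((2 : ℝ)⁻¹ ^ (4010 : ℝ)) ^ ((A + 1 / 2) / 2)) ^ (1 / ((A + 1 / 2) / 2)) := by
          rw [← Real.rpow_mul (by positivity), mul_one_div_cancel hk.ne', Real.rpow_one]
      _ ≤ _ := Real.rpow_le_rpow (by positivity) h2 (by positivity)

lemma q_exp_decay {u0 : ℝ} (hu0 : 0 < u0) (hu4 : u0 ≤ 1 / 4) (A B : ℝ) (n : ℕ) (hB : 1 ≤ B)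
    (hab : B ≤ A / 2) (hn1 : 1 ≤ n) (hn : (n : ℝ) ≤ 1000 * A) :
    ∀ u ∈ Icc (0 : ℝ) 1, u0 ≤ u → qG A B n u ≤ 2 * exp (-(u0 / 6300000 * n)) := by
  intro u hu huu
  have hA0 : 0 < A := by linarith
  have hn0 : (1 : ℝ) ≤ n := by exact_mod_cast hn1
  have hJ := jS_one_pos A B hA0.le (by linarith) n
  refine (qG_le_abs A B hB n u hu).trans ?_
  rw [abs_div, abs_of_pos hJ, div_le_iff₀ hJ]
  apply abs_le_of_sq_le_sq _ (by positivity)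
  set ε := exp (-(u0 / 6300000 * n)) with hε
  have hε2 : ε ^ 2 = exp (-((n : ℝ) * (1 - (1 - 2 * u0)) / 6300000)) := by
    rw [hε, ← Real.exp_nat_mul]; congr 1; push_cast; ring
  have hE : (2 * ε * jS A B n 1) ^ 2 = 2 * (2 * jS A B n 1 ^ 2 * ε ^ 2) := by ring
  have hnn : 0 ≤ 2 * jS A B n 1 ^ 2 * ε ^ 2 := by positivity
  refine le_trans (jS_sq_le A B hA0.le (by linarith) (by linarith) n hn1 (x₁ := 1 - 2 * u0) (by linarith [hu.2])
    (by linarith) (by linarith) (E := 2 * jS A B n 1 ^ 2 * ε ^ 2) ?_ ?_) (by linarith)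
  · rw [hε2]
    exact jF_decay A B (by linarith) (by linarith) (by linarith) n hn1 hn (by linarith) (by linarith)
  · rw [← sq_abs, jS_neg_one A B hA0.le (by linarith), mul_pow]
    have hpr : ∏ j ∈ Finset.range n, ((B + (j + 1)) / (A + (j + 1))) ≤ ε := by
      calc ∏ j ∈ Finset.range n, ((B + ((j : ℝ) + 1)) / (A + (j + 1))) ≤ ∏ j ∈ Finset.range n, exp (-(1 / 2002)) := by
            apply Finset.prod_le_prod
            · intro j _; positivity
            · intro j hj
              have hjn : (j : ℝ) + 1 ≤ n := by
                have := Finset.mem_range.mp hj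
                exact_mod_cast this
              have h1 : (B + ((j : ℝ) + 1)) / (A + (j + 1)) ≤ 1 - 1 / 2002 := by
                rw [div_le_iff₀ (by positivity)]
                nlinarith
              refine h1.trans ?_
              have := Real.add_one_le_exp (-(1 / 2002) : ℝ)
              linarith
        _ = exp (-(1 / 2002) * n) := by
            rw [Finset.prod_const, Finset.card_range, ← Real.exp_nat_mul]; congr 1; ring
        _ ≤ ε := by
            rw [hε]; apply Real.exp_le_exp.mpr
            nlinarith
    have hp0 : 0 ≤ ∏ j ∈ Finset.range n, ((B + ((j : ℝ) + 1)) / (A + (j + 1))) := by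
      apply Finset.prod_nonneg; intro j _; positivity
    have := pow_le_pow_left₀ hp0 hpr 2
    calc _ ≤ jS A B n 1 ^ 2 * ε ^ 2 := by gcongr
      _ ≤ _ := by nlinarith

/-! ### Part F: assembly -/
open Filter Topology

lemma small_R {p s k τ : ℝ} (hp : 0 < p) (hs : 1 ≤ s) (hk : 0 < k) (hpk : s < p * k) (hτ : 0 < τ) (hτ8 : τ ≤ 1 / 8)
    (h : (s / (p * k - s)) ^ (1 / p) ≤ τ) :
    2 * s ≤ p * k ∧ s / k * log (1 / τ) ≤ 1 ∧ s / k ≤ 1 / 2 ∧ 1 / 3 ≤ (s / (p * k - s)) ^ (s / (p * k)) := by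
  have hs0 : 0 < s := by linarith
  have hd : 0 < p * k - s := by linarith
  set R := s / (p * k - s) with hR
  have hR0 : 0 < R := by positivity
  set L := log (1 / τ) with hL
  have hLτ : log τ = -L := by rw [hL, one_div, Real.log_inv, neg_neg]
  have hL2 : 2 ≤ L := by
    rw [hL, Real.le_log_iff_exp_le (by positivity)]
    have h8 : 8 ≤ 1 / τ := by rw [le_div_iff₀ hτ]; linarith
    have h1 := Real.exp_one_lt_d9
    have h2 : exp 2 = exp 1 * exp 1 := by rw [← Real.exp_add]; norm_num
    have h3 := Real.exp_pos 1
    nlinarith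
  have hRτ : R ≤ exp (-(p * L)) := by
    have h1 : (R ^ (1 / p)) ^ p ≤ τ ^ p := Real.rpow_le_rpow (by positivity) h hp.le
    rw [← Real.rpow_mul hR0.le, one_div_mul_cancel hp.ne', Real.rpow_one, Real.rpow_def_of_pos hτ, hLτ] at h1
    refine h1.trans (le_of_eq ?_)
    congr 1; ring
  set t := s / (p * k) with ht
  have ht0 : 0 < t := by positivity
  have htR : t ≤ R := by
    rw [ht, hR]; gcongr; linarith
  have hR1 : R ≤ 1 := hRτ.trans (Real.exp_le_one_iff.mpr (by nlinarith [mul_pos hp (by linarith : 0 < L)]))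
  have h2s : 2 * s ≤ p * k := by
    rw [hR, div_le_one hd] at hR1; linarith
  have he : s / k = p * t := by rw [ht]; field_simp
  have heL : s / k * L ≤ 1 := by
    rw [he]
    have hx : p * L ≤ exp (p * L) := by linarith [Real.add_one_le_exp (p * L)]
    have h1 : t * exp (p * L) ≤ 1 := by
      have : t ≤ exp (-(p * L)) := htR.trans hRτ
      calc t * exp (p * L) ≤ exp (-(p * L)) * exp (p * L) := by gcongr
        _ = 1 := by rw [← Real.exp_add]; simp
    calc p * t * L = t * (p * L) := by ring
      _ ≤ t * exp (p * L) := by gcongr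
      _ ≤ 1 := h1
  refine ⟨h2s, heL, ?_, ?_⟩
  · have : 0 < s / k := by positivity
    nlinarith
  · have h1 : t ^ t ≤ R ^ t := Real.rpow_le_rpow ht0.le htR ht0.le
    refine le_trans ?_ h1
    rw [Real.rpow_def_of_pos ht0]
    have h2 := Real.one_sub_inv_le_log_of_pos ht0
    have h3 : -1 ≤ log t * t := by
      have : (1 - t⁻¹) * t ≤ log t * t := by gcongr
      rw [sub_mul, inv_mul_cancel₀ ht0.ne'] at this
      linarith
    have h4 : exp (-1) ≤ exp (log t * t) := Real.exp_le_exp.mpr h3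
    refine le_trans ?_ h4
    rw [Real.exp_neg, ← one_div]
    have := Real.exp_one_lt_d9
    apply one_div_le_one_div_of_le (Real.exp_pos 1)
    linarith

lemma int_mono_p {g : ℝ → ℝ} (hg : ContinuousOn g (Icc 0 1)) (h0 : ∀ u ∈ Icc (0 : ℝ) 1, 0 ≤ g u)
    (h1 : ∀ u ∈ Icc (0 : ℝ) 1, g u ≤ 1) {p p' s : ℝ} (hp' : 0 < p') (hpp : p' ≤ p) (hs : 1 ≤ s) :
    ∫ u in (0 : ℝ)..1, g u ^ p * u ^ (s - 1) ≤ ∫ u in (0 : ℝ)..1, g u ^ p' * u ^ (s - 1) := by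
  apply intervalIntegral.integral_mono_on (by norm_num)
  · apply ContinuousOn.intervalIntegrable
    rw [uIcc_of_le (by norm_num)]
    exact cont_gp hg (by linarith) hs
  · apply ContinuousOn.intervalIntegrable
    rw [uIcc_of_le (by norm_num)]
    exact cont_gp hg hp' hs
  · intro u hu
    apply mul_le_mul_of_nonneg_right _ (Real.rpow_nonneg hu.1 _)
    rcases (h0 u hu).eq_or_lt with h | h
    · rw [← h, Real.zero_rpow hp'.ne', Real.zero_rpow (by linarith)]
    · exact Real.rpow_le_rpow_of_exponent_ge h (h1 u hu) hpp

lemma core_bound : ∃ C : ℝ, 0 < C ∧ ∀ (a A B p : ℝ) (n : ℕ), 0 ≤ a → 1 ≤ B → B ≤ A → 0 < p →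
    p * B + p / 2 ≤ 2 * a → (a + 1) < p * ((A + 1 / 2) / 2) →
    8000 * A * ((a + 1) / (p * ((A + 1 / 2) / 2) - (a + 1))) ^ (1 / p) ≤ n →
    ∫ u in (0 : ℝ)..1, qG A B n u ^ p * u ^ ((a + 1) - 1) ≤
      C / (a + 1) * (qT A B n ^ ((a + 1) / ((A + 1 / 2) / 2)) *
        ((a + 1) / (p * ((A + 1 / 2) / 2) - (a + 1))) ^ ((a + 1) / (p * ((A + 1 / 2) / 2)))) := by
  obtain ⟨u0, hu0, hu4, hlow⟩ := qT_lower
  set κ := u0 / 6300000 with hκ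
  have hκ0 : 0 < κ := by positivity
  set K := 1 + 96000 / κ ^ 3 with hK
  have hK0 : 0 < 96000 / κ ^ 3 := by positivity
  refine ⟨360 + 3 * (1 + 2 * K), by linarith, ?_⟩
  intro a A B p n ha hB hab hp hpb hpk hn
  set s := a + 1 with hs
  set k := (A + 1 / 2) / 2 with hk
  have hs1 : 1 ≤ s := by linarith
  have hs0 : 0 < s := by linarith
  have hA : 1 ≤ A := by linarith
  have hA0 : 0 < A := by linarith
  have hk0 : 0 < k := by linarith
  have hT := qT_pos A B hA hB n
  have hc := qG_cont A B hB n
  have hg0 := qG_nonneg A B n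
  have hg1 := qG_le_one A B hB hab n
  have hd0 : 0 < p * k - s := by linarith
  set R := s / (p * k - s) with hR
  have hR0 : 0 < R := by positivity
  have hTR : 0 < qT A B n ^ (s / k) * R ^ (s / (p * k)) := by positivity
  rcases le_total (1000 * A) n with hnA | hnA
  · have h1 := qG_decay A B hA hB n zero_le_one (jv_large A B hB hab n hnA)
    rw [one_mul] at h1
    refine (regime1 hc hg0 hg1 hp hs1 hk0 hT h1 hpk).trans ?_
    gcongr
    linarith
  · have hn0 : (0 : ℝ) < n := lt_of_lt_of_le (by positivity) hn
    have hn1 : 1 ≤ n := by exact_mod_cast hn0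
    have hn1' : (1 : ℝ) ≤ n := by exact_mod_cast hn1
    obtain ⟨f1, f2, f3, f4⟩ := small_R (τ := n / (8000 * A)) hp hs1 hk0 hpk (by positivity)
      (by rw [div_le_iff₀ (by positivity)]; linarith)
      (by rw [le_div_iff₀ (by positivity)]; linarith)
    have hX := qG_decay A B hA hB n (by positivity) (jv_mod A B hB hab n hnA)
    have he0 : 0 < s / k := by positivity
    set p' := min p 1 with hp'
    have hp'0 : 0 < p' := lt_min hp one_pos
    have hp'k : 2 * s ≤ p' * k := by
      rw [div_le_iff₀ hk0] at f3
      rcases min_choice p 1 with h | h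
      · rw [hp', h]; exact f1
      · rw [hp', h]; linarith
    have hBA : B ≤ A / 2 := by
      have : p * (2 * (B + 1 / 2)) ≤ p * (A + 1 / 2) := by
        rw [hk, hs] at f1; nlinarith
      have := le_of_mul_le_mul_left this hp
      linarith
    refine (int_mono_p hc hg0 hg1 hp'0 (min_le_left p 1) hs1).trans ?_
    have hsA : 0 < √A := Real.sqrt_pos.mpr hA0
    have hsA2 : √A ^ 2 = A := Real.sq_sqrt hA0.le
    suffices hI : ∫ u in (0 : ℝ)..1, qG A B n u ^ p' * u ^ (s - 1) ≤ (120 + (1 + 2 * K)) / s * qT A B n ^ (s / k) by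
      refine hI.trans ?_
      have : (120 + (1 + 2 * K)) / s * qT A B n ^ (s / k) =
        (360 + 3 * (1 + 2 * K)) / s * (qT A B n ^ (s / k) * (1 / 3)) := by ring
      rw [this]
      have : 0 ≤ (360 + 3 * (1 + 2 * K)) / s := by positivity
      gcongr
    rcases le_total (n : ℝ) (√A) with hnn | hnn
    · refine (regime2 hc hg0 hg1 hp'0 hs1 hk0 (by positivity) hX hp'k).trans ?_
      rw [Real.mul_rpow (by positivity) hT.le, Real.mul_rpow (by norm_num) hsA.le]
      have h20 : (20 : ℝ) ^ (s / k) ≤ 20 := by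
        calc (20 : ℝ) ^ (s / k) ≤ 20 ^ (1 : ℝ) := Real.rpow_le_rpow_of_exponent_le (by norm_num) (by linarith)
          _ = 20 := Real.rpow_one _
      have hA3 : √A ^ (s / k) ≤ 3 := by
        rw [Real.rpow_def_of_pos hsA]
        have hlog : log √A ≤ log (1 / (n / (8000 * A))) := by
          apply Real.log_le_log hsA
          rw [one_div_div, le_div_iff₀ hn0]
          nlinarith
        have : log √A * (s / k) ≤ 1 := by nlinarith
        refine (Real.exp_le_exp.mpr this).trans ?_
        have := Real.exp_one_lt_d9
        linarith
      have h60 : (20 : ℝ) ^ (s / k) * √A ^ (s / k) ≤ 20 * 3 := by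
        apply mul_le_mul h20 hA3 (by positivity) (by norm_num)
      calc 2 / s * ((20 : ℝ) ^ (s / k) * √A ^ (s / k) * qT A B n ^ (s / k))
          ≤ 2 / s * ((20 * 3) * qT A B n ^ (s / k)) := by gcongr
        _ = 120 / s * qT A B n ^ (s / k) := by ring
        _ ≤ _ := by gcongr; linarith
    · have hε : 2 * exp (-(κ * n)) * (20 * √A) ^ 3 ≤ K := by
        have h1 : (κ * n) ^ 3 / (Nat.factorial 3 : ℕ) ≤ exp (κ * n) := Real.pow_div_factorial_le_exp (κ * n) (by positivity) 3
        have h6 : ((Nat.factorial 3 : ℕ) : ℝ) = 6 := by norm_num [Nat.factorial]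
        rw [h6] at h1
        have h2 : (20 * √A) ^ 3 ≤ (20 * n) ^ 3 := by gcongr
        have h3 : exp (-(κ * n)) * (κ * n) ^ 3 ≤ 6 := by
          have : exp (-(κ * n)) * (κ * n) ^ 3 ≤ exp (-(κ * n)) * (6 * exp (κ * n)) := by gcongr; linarith
          have e : exp (-(κ * n)) * (6 * exp (κ * n)) = 6 := by
            rw [mul_left_comm, ← Real.exp_add]; simp
          linarith
        calc 2 * exp (-(κ * n)) * (20 * √A) ^ 3 ≤ 2 * exp (-(κ * n)) * (20 * n) ^ 3 := by gcongr
          _ = 16000 / κ ^ 3 * (exp (-(κ * n)) * (κ * n) ^ 3) := by field_simp; ring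
          _ ≤ 16000 / κ ^ 3 * 6 := by gcongr
          _ ≤ K := by rw [hK]; have : 16000 / κ ^ 3 * 6 = 96000 / κ ^ 3 := by ring
                      linarith
      have hdec := q_exp_decay hu0 hu4 A B n hB hBA hn1 hnA
      have hl := hlow A B n hB hab hnA
      refine (regime3 hc hg0 hg1 hp'0 (min_le_right p 1) hs1 hk0 hT (by positivity) (by positivity) (by linarith) hε hX
        (fun u hu htu => hdec u hu (hl.trans htu)) hp'k).trans ?_
      gcongr <;> linarith

theorem main_bound :
    ∃ c₀ c : ℝ, 0 < c₀ ∧ 0 < c ∧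
      ∀ (a b A B p : ℝ) (n : ℕ), 0 ≤ b → b ≤ a → 1 ≤ B → B ≤ A → 0 < p →
        p * B + p / 2 ≤ 2 * b → 2 * a + 2 < p * A + p / 2 →
        c₀ * A * ((2 * a + 2) / (p * (A + 1 / 2) - 2 * a - 2)) ^ (1 / p) ≤ (n : ℝ) →
        (∫ x in (-1 : ℝ)..1, |jacobiP A B n x / jacobiP A B n 1| ^ p * (1 - x) ^ a * (1 + x) ^ b) ≤
          c * (2 ^ (a + b) / (2 * a + 2)) *
            (A ^ ((1 : ℝ) / 6) / (2 ^ ((A + B - 1) / 2) * jacobiP A B n 1)) ^ ((2 * a + 2) / (A + 1 / 2)) *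
            ((2 * a + 2) / (p * (A + 1 / 2) - 2 * a - 2)) ^ ((2 * a + 2) / (p * (A + 1 / 2))) := by
  obtain ⟨C, hC, hcore⟩ := core_bound
  refine ⟨8000, 4 * C, by norm_num, by positivity, ?_⟩
  intro a b A B p n hb hba hB hab hp hpb hpa hn
  have ha : 0 ≤ a := hb.trans hba
  have hA : 1 ≤ A := by linarith
  have eR : (2 * a + 2) / (p * (A + 1 / 2) - 2 * a - 2) = (a + 1) / (p * ((A + 1 / 2) / 2) - (a + 1)) := by
    rw [show 2 * a + 2 = 2 * (a + 1) by ring,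
      show p * (A + 1 / 2) - 2 * a - 2 = 2 * (p * ((A + 1 / 2) / 2) - (a + 1)) by ring,
      mul_div_mul_left _ _ (by norm_num)]
  have e1 : (2 * a + 2) / (A + 1 / 2) = (a + 1) / ((A + 1 / 2) / 2) := by field_simp
  have e2 : (2 * a + 2) / (p * (A + 1 / 2)) = (a + 1) / (p * ((A + 1 / 2) / 2)) := by field_simp
  rw [eR] at hn ⊢
  rw [e1, e2]
  have h1 := hcore a A B p n ha hB hab hp (by linarith) (by linarith) hn
  refine (jac_reduce a b A B p n hb ha hB hA hp hpb).trans ?_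
  have h2 := mul_le_mul_of_nonneg_left h1 (by positivity : (0 : ℝ) ≤ 2 * 2 ^ (a + b))
  refine h2.trans (le_of_eq ?_)
  unfold qT
  have e3 : 2 * a + 2 = 2 * (a + 1) := by ring
  rw [e3]
  have : a + 1 ≠ 0 := by positivity
  generalize (2 : ℝ) ^ (a + b) = w
  field_simp
  ring


end JacobiProof

/-- Weighted `L^p` bound for the normalized Jacobi polynomial `p_n^{(A,B)}/p_n^{(A,B)}(1)`. -/
theorem jacobi_lp_integral_bound :
    ∃ c₀ c : ℝ, 0 < c₀ ∧ 0 < c ∧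
      ∀ (a b A B p : ℝ) (n : ℕ), 0 ≤ b → b ≤ a → 1 ≤ B → B ≤ A → 0 < p →
        p * B + p / 2 ≤ 2 * b → 2 * a + 2 < p * A + p / 2 →
        c₀ * A * ((2 * a + 2) / (p * (A + 1/2) - 2 * a - 2)) ^ (1 / p) ≤ (n : ℝ) →
        (∫ x in (-1 : ℝ)..1,
            |jacobiP A B n x / jacobiP A B n 1| ^ p * (1 - x) ^ a * (1 + x) ^ b) ≤
          c * (2 ^ (a + b) / (2 * a + 2)) *
            (A ^ ((1 : ℝ)/6) / (2 ^ ((A + B - 1) / 2) * jacobiP A B n 1)) ^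
              ((2 * a + 2) / (A + 1/2)) *
            ((2 * a + 2) / (p * (A + 1/2) - 2 * a - 2)) ^
              ((2 * a + 2) / (p * (A + 1/2))) := by
  exact main_bound
end
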